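/- If [u, v] ⊂ (b_γ, ∞) is a closed interval, then T_n(z) converges almost surely to T_0(z) = (1 + γ^{-1}·m(z))^{-1}·D² + m(z)^{-1}·I_k, uniformly in z ∈ [u, v]. -/

import Mathlib

/-!
Almost sure uniform convergence of the secular matrix `T_n(z)` above the Marchenko–Pastur edge.

Write `R = (Λ - z)⁻¹`. By the Woodbury identity (`BlockModel.T_eq`), `T_n(z)` is a rational
function of `k × k` matrices: `D_n`, `E₁₁/√n`, the Gram matrices of the noise blocks divided by `n`,
and the compressions `(1/n) E₁₂ R E₁₂ᵀ`, `(1/n) E₂₁ᵀ Λ R E₂₁`, `(1/n) E₁₂ R Λ^{1/2} E₂₁`. Off a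
single null set all of them converge as `n → ∞` and `z → z₀` jointly
(`BlockModel.ae_tendsto_T`), and joint convergence at each point of a compact interval is uniform
convergence (`uniform_of_joint`). The limit is the stated one because `φ = -γ⁻¹ m` solves
`(1 - φ)(zφ - γ⁻¹) = φ` (`mpStieltjes_spec`, `limit_identity`).

* Largest eigenvalue. Slepian's comparison inequality, proved by Gaussian integration by parts
  along an interpolation, combined with a smooth approximation of the maximum, compares the maximum
  of `⟨x, W y⟩` over finite sets with a sum of two independent linear suprema (`chevet`). Together
  with Chernoff bounds this gives `λ_max ≤ ζ` eventually, for every `ζ > b_γ` (`ae_gram_le`).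
* Trace of the resolvent. A leave-one-out expansion over the rows of `W` and the concentration of
  Gaussian quadratic forms show that `φ_n(z) = (1/n) ∑ (z - λ_α)⁻¹` satisfies the equation of `φ`
  up to a vanishing error (`ae_resTrace_equation`); since the quadratic has two roots, the right one
  is selected by continuity from large `z`, where `φ_n` is small (`tendsto_small_root`). Hence
  `φ_n → φ` (`ae_tendsto_trace`).
* Compressions. The eigenvalues are ordered, so each weight sequence `1/(z - λ_α)`,
  `λ_α/(z - λ_α)`, `√λ_α/(z - λ_α)` is nonincreasing and bounded. By Abel summation the weighted
  sums of products of Gaussian entries are controlled by their unweighted partial sums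
  (`abel_bound`), which obey a law of large numbers uniformly in the number of terms
  (`ae_partial_sums`). The weights may therefore be arbitrary, in particular random.
-/

open MeasureTheory ProbabilityTheory Filter Matrix Topology

noncomputable section

instance matrixMeasurableSpace {m n : Type*} : MeasurableSpace (Matrix m n ℝ) :=
  MeasurableSpace.pi

/-- Convergence in distribution (weak convergence of laws) of a sequence of random elements. -/
def TendstoInDist {Ω E : Type*} [MeasurableSpace Ω] [MeasurableSpace E] [TopologicalSpace E]
    (P : Measure Ω) (X : ℕ → Ω → E) (ν : Measure E) : Prop :=
  ∀ f : BoundedContinuousFunction E ℝ,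
    Tendsto (fun n => ∫ ω, f (X n ω) ∂P) atTop (𝓝 (∫ x, f x ∂ν))

/-- Convergence to zero in probability. -/
def TendstoInProbZero {Ω : Type*} [MeasurableSpace Ω] (P : Measure Ω) (X : ℕ → Ω → ℝ) : Prop :=
  ∀ ε : ℝ, 0 < ε → Tendsto (fun n => P {ω | ε ≤ |X n ω|}) atTop (𝓝 0)

/-- `ν` is a centered multivariate Gaussian measure with covariance function `C`
(characterized through one-dimensional projections). -/
def IsCenteredGaussianCov {ι : Type*} [Fintype ι] (ν : Measure (ι → ℝ)) (C : ι → ι → ℝ) : Prop :=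
  ∀ a : ι → ℝ,
    Measure.map (fun x => ∑ i, a i * x i) ν
      = gaussianReal 0 (Real.toNNReal (∑ i, ∑ j, a i * C i j * a j))

/-- The coordinates of `X` are iid `N(0, v)` random variables. -/
def IIDGaussian {Ω ι : Type*} [MeasurableSpace Ω] [Fintype ι] (P : Measure Ω)
    (X : Ω → ι → ℝ) (v : NNReal) : Prop :=
  Measure.map X P = Measure.pi fun _ : ι => gaussianReal 0 v

/-- Entries of a matrix, as a function on pairs of indices. -/
def matEntries {m n : Type*} (A : Matrix m n ℝ) : m × n → ℝ := fun q => A q.1 q.2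

/-- The eigenvalues of a (Hermitian) real matrix, sorted in decreasing order. -/
def eigsDesc {p : ℕ} (A : Matrix (Fin p) (Fin p) ℝ) : List ℝ :=
  if h : A.IsHermitian then (List.ofFn h.eigenvalues).insertionSort (· ≥ ·) else []

/-- The `i`-th largest eigenvalue of a (Hermitian) real matrix (`i` is 0-based). -/
def ithEigDesc {p : ℕ} (A : Matrix (Fin p) (Fin p) ℝ) (i : ℕ) : ℝ :=
  (eigsDesc A).getD i 0

/-- Lower edge `a_γ = (1 - γ^{-1/2})²` of the Marchenko–Pastur law. -/
def aGamma (γ : ℝ) : ℝ := (1 - 1 / Real.sqrt γ) ^ 2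

/-- Upper edge `b_γ = (1 + γ^{-1/2})²` of the Marchenko–Pastur law. -/
def bGamma (γ : ℝ) : ℝ := (1 + 1 / Real.sqrt γ) ^ 2

/-- Density of the Marchenko–Pastur law with aspect ratio `γ`. -/
def mpDensity (γ t : ℝ) : ℝ :=
  if t ∈ Set.Icc (aGamma γ) (bGamma γ) then
    γ * Real.sqrt ((bGamma γ - t) * (t - aGamma γ)) / (2 * Real.pi * t)
  else 0

/-- The Marchenko–Pastur law with aspect ratio `γ`. -/
def mpMeasure (γ : ℝ) : Measure ℝ :=
  volume.withDensity fun t => ENNReal.ofReal (mpDensity γ t)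

/-- Stieltjes transform `m(z) = ∫ (t - z)⁻¹ dFMP_γ(t)` of the Marchenko–Pastur law. -/
def mpStieltjes (γ z : ℝ) : ℝ := ∫ t, (t - z)⁻¹ ∂(mpMeasure γ)

/-- The spiked low-rank-plus-noise model `X_n = √n U_n D_n V_nᵀ + E_n`
(Assumptions A1–A3, with `s = σ²` the noise variance and without the CLT
assumption on the factor strengths, which is stated separately when needed). -/
structure SpikedModel (k : ℕ) (γ s : ℝ) (p : ℕ → ℕ) (Ω : Type*) [MeasurableSpace Ω]
    (P : Measure Ω) (μ : Fin k → ℝ) where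
  U : ∀ n : ℕ, Ω → Matrix (Fin n) (Fin k) ℝ
  V : ∀ n : ℕ, Ω → Matrix (Fin (p n)) (Fin k) ℝ
  d : ∀ n : ℕ, Ω → Fin k → ℝ
  E : ∀ n : ℕ, Ω → Matrix (Fin n) (Fin (p n)) ℝ
  /- A1 -/
  orthU : ∀ n ω, (U n ω)ᵀ * U n ω = 1
  orthV : ∀ n ω, (V n ω)ᵀ * V n ω = 1
  aspect : Tendsto (fun n : ℕ => Real.sqrt n * ((n : ℝ) / (p n) - γ)) atTop (𝓝 0)
  /- A2 (except for the CLT on the factor strengths) -/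
  dpos : ∀ n ω i, 0 < d n ω i
  dstrictanti : ∀ n ω, StrictAnti (d n ω)
  dconv : ∀ᵐ ω ∂P, ∀ i, Tendsto (fun n => d n ω i) atTop (𝓝 (Real.sqrt (μ i)))
  /- A3 -/
  Egauss : ∀ n, IIDGaussian P (fun ω => matEntries (E n ω)) (Real.toNNReal s)
  Eindep : ∀ n, IndepFun (E n) (fun ω => (U n ω, d n ω, V n ω)) P

/-- The observed data matrix `X_n = √n U_n D_n V_nᵀ + E_n`. -/
def SpikedModel.X {k : ℕ} {γ s : ℝ} {p : ℕ → ℕ} {Ω : Type*} [MeasurableSpace Ω]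
    {P : Measure Ω} {μ : Fin k → ℝ} (M : SpikedModel k γ s p Ω P μ) (n : ℕ) (ω : Ω) :
    Matrix (Fin n) (Fin (p n)) ℝ :=
  Real.sqrt n • (M.U n ω * Matrix.diagonal (M.d n ω) * (M.V n ω)ᵀ) + M.E n ω

/-- `√n Uh (diagonal √μh) Vhᵀ` is the SVD of `X` truncated to the `k` largest terms:
the `μh i` are the `k` largest eigenvalues of `(1/n) Xᵀ X` in decreasing order, the columns
of `Vh` are corresponding orthonormal eigenvectors (right singular vectors), and the columns
of `Uh` are corresponding orthonormal left singular vectors. -/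
def IsTruncatedSVD {n q k : ℕ} (X : Matrix (Fin n) (Fin q) ℝ)
    (Uh : Matrix (Fin n) (Fin k) ℝ) (μh : Fin k → ℝ) (Vh : Matrix (Fin q) (Fin k) ℝ) : Prop :=
  Uhᵀ * Uh = 1 ∧ Vhᵀ * Vh = 1 ∧ Antitone μh ∧ (∀ i, 0 ≤ μh i) ∧
  (∀ i : Fin k, μh i = ithEigDesc ((1 / (n : ℝ)) • (Xᵀ * X)) i) ∧
  (∀ i : Fin k, (Xᵀ * X) *ᵥ (fun j => Vh j i) = ((n : ℝ) * μh i) • fun j => Vh j i) ∧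
  (∀ i : Fin k, X *ᵥ (fun j => Vh j i) = (Real.sqrt n * Real.sqrt (μh i)) • fun j => Uh j i)

/-- Almost sure limit `μ̄` of the top sample eigenvalues (`s = σ²`). -/
def muBar (γ s μi : ℝ) : ℝ :=
  if s / Real.sqrt γ < μi then (μi + s) * (1 + s / (γ * μi))
  else s * (1 + 1 / Real.sqrt γ) ^ 2

/-- Limiting covariance matrix `Σ̄` of the fluctuations of the top sample eigenvalues. -/
def sigmaBar {k : ℕ} (γ s : ℝ) (μ : Fin k → ℝ) (Cmat : Matrix (Fin k) (Fin k) ℝ) :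
    Fin k → Fin k → ℝ := fun i j =>
  if s / Real.sqrt γ < μ i ∧ s / Real.sqrt γ < μ j then
    Cmat i j * (1 - s ^ 2 / (γ * (μ i) ^ 2)) * (1 - s ^ 2 / (γ * (μ j) ^ 2))
      + (if i = j then 2 * s * (2 * μ i + (1 + γ⁻¹) * s) * (1 - s ^ 2 / (γ * (μ i) ^ 2)) else 0)
  else 0

/-- The independent noise blocks `E_{n,12}`, `E_{n,21}` and the scaled Wishart eigenvalues
`Λ_n` appearing after the change of basis. -/
structure NoiseBlocks (k : ℕ) (γ : ℝ) (p : ℕ → ℕ) (Ω : Type*) [MeasurableSpace Ω]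
    (P : Measure Ω) where
  E12 : ∀ n : ℕ, Ω → Matrix (Fin k) (Fin (p n - k)) ℝ
  E21 : ∀ n : ℕ, Ω → Matrix (Fin (p n - k)) (Fin k) ℝ
  W : ∀ n : ℕ, Ω → Matrix (Fin (n - k)) (Fin (p n - k)) ℝ
  lam : ∀ n : ℕ, Ω → Fin (p n - k) → ℝ
  aspect : Tendsto (fun n : ℕ => (n : ℝ) / (p n)) atTop (𝓝 γ)
  pTop : Tendsto p atTop atTop
  E12gauss : ∀ n, IIDGaussian P (fun ω => matEntries (E12 n ω)) 1
  E21gauss : ∀ n, IIDGaussian P (fun ω => matEntries (E21 n ω)) 1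
  Wgauss : ∀ n, IIDGaussian P (fun ω => matEntries (W n ω)) 1
  /-- `n λ_{n,α}` are the decreasingly ordered eigenvalues of the white Wishart
  matrix `Wᵀ W`. -/
  lamEig : ∀ n ω, ∀ α : Fin (p n - k), (n : ℝ) * lam n ω α = ithEigDesc ((W n ω)ᵀ * W n ω) α
  indep1 : ∀ n, IndepFun (E12 n) (fun ω => (E21 n ω, W n ω)) P
  indep2 : ∀ n, IndepFun (E21 n) (W n) P

namespace NoiseBlocks

variable {k : ℕ} {γ : ℝ} {p : ℕ → ℕ} {Ω : Type*} [MeasurableSpace Ω] {P : Measure Ω}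

/-- `(1/n) E_{n,12} (Λ_n − z I)⁻¹ E_{n,12}ᵀ`. -/
def q1 (B : NoiseBlocks k γ p Ω P) (n : ℕ) (ω : Ω) (z : ℝ) : Matrix (Fin k) (Fin k) ℝ :=
  (1 / (n : ℝ)) • (B.E12 n ω * (Matrix.diagonal (B.lam n ω) - z • 1)⁻¹ * (B.E12 n ω)ᵀ)

/-- `(1/n) E_{n,21}ᵀ (Λ_n − z I)⁻¹ E_{n,21}`. -/
def q2 (B : NoiseBlocks k γ p Ω P) (n : ℕ) (ω : Ω) (z : ℝ) : Matrix (Fin k) (Fin k) ℝ :=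
  (1 / (n : ℝ)) • ((B.E21 n ω)ᵀ * (Matrix.diagonal (B.lam n ω) - z • 1)⁻¹ * B.E21 n ω)

/-- `(1/n) E_{n,12} (Λ_n − z I)⁻¹ Λ_n^{1/2} E_{n,21}`. -/
def q3 (B : NoiseBlocks k γ p Ω P) (n : ℕ) (ω : Ω) (z : ℝ) : Matrix (Fin k) (Fin k) ℝ :=
  (1 / (n : ℝ)) • (B.E12 n ω * (Matrix.diagonal (B.lam n ω) - z • 1)⁻¹ *
    Matrix.diagonal (fun α => Real.sqrt (B.lam n ω α)) * B.E21 n ω)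

/-- `F_n(z)`. -/
def Fn (B : NoiseBlocks k γ p Ω P) (n : ℕ) (ω : Ω) (z : ℝ) : Matrix (Fin k) (Fin k) ℝ :=
  Real.sqrt n • (B.q1 n ω z - (γ⁻¹ * mpStieltjes γ z) • 1)

/-- `G_n(z)`. -/
def Gn (B : NoiseBlocks k γ p Ω P) (n : ℕ) (ω : Ω) (z : ℝ) : Matrix (Fin k) (Fin k) ℝ :=
  Real.sqrt n • B.q3 n ω z

/-- `H_n(z)`. -/
def Hn (B : NoiseBlocks k γ p Ω P) (n : ℕ) (ω : Ω) (z : ℝ) : Matrix (Fin k) (Fin k) ℝ :=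
  Real.sqrt n • (B.q2 n ω z - (γ⁻¹ * mpStieltjes γ z) • 1)

end NoiseBlocks

/-- The difference quotient `(m(z₁) − m(z₂))/(z₁ − z₂)`, interpreted as `m'(z₁)` when
`z₁ = z₂`: covariance kernel of `F` and `H`. -/
def qFH (γ z₁ z₂ : ℝ) : ℝ :=
  if z₁ = z₂ then deriv (mpStieltjes γ) z₁
  else (mpStieltjes γ z₁ - mpStieltjes γ z₂) / (z₁ - z₂)

/-- The difference quotient `(z₁ m(z₁) − z₂ m(z₂))/(z₁ − z₂)`, interpreted as
`m(z₁) + z₁ m'(z₁)` when `z₁ = z₂`: covariance kernel of `G`. -/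
def qG (γ z₁ z₂ : ℝ) : ℝ :=
  if z₁ = z₂ then mpStieltjes γ z₁ + z₁ * deriv (mpStieltjes γ) z₁
  else (z₁ * mpStieltjes γ z₁ - z₂ * mpStieltjes γ z₂) / (z₁ - z₂)

/-- Covariance function of the limiting Gaussian family
`(F(z_r), G(z_r), H(z_r))_{r}` (index component `Fin 3`: `0 ↦ F`, `1 ↦ G`, `2 ↦ H`);
it encodes that `F`, `G`, `H` are mutually independent, that `F` and `H` are symmetric,
and that all covariances vanish except the ones prescribed. -/
def covFGH (γ : ℝ) {l k : ℕ} (zs : Fin l → ℝ) :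
    Fin l × Fin 3 × Fin k × Fin k → Fin l × Fin 3 × Fin k × Fin k → ℝ := fun q q' =>
  if q.2.1 = q'.2.1 then
    if q.2.1 = 1 then
      γ⁻¹ * qG γ (zs q.1) (zs q'.1) *
        (if q.2.2.1 = q'.2.2.1 ∧ q.2.2.2 = q'.2.2.2 then 1 else 0)
    else
      γ⁻¹ * qFH γ (zs q.1) (zs q'.1) *
        ((if q.2.2.1 = q'.2.2.1 ∧ q.2.2.2 = q'.2.2.2 then 1 else 0)
          + (if q.2.2.1 = q'.2.2.2 ∧ q.2.2.2 = q'.2.2.1 then 1 else 0))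
  else 0

/-- The model after the orthogonal change of basis: the data matrix `X̃_n` has block form
`[[√n D_n + E₁₁, E₁₂], [E₂₁, √n Λ_n^{1/2}], [E₃₁, 0]]`, with all blocks mutually independent,
the `E`-blocks having iid `N(0,1)` entries and `n λ_{n,α}` the decreasingly ordered
eigenvalues of a white Wishart matrix of dimension `p − k` with `n − k` degrees of freedom.
(Monotonicity assumptions on `d` and `μ` are stated separately when needed.) -/
structure BlockModel (k : ℕ) (γ : ℝ) (p : ℕ → ℕ) (Ω : Type*) [MeasurableSpace Ω]
    (P : Measure Ω) (μ : Fin k → ℝ) where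
  d : ∀ n : ℕ, Ω → Fin k → ℝ
  E11 : ∀ n : ℕ, Ω → Matrix (Fin k) (Fin k) ℝ
  E12 : ∀ n : ℕ, Ω → Matrix (Fin k) (Fin (p n - k)) ℝ
  E21 : ∀ n : ℕ, Ω → Matrix (Fin (p n - k)) (Fin k) ℝ
  E31 : ∀ n : ℕ, Ω → Matrix (Fin (n - p n)) (Fin k) ℝ
  W : ∀ n : ℕ, Ω → Matrix (Fin (n - k)) (Fin (p n - k)) ℝ
  lam : ∀ n : ℕ, Ω → Fin (p n - k) → ℝ
  aspect : Tendsto (fun n : ℕ => Real.sqrt n * ((n : ℝ) / (p n) - γ)) atTop (𝓝 0)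
  pTop : Tendsto p atTop atTop
  dpos : ∀ n ω i, 0 < d n ω i
  dconv : ∀ᵐ ω ∂P, ∀ i, Tendsto (fun n => d n ω i) atTop (𝓝 (Real.sqrt (μ i)))
  E11gauss : ∀ n, IIDGaussian P (fun ω => matEntries (E11 n ω)) 1
  E12gauss : ∀ n, IIDGaussian P (fun ω => matEntries (E12 n ω)) 1
  E21gauss : ∀ n, IIDGaussian P (fun ω => matEntries (E21 n ω)) 1
  E31gauss : ∀ n, IIDGaussian P (fun ω => matEntries (E31 n ω)) 1
  Wgauss : ∀ n, IIDGaussian P (fun ω => matEntries (W n ω)) 1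
  lamEig : ∀ n ω, ∀ α : Fin (p n - k), (n : ℝ) * lam n ω α = ithEigDesc ((W n ω)ᵀ * W n ω) α
  indep1 : ∀ n, IndepFun (d n) (fun ω => (E11 n ω, E12 n ω, E21 n ω, E31 n ω, W n ω)) P
  indep2 : ∀ n, IndepFun (E11 n) (fun ω => (E12 n ω, E21 n ω, E31 n ω, W n ω)) P
  indep3 : ∀ n, IndepFun (E12 n) (fun ω => (E21 n ω, E31 n ω, W n ω)) P
  indep4 : ∀ n, IndepFun (E21 n) (fun ω => (E31 n ω, W n ω)) P
  indep5 : ∀ n, IndepFun (E31 n) (W n) P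

namespace BlockModel

variable {k : ℕ} {γ : ℝ} {p : ℕ → ℕ} {Ω : Type*} [MeasurableSpace Ω] {P : Measure Ω}
  {μ : Fin k → ℝ}

/-- Upper-left block `S_{n,11}` of `S_n = (1/n) X̃_nᵀ X̃_n`. -/
def S11 (M : BlockModel k γ p Ω P μ) (n : ℕ) (ω : Ω) : Matrix (Fin k) (Fin k) ℝ :=
  Matrix.diagonal (fun i => (M.d n ω i) ^ 2)
    + (1 / Real.sqrt n) •
      (Matrix.diagonal (M.d n ω) * M.E11 n ω + (M.E11 n ω)ᵀ * Matrix.diagonal (M.d n ω))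
    + (1 / (n : ℝ)) •
      ((M.E11 n ω)ᵀ * M.E11 n ω + (M.E21 n ω)ᵀ * M.E21 n ω + (M.E31 n ω)ᵀ * M.E31 n ω)

/-- Block `S_{n,12}` of `S_n = (1/n) X̃_nᵀ X̃_n`. -/
def S12 (M : BlockModel k γ p Ω P μ) (n : ℕ) (ω : Ω) : Matrix (Fin k) (Fin (p n - k)) ℝ :=
  (1 / Real.sqrt n) • (Matrix.diagonal (M.d n ω) * M.E12 n ω
      + (M.E21 n ω)ᵀ * Matrix.diagonal (fun α => Real.sqrt (M.lam n ω α)))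
    + (1 / (n : ℝ)) • ((M.E11 n ω)ᵀ * M.E12 n ω)

/-- Block `S_{n,21}` of `S_n = (1/n) X̃_nᵀ X̃_n`. -/
def S21 (M : BlockModel k γ p Ω P μ) (n : ℕ) (ω : Ω) : Matrix (Fin (p n - k)) (Fin k) ℝ :=
  (1 / Real.sqrt n) • ((M.E12 n ω)ᵀ * Matrix.diagonal (M.d n ω)
      + Matrix.diagonal (fun α => Real.sqrt (M.lam n ω α)) * M.E21 n ω)
    + (1 / (n : ℝ)) • ((M.E12 n ω)ᵀ * M.E11 n ω)

/-- Lower-right block `S_{n,22}` of `S_n = (1/n) X̃_nᵀ X̃_n`. -/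
def S22 (M : BlockModel k γ p Ω P μ) (n : ℕ) (ω : Ω) :
    Matrix (Fin (p n - k)) (Fin (p n - k)) ℝ :=
  Matrix.diagonal (M.lam n ω) + (1 / (n : ℝ)) • ((M.E12 n ω)ᵀ * M.E12 n ω)

/-- The secular-equation matrix `T_n(z) = S₁₁ − z I − S₁₂ (S₂₂ − z I)⁻¹ S₂₁`. -/
def T (M : BlockModel k γ p Ω P μ) (n : ℕ) (ω : Ω) (z : ℝ) : Matrix (Fin k) (Fin k) ℝ :=
  M.S11 n ω - z • 1 - M.S12 n ω * (M.S22 n ω - z • 1)⁻¹ * M.S21 n ω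

/-- `F_n(z)` in the block model. -/
def Fmat (M : BlockModel k γ p Ω P μ) (n : ℕ) (ω : Ω) (z : ℝ) : Matrix (Fin k) (Fin k) ℝ :=
  Real.sqrt n • ((1 / (n : ℝ)) •
      (M.E12 n ω * (Matrix.diagonal (M.lam n ω) - z • 1)⁻¹ * (M.E12 n ω)ᵀ)
    - (γ⁻¹ * mpStieltjes γ z) • 1)

/-- `G_n(z)` in the block model. -/
def Gmat (M : BlockModel k γ p Ω P μ) (n : ℕ) (ω : Ω) (z : ℝ) : Matrix (Fin k) (Fin k) ℝ :=
  Real.sqrt n • ((1 / (n : ℝ)) •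
    (M.E12 n ω * (Matrix.diagonal (M.lam n ω) - z • 1)⁻¹ *
      Matrix.diagonal (fun α => Real.sqrt (M.lam n ω α)) * M.E21 n ω))

/-- `H_n(z)` in the block model. -/
def Hmat (M : BlockModel k γ p Ω P μ) (n : ℕ) (ω : Ω) (z : ℝ) : Matrix (Fin k) (Fin k) ℝ :=
  Real.sqrt n • ((1 / (n : ℝ)) •
      ((M.E21 n ω)ᵀ * (Matrix.diagonal (M.lam n ω) - z • 1)⁻¹ * M.E21 n ω)
    - (γ⁻¹ * mpStieltjes γ z) • 1)

/-- `R_n(z) = D_n + n^{-1/2} E₁₁ − n^{-1/2} E₁₂ (S₂₂ − z I)⁻¹ S₂₁`. -/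
def Rmat (M : BlockModel k γ p Ω P μ) (n : ℕ) (ω : Ω) (z : ℝ) : Matrix (Fin k) (Fin k) ℝ :=
  Matrix.diagonal (M.d n ω) + (1 / Real.sqrt n) • M.E11 n ω
    - (1 / Real.sqrt n) • (M.E12 n ω * (M.S22 n ω - z • 1)⁻¹ * M.S21 n ω)

/-- Euclidean norm of `x̃ = (x; −(S₂₂ − z I)⁻¹ S₂₁ x)`. -/
def xtNorm (M : BlockModel k γ p Ω P μ) (n : ℕ) (ω : Ω) (z : ℝ) (x : Fin k → ℝ) : ℝ :=
  Real.sqrt (∑ j, x j ^ 2 +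
    ∑ α, ((((M.S22 n ω - z • 1)⁻¹ * M.S21 n ω) *ᵥ x) α) ^ 2)

/-- First `k` components of the left singular vector: `y = R_n(z) x / ‖x̃‖₂`. -/
def yvec (M : BlockModel k γ p Ω P μ) (n : ℕ) (ω : Ω) (z : ℝ) (x : Fin k → ℝ) :
    Fin k → ℝ :=
  (M.xtNorm n ω z x)⁻¹ • (M.Rmat n ω z *ᵥ x)

end BlockModel

/-- The deterministic limit `T₀(z) = (1 + γ⁻¹ m(z))⁻¹ D² + m(z)⁻¹ I` of `T_n(z)`. -/
def T0lim {k : ℕ} (γ : ℝ) (μ : Fin k → ℝ) (z : ℝ) : Matrix (Fin k) (Fin k) ℝ :=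
  (1 + γ⁻¹ * mpStieltjes γ z)⁻¹ • Matrix.diagonal μ + (mpStieltjes γ z)⁻¹ • 1

/-! ### The Stieltjes transform of the Marchenko–Pastur law -/

/-- Telescoping form of the sine generating series
`∑ s ^ k sin ((k + 1) θ) = sin θ / (1 + s² - 2 s cos θ)`. -/
lemma sine_partial_sum (s θ : ℝ) (n : ℕ) :
    (1 + s ^ 2 - 2 * s * Real.cos θ) * ∑ k ∈ Finset.range n, s ^ k * Real.sin ((k + 1) * θ)
      = Real.sin θ - s ^ n * Real.sin ((n + 1) * θ) + s ^ (n + 1) * Real.sin (n * θ) := by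
  induction n with
  | zero => simp
  | succ n ih =>
    rw [Finset.sum_range_succ, mul_add, ih]
    have h : Real.sin (((n + 1 : ℕ) + 1 : ℝ) * θ)
        = 2 * Real.cos θ * Real.sin ((n + 1) * θ) - Real.sin (n * θ) := by
      have h1 : ((n + 1 : ℕ) + 1 : ℝ) * θ = (n + 1) * θ + θ := by push_cast; ring
      have h2 : (n : ℝ) * θ = (n + 1) * θ - θ := by ring
      rw [h1, h2, Real.sin_add, Real.sin_sub]; ring
    rw [h]; push_cast; ring

lemma integral_sin_mul_sin (k : ℕ) :
    ∫ θ in (0 : ℝ)..Real.pi, Real.sin θ * Real.sin ((k + 1) * θ)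
      = if k = 0 then Real.pi / 2 else 0 := by
  split_ifs with hk
  · subst hk
    have : ∀ θ : ℝ, Real.sin θ * Real.sin (((0 : ℕ) + 1) * θ) = Real.sin θ ^ 2 := by
      intro θ; simp [sq]
    simp_rw [this, integral_sin_sq]
    simp
  · have hk' : (k : ℝ) ≠ 0 := by exact_mod_cast hk
    have hk2 : (k + 2 : ℝ) ≠ 0 := by positivity
    have : ∀ θ : ℝ, Real.sin θ * Real.sin ((k + 1) * θ)
        = Real.cos (k * θ) / 2 - Real.cos ((k + 2) * θ) / 2 := by
      intro θ
      have h1 : (k : ℝ) * θ = (k + 1) * θ - θ := by ring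
      have h2 : (k + 2 : ℝ) * θ = (k + 1) * θ + θ := by ring
      rw [h1, h2, Real.cos_add, Real.cos_sub]; ring
    simp_rw [this]
    rw [intervalIntegral.integral_sub, intervalIntegral.integral_div, intervalIntegral.integral_div,
      intervalIntegral.integral_comp_mul_left (fun x => Real.cos x) hk',
      intervalIntegral.integral_comp_mul_left (fun x => Real.cos x) hk2]
    · have h3 : Real.sin ((k + 2) * Real.pi) = 0 := by
        have := Real.sin_nat_mul_pi (k + 2); push_cast at this; exact this
      simp [h3]
    all_goals exact Continuous.intervalIntegrable (by fun_prop) _ _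

lemma poisson_denom_ge (s θ : ℝ) :
    (1 - |s|) ^ 2 ≤ 1 + s ^ 2 - 2 * s * Real.cos θ := by
  have h1 : s * Real.cos θ ≤ |s| := by
    calc s * Real.cos θ ≤ |s * Real.cos θ| := le_abs_self _
      _ = |s| * |Real.cos θ| := abs_mul _ _
      _ ≤ |s| * 1 := by gcongr; exact Real.abs_cos_le_one θ
      _ = |s| := mul_one _
  nlinarith [sq_abs s]

/-- The value `π / 2` does not depend on `s`: only the first term of the sine series survives. -/
lemma integral_poisson_lt {s : ℝ} (hs : |s| < 1) :
    ∫ θ in (0 : ℝ)..Real.pi, Real.sin θ ^ 2 / (1 + s ^ 2 - 2 * s * Real.cos θ) = Real.pi / 2 := by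
  set D : ℝ → ℝ := fun θ => 1 + s ^ 2 - 2 * s * Real.cos θ with hD
  have h0 : 0 < (1 - |s|) ^ 2 := by
    have : 0 < 1 - |s| := by linarith
    positivity
  have hDpos : ∀ θ, 0 < D θ := fun θ => h0.trans_le (poisson_denom_ge s θ)
  have hDc : Continuous D := by fun_prop
  set I := ∫ θ in (0 : ℝ)..Real.pi, Real.sin θ ^ 2 / D θ
  have key : ∀ n : ℕ, 1 ≤ n → |I - Real.pi / 2| ≤ 2 * |s| ^ n / (1 - |s|) ^ 2 * Real.pi := by
    intro n hn
    have hsum : ∫ θ in (0 : ℝ)..Real.pi,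
        Real.sin θ * ∑ k ∈ Finset.range n, s ^ k * Real.sin ((k + 1) * θ) = Real.pi / 2 := by
      simp_rw [Finset.mul_sum]
      rw [intervalIntegral.integral_finsetSum]
      · have : ∀ k : ℕ, ∫ θ in (0 : ℝ)..Real.pi, Real.sin θ * (s ^ k * Real.sin ((k + 1) * θ))
            = s ^ k * (if k = 0 then Real.pi / 2 else 0) := by
          intro k
          rw [← integral_sin_mul_sin, ← intervalIntegral.integral_const_mul]
          congr 1; ext θ; ring
        simp_rw [this]
        rw [Finset.sum_eq_single 0]
        · simp
        · intro b _ hb; simp [hb]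
        · intro h; simp at h; omega
      · intro k _
        exact Continuous.intervalIntegrable (by fun_prop) _ _
    have hdiff : I - Real.pi / 2 = ∫ θ in (0 : ℝ)..Real.pi,
        Real.sin θ * (s ^ n * Real.sin ((n + 1) * θ) - s ^ (n + 1) * Real.sin (n * θ)) / D θ := by
      rw [← hsum, ← intervalIntegral.integral_sub]
      · congr 1; ext θ
        have h := sine_partial_sum s θ n
        have hne := (hDpos θ).ne'
        rw [eq_div_iff hne, sub_mul, div_mul_cancel₀ _ hne]
        have h' : D θ * ∑ k ∈ Finset.range n, s ^ k * Real.sin ((k + 1) * θ) = _ := h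
        linear_combination (-Real.sin θ) * h'
      · exact Continuous.intervalIntegrable
          (Continuous.div (by fun_prop) hDc fun θ => (hDpos θ).ne') _ _
      · exact Continuous.intervalIntegrable (by fun_prop) _ _
    rw [hdiff]
    have := intervalIntegral.norm_integral_le_of_norm_le_const (a := 0) (b := Real.pi)
      (C := 2 * |s| ^ n / (1 - |s|) ^ 2) (f := fun θ => Real.sin θ *
        (s ^ n * Real.sin ((n + 1) * θ) - s ^ (n + 1) * Real.sin (n * θ)) / D θ) ?_
    · simpa [abs_of_pos Real.pi_pos] using this
    · intro θ _
      rw [Real.norm_eq_abs, abs_div, abs_of_pos (hDpos θ)]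
      have hnum : |Real.sin θ * (s ^ n * Real.sin ((n + 1) * θ) - s ^ (n + 1) * Real.sin (n * θ))|
          ≤ 2 * |s| ^ n := by
        rw [abs_mul]
        have e1 : |s ^ n * Real.sin ((n + 1) * θ)| ≤ |s| ^ n := by
          rw [abs_mul, abs_pow]
          exact mul_le_of_le_one_right (by positivity) (Real.abs_sin_le_one _)
        have e2 : |s ^ (n + 1) * Real.sin (n * θ)| ≤ |s| ^ n := by
          rw [abs_mul, abs_pow]
          calc |s| ^ (n + 1) * |Real.sin (n * θ)| ≤ |s| ^ (n + 1) :=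
                mul_le_of_le_one_right (by positivity) (Real.abs_sin_le_one _)
            _ ≤ |s| ^ n := pow_le_pow_of_le_one (abs_nonneg _) hs.le (Nat.le_succ n)
        calc _ ≤ 1 * (|s| ^ n + |s| ^ n) := by
              gcongr
              · exact Real.abs_sin_le_one _
              · exact (abs_sub _ _).trans (add_le_add e1 e2)
          _ = _ := by ring
      exact div_le_div₀ (by positivity) hnum h0 (poisson_denom_ge s θ)
  have hlim : Tendsto (fun n : ℕ => 2 * |s| ^ n / (1 - |s|) ^ 2 * Real.pi) atTop (𝓝 0) := by
    have := tendsto_pow_atTop_nhds_zero_of_lt_one (abs_nonneg s) hs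
    simpa using ((this.const_mul 2).div_const ((1 - |s|) ^ 2)).mul_const Real.pi
  have h1 : |I - Real.pi / 2| ≤ 0 :=
    ge_of_tendsto hlim (eventually_atTop.2 ⟨1, fun n hn => key n hn⟩)
  have h2 := abs_nonpos_iff.1 h1
  linarith

lemma integral_poisson {s : ℝ} (hs : -1 < s) (hs1 : s ≤ 1) :
    ∫ θ in (0 : ℝ)..Real.pi, Real.sin θ ^ 2 / (1 + s ^ 2 - 2 * s * Real.cos θ) = Real.pi / 2 := by
  rcases hs1.lt_or_eq with h | rfl
  · exact integral_poisson_lt (abs_lt.2 ⟨hs, h⟩)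
  · have : ∫ θ in (0 : ℝ)..Real.pi, Real.sin θ ^ 2 / (1 + 1 ^ 2 - 2 * 1 * Real.cos θ)
        = ∫ θ in (0 : ℝ)..Real.pi, (1 + Real.cos θ) / 2 := by
      apply intervalIntegral.integral_congr_ae
      refine Eventually.of_forall fun θ hθ => ?_
      rw [Set.uIoc_of_le Real.pi_pos.le] at hθ
      have hc : Real.cos θ < 1 := by
        have := Real.strictAntiOn_cos (Set.left_mem_Icc.2 Real.pi_pos.le) ⟨hθ.1.le, hθ.2⟩ hθ.1
        simpa using this
      have hne : (1 + 1 ^ 2 - 2 * 1 * Real.cos θ) ≠ 0 := by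
        have : 0 < 1 + 1 ^ 2 - 2 * 1 * Real.cos θ := by linarith
        exact this.ne'
      rw [div_eq_iff hne, Real.sin_sq]; ring
    rw [this, intervalIntegral.integral_div, intervalIntegral.integral_add] <;>
      simp

/-- With `z = (1 + s r) (1 + s / r)`, `s = γ^{-1/2}`, the substitution `t = 1 + s² - 2 s cos θ`
turns the Stieltjes integral into two integrals of Poisson type. -/
lemma mpStieltjes_formula {γ s r z : ℝ} (hs0 : 0 < s) (hs1 : s ≤ 1) (hsγ : γ * s ^ 2 = 1)
    (ha : aGamma γ = (1 - s) ^ 2) (hb : bGamma γ = (1 + s) ^ 2)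
    (hr0 : 0 < r) (hr1 : r < 1) (hz : z = 1 + s ^ 2 + s * (r + r⁻¹)) :
    mpStieltjes γ z = -(1 / z) * (1 + r / s) := by
  have hγ0 : 0 < γ := by
    by_contra h
    have : γ * s ^ 2 ≤ 0 := mul_nonpos_of_nonpos_of_nonneg (not_lt.1 h) (sq_nonneg s)
    linarith
  set τ : ℝ → ℝ := fun θ => 1 + s ^ 2 - 2 * s * Real.cos θ with hτ
  have hder : ∀ θ, HasDerivAt τ (2 * s * Real.sin θ) θ := by
    intro θ
    have := ((Real.hasDerivAt_cos θ).const_mul (2 * s)).const_sub (1 + s ^ 2)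
    simpa using this
  have hmono : StrictMonoOn τ (Set.Icc 0 Real.pi) := by
    intro x hx y hy hxy
    have := Real.strictAntiOn_cos hx hy hxy
    simp only [hτ]; nlinarith
  have hτ0 : τ 0 = aGamma γ := by simp [hτ, ha]; ring
  have hτπ : τ Real.pi = bGamma γ := by simp [hτ, hb]; ring
  have himg : τ '' Set.Ioo 0 Real.pi = Set.Ioo (aGamma γ) (bGamma γ) := by
    rw [← hτ0, ← hτπ]
    apply Set.Subset.antisymm
    · rintro _ ⟨θ, hθ, rfl⟩
      exact ⟨hmono (Set.left_mem_Icc.2 Real.pi_pos.le) (Set.Ioo_subset_Icc_self hθ) hθ.1,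
        hmono (Set.Ioo_subset_Icc_self hθ) (Set.right_mem_Icc.2 Real.pi_pos.le) hθ.2⟩
    · exact intermediate_value_Ioo Real.pi_pos.le (by fun_prop)
  have hrr : (2 : ℝ) < r + r⁻¹ := by
    have : r + r⁻¹ - 2 = (1 - r) ^ 2 / r := by field_simp; ring
    have h2 : 0 < (1 - r) ^ 2 / r := by
      have : 0 < 1 - r := by linarith
      positivity
    linarith
  have hzb : (1 + s) ^ 2 < z := by rw [hz]; nlinarith
  have hz0 : 0 < z := lt_trans (by positivity) hzb
  have step1 : mpStieltjes γ z = ∫ t in Set.Ioo (aGamma γ) (bGamma γ),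
      γ * Real.sqrt ((bGamma γ - t) * (t - aGamma γ)) / (2 * Real.pi * t) * (t - z)⁻¹ := by
    unfold mpStieltjes mpMeasure
    have hm : Measurable (fun t => mpDensity γ t) := by
      unfold mpDensity
      apply Measurable.ite measurableSet_Icc <;> fun_prop
    have hnn : ∀ t, 0 ≤ mpDensity γ t := by
      intro t; unfold mpDensity
      split_ifs with h
      · have : 0 ≤ t := le_trans (by rw [ha]; positivity) h.1
        positivity
      · exact le_rfl
    rw [integral_withDensity_eq_integral_toReal_smul (hm.ennreal_ofReal)
      (by simp)]
    have : ∀ t, (ENNReal.ofReal (mpDensity γ t)).toReal • (t - z)⁻¹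
        = (Set.Icc (aGamma γ) (bGamma γ)).indicator (fun t =>
          γ * Real.sqrt ((bGamma γ - t) * (t - aGamma γ)) / (2 * Real.pi * t) * (t - z)⁻¹) t := by
      intro t
      rw [ENNReal.toReal_ofReal (hnn t)]
      unfold mpDensity Set.indicator
      split_ifs <;> simp
    simp_rw [this]
    rw [integral_indicator measurableSet_Icc, integral_Icc_eq_integral_Ioo]
  rw [step1, ← himg, integral_image_eq_integral_abs_deriv_smul measurableSet_Ioo
    (fun θ _ => (hder θ).hasDerivWithinAt)
    (hmono.injOn.mono Set.Ioo_subset_Icc_self)]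
  have step2 : ∫ θ in Set.Ioo 0 Real.pi, |2 * s * Real.sin θ| •
      (γ * Real.sqrt ((bGamma γ - τ θ) * (τ θ - aGamma γ)) / (2 * Real.pi * τ θ) * (τ θ - z)⁻¹)
      = ∫ θ in Set.Ioo 0 Real.pi, -(2 / (Real.pi * z)) *
        (Real.sin θ ^ 2 / (1 + s ^ 2 - 2 * s * Real.cos θ)
          + r / s * (Real.sin θ ^ 2 / (1 + (-r) ^ 2 - 2 * (-r) * Real.cos θ))) := by
    apply setIntegral_congr_fun measurableSet_Ioo
    intro θ hθ
    have hsin : 0 < Real.sin θ := Real.sin_pos_of_mem_Ioo hθ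
    have hτθ : τ θ ∈ Set.Ioo (aGamma γ) (bGamma γ) := himg ▸ Set.mem_image_of_mem τ hθ
    have hτpos : 0 < τ θ := lt_of_le_of_lt (by rw [ha]; positivity) hτθ.1
    have hzτ : 0 < z - τ θ := by have := hτθ.2; rw [hb] at this; linarith
    have hsq : (bGamma γ - τ θ) * (τ θ - aGamma γ) = (2 * s * Real.sin θ) ^ 2 := by
      rw [ha, hb]; simp only [hτ]
      have := Real.sin_sq_add_cos_sq θ
      linear_combination (-4 * s ^ 2) * this
    have hden : 1 + (-r) ^ 2 - 2 * (-r) * Real.cos θ = r / s * (z - τ θ) := by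
      rw [hz]; simp only [hτ]; field_simp; ring
    have hpos : 0 < 2 * s * Real.sin θ := by positivity
    simp only
    rw [hsq, Real.sqrt_sq hpos.le, abs_of_pos hpos, hden]
    change _ = -(2 / (Real.pi * z)) * (Real.sin θ ^ 2 / τ θ + _)
    have hn : τ θ - z ≠ 0 := by linarith
    have hn2 : z - τ θ ≠ 0 := hzτ.ne'
    have hrs : r / s ≠ 0 := by positivity
    have e1 : r / s * (Real.sin θ ^ 2 / (r / s * (z - τ θ))) = Real.sin θ ^ 2 / (z - τ θ) := by
      field_simp
    have e2 : (τ θ - z)⁻¹ = -(z - τ θ)⁻¹ := by rw [← neg_sub, inv_neg]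
    rw [e1, e2, smul_eq_mul]
    have hτne := hτpos.ne'
    have hzne := hz0.ne'
    have hpi := Real.pi_pos.ne'
    generalize τ θ = T at *
    generalize Real.sin θ = S at *
    field_simp
    linear_combination (-z) * hsγ
  rw [step2]
  have hint : ∀ q : ℝ, -1 < q → q ≤ 1 →
      IntegrableOn (fun θ => Real.sin θ ^ 2 / (1 + q ^ 2 - 2 * q * Real.cos θ))
        (Set.Ioo 0 Real.pi) := by
    intro q hq hq1
    -- a non-integrable function would have integral `0`
    have h := integral_poisson hq hq1
    rw [intervalIntegral.integral_of_le Real.pi_pos.le, integral_Ioc_eq_integral_Ioo] at h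
    by_contra hcon
    rw [integral_undef hcon] at h
    have := Real.pi_pos; linarith
  have hval : ∀ q : ℝ, -1 < q → q ≤ 1 →
      ∫ θ in Set.Ioo 0 Real.pi, Real.sin θ ^ 2 / (1 + q ^ 2 - 2 * q * Real.cos θ)
        = Real.pi / 2 := by
    intro q hq hq1
    have h := integral_poisson hq hq1
    rwa [intervalIntegral.integral_of_le Real.pi_pos.le, integral_Ioc_eq_integral_Ioo] at h
  rw [integral_const_mul, integral_add (hint s (by linarith) hs1)
    ((hint (-r) (by linarith) (by linarith)).const_mul _), integral_const_mul,
    hval s (by linarith) hs1, hval (-r) (by linarith) (by linarith)]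
  have hpi := Real.pi_pos.ne'
  field_simp

/-- `φ = -γ⁻¹ m(z)` is the root of `z φ = γ⁻¹ + φ / (1 - φ)` on the branch
`0 < φ < γ^{-1/2} / (1 + γ^{-1/2})`. -/
lemma mpStieltjes_spec {γ z : ℝ} (hγ : 1 ≤ γ) (hz : bGamma γ < z) :
    0 < -(γ⁻¹ * mpStieltjes γ z) ∧
    -(γ⁻¹ * mpStieltjes γ z) < (1 / Real.sqrt γ) / (1 + 1 / Real.sqrt γ) ∧
    z * (-(γ⁻¹ * mpStieltjes γ z)) =
      γ⁻¹ + (-(γ⁻¹ * mpStieltjes γ z)) / (1 - (-(γ⁻¹ * mpStieltjes γ z))) := by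
  have hγ0 : 0 < γ := by linarith
  set s := 1 / Real.sqrt γ with hs
  have hsq : 1 ≤ Real.sqrt γ := Real.one_le_sqrt.2 hγ
  have hs0 : 0 < s := by positivity
  have hs1 : s ≤ 1 := by rw [hs, div_le_one (by positivity)]; exact hsq
  have hs2 : s ^ 2 = γ⁻¹ := by rw [hs, div_pow, Real.sq_sqrt hγ0.le]; simp
  have hsγ : γ * s ^ 2 = 1 := by rw [hs2]; field_simp
  have hb : bGamma γ = (1 + s) ^ 2 := rfl
  rw [hb] at hz
  set y := (z - 1 - s ^ 2) / (2 * s) with hy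
  have hy1 : 1 < y := by rw [hy, lt_div_iff₀ (by positivity)]; nlinarith
  have hd : 0 < y ^ 2 - 1 := by nlinarith
  set q := Real.sqrt (y ^ 2 - 1) with hq
  have hq0 : 0 < q := Real.sqrt_pos.2 hd
  have hqq : q ^ 2 = y ^ 2 - 1 := Real.sq_sqrt hd.le
  set r := (y + q)⁻¹ with hr
  have hyq : 1 < y + q := by linarith
  have hr0 : 0 < r := by positivity
  have hr1 : r < 1 := inv_lt_one_of_one_lt₀ hyq
  have hrr : r + r⁻¹ = 2 * y := by
    rw [hr, inv_inv]
    have : (y + q)⁻¹ = y - q := by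
      apply inv_eq_of_mul_eq_one_right
      linear_combination (-1) * hqq
    rw [this]; ring
  have hzr : z = 1 + s ^ 2 + s * (r + r⁻¹) := by
    rw [hrr, hy]; field_simp; ring
  have hzfac : z = (1 + s * r) * (r + s) / r := by rw [hzr]; field_simp; ring
  have hm := mpStieltjes_formula hs0 hs1 hsγ rfl hb hr0 hr1 hzr
  have hφ : -(γ⁻¹ * mpStieltjes γ z) = s * r / (1 + s * r) := by
    rw [hm, ← hs2, hzfac]; field_simp; ring
  rw [hφ]
  have hsr : 0 < s * r := by positivity
  refine ⟨by positivity, ?_, ?_⟩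
  · rw [div_lt_div_iff₀ (by positivity) (by positivity)]
    nlinarith
  · rw [← hs2]
    have : 1 - s * r / (1 + s * r) = 1 / (1 + s * r) := by field_simp; ring
    rw [this, hzfac]; field_simp; ring

/-! ### Concentration of Gaussian quadratic forms -/

/-- The law of a vector of iid `N(0,1)` coordinates. -/
abbrev stdG (ι : Type*) [Fintype ι] : Measure (ι → ℝ) :=
  Measure.pi fun _ : ι => gaussianReal 0 1

lemma gaussian_sq_exp {a : ℝ} (ha : |a| ≤ 1 / 4) :
    Integrable (fun x : ℝ => Real.exp (a * (x ^ 2 - 1))) (gaussianReal 0 1) ∧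
    ∫ x, Real.exp (a * (x ^ 2 - 1)) ∂(gaussianReal 0 1) ≤ Real.exp (4 * a ^ 2) := by
  obtain ⟨ha1, ha2⟩ := abs_le.1 ha
  have hβ : 0 < 1 / 2 - a := by linarith
  have hrew : ∀ x : ℝ, gaussianPDFReal 0 1 x • Real.exp (a * (x ^ 2 - 1))
      = (Real.sqrt (2 * Real.pi))⁻¹ * Real.exp (-a) * Real.exp (-(1 / 2 - a) * x ^ 2) := by
    intro x
    simp only [gaussianPDFReal, NNReal.coe_one, mul_one, sub_zero, smul_eq_mul]
    rw [mul_assoc, mul_assoc, ← Real.exp_add, ← Real.exp_add]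
    congr 2; ring
  constructor
  · rw [gaussianReal_of_var_ne_zero _ one_ne_zero,
      integrable_withDensity_iff_integrable_smul' (measurable_gaussianPDF 0 1)
        (ae_of_all _ fun x => gaussianPDF_lt_top)]
    simp_rw [toReal_gaussianPDF, hrew]
    exact (integrable_exp_neg_mul_sq hβ).const_mul _
  · rw [integral_gaussianReal_eq_integral_smul one_ne_zero]
    simp_rw [hrew]
    rw [integral_const_mul, integral_gaussian]
    have h1 : (Real.sqrt (2 * Real.pi))⁻¹ * Real.exp (-a) * Real.sqrt (Real.pi / (1 / 2 - a))
        = Real.exp (-a) * Real.sqrt (1 / (1 - 2 * a)) := by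
      have : Real.pi / (1 / 2 - a) = (2 * Real.pi) * (1 / (1 - 2 * a)) := by
        have : (1 - 2 * a) ≠ 0 := by linarith
        have : (1 / 2 - a) ≠ 0 := by linarith
        field_simp
      rw [this, Real.sqrt_mul (x := 2 * Real.pi) (by positivity) (1 / (1 - 2 * a))]
      have hc : Real.sqrt (2 * Real.pi) ≠ 0 := by positivity
      generalize Real.sqrt (2 * Real.pi) = c at hc ⊢
      rw [mul_assoc, mul_left_comm, inv_mul_eq_div, mul_div_cancel_left₀ _ hc]
    rw [h1]
    have h2 : Real.sqrt (1 / (1 - 2 * a)) ≤ Real.exp (a + 4 * a ^ 2) := by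
      apply Real.sqrt_le_iff.2 ⟨(Real.exp_pos _).le, ?_⟩
      rw [← Real.exp_nat_mul, div_le_iff₀ (by linarith)]
      have h3 := Real.add_one_le_exp (((2 : ℕ) : ℝ) * (a + 4 * a ^ 2))
      push_cast at h3 ⊢
      have h4 : (1 : ℝ) ≤ (2 * (a + 4 * a ^ 2) + 1) * (1 - 2 * a) := by
        nlinarith [mul_nonneg (sq_nonneg a) (by linarith : (0 : ℝ) ≤ 1 - 4 * a)]
      exact h4.trans (by gcongr; linarith)
    calc _ ≤ Real.exp (-a) * Real.exp (a + 4 * a ^ 2) := by gcongr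
      _ = _ := by rw [← Real.exp_add]; congr 1; ring

/-- Rotating to the eigenbasis of a Hermitian matrix preserves the standard Gaussian law. -/
lemma stdG_map_eigenbasis {ι : Type*} [Fintype ι] [DecidableEq ι] {B : Matrix ι ι ℝ}
    (hB : B.IsHermitian) :
    (stdG ι).map (fun y => ∑ i, y i • (hB.eigenvectorBasis i).ofLp) = stdG ι := by
  have h1 := stdGaussian_eq_map_pi_orthonormalBasis hB.eigenvectorBasis
  rw [← map_pi_eq_stdGaussian] at h1
  have h2 := congrArg (fun m => m.map (WithLp.ofLp)) h1
  simp only at h2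
  rw [Measure.map_map (by fun_prop) (by fun_prop), Measure.map_map (by fun_prop) (by fun_prop)] at h2
  have h3 : (WithLp.ofLp ∘ WithLp.toLp 2 : (ι → ℝ) → ι → ℝ) = id := by ext; simp
  rw [h3, Measure.map_id] at h2
  refine Eq.trans ?_ h2.symm
  congr 1
  ext y j
  simp

lemma dotProduct_eigenbasis {ι : Type*} [Fintype ι] [DecidableEq ι] {B : Matrix ι ι ℝ}
    (hB : B.IsHermitian) (i j : ι) :
    (hB.eigenvectorBasis i).ofLp ⬝ᵥ (hB.eigenvectorBasis j).ofLp = if i = j then 1 else 0 := by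
  have h := hB.eigenvectorBasis.inner_eq_ite i j
  rw [← h, EuclideanSpace.inner_eq_star_dotProduct, dotProduct_comm]
  simp

lemma quadForm_eigenbasis {ι : Type*} [Fintype ι] [DecidableEq ι] {B : Matrix ι ι ℝ}
    (hB : B.IsHermitian) (y : ι → ℝ) :
    (∑ i, y i • (hB.eigenvectorBasis i).ofLp) ⬝ᵥ
      B *ᵥ (∑ i, y i • (hB.eigenvectorBasis i).ofLp) = ∑ i, hB.eigenvalues i * y i ^ 2 := by
  rw [Matrix.mulVec_sum]
  simp_rw [Matrix.mulVec_smul, hB.mulVec_eigenvectorBasis, sum_dotProduct, dotProduct_sum,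
    smul_dotProduct, dotProduct_smul, dotProduct_eigenbasis]
  simp [sq]
  exact Finset.sum_congr rfl fun i _ => by ring

lemma eigenvalue_eq_quadForm {ι : Type*} [Fintype ι] [DecidableEq ι] {B : Matrix ι ι ℝ}
    (hB : B.IsHermitian) (i : ι) :
    (hB.eigenvectorBasis i).ofLp ⬝ᵥ B *ᵥ (hB.eigenvectorBasis i).ofLp = hB.eigenvalues i := by
  rw [hB.mulVec_eigenvectorBasis, dotProduct_smul, dotProduct_eigenbasis]; simp

lemma exp_weighted_sq {ι : Type*} [Fintype ι] {s : ℝ} (hs : |s| ≤ 1 / 4)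
    (b : ι → ℝ) (hb : ∀ i, |b i| ≤ 1) :
    Integrable (fun y : ι → ℝ => Real.exp (s * ∑ i, b i * (y i ^ 2 - 1))) (stdG ι) ∧
    ∫ y, Real.exp (s * ∑ i, b i * (y i ^ 2 - 1)) ∂(stdG ι)
      ≤ Real.exp (4 * s ^ 2 * Fintype.card ι) := by
  have hsb : ∀ i, |s * b i| ≤ 1 / 4 := fun i => by
    rw [abs_mul]; nlinarith [abs_nonneg s, abs_nonneg (b i), hb i]
  have hrew : ∀ y : ι → ℝ, Real.exp (s * ∑ i, b i * (y i ^ 2 - 1))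
      = ∏ i, Real.exp (s * b i * (y i ^ 2 - 1)) := by
    intro y; rw [← Real.exp_sum, Finset.mul_sum]; simp_rw [mul_assoc]
  simp_rw [hrew]
  refine ⟨Integrable.fintype_prod (f := fun i x => Real.exp (s * b i * (x ^ 2 - 1)))
    fun i => (gaussian_sq_exp (hsb i)).1, ?_⟩
  rw [integral_fintype_prod_eq_prod (f := fun i x => Real.exp (s * b i * (x ^ 2 - 1)))]
  calc _ ≤ ∏ _i : ι, Real.exp (4 * s ^ 2) := by
        apply Finset.prod_le_prod
        · intro i _; exact integral_nonneg fun x => (Real.exp_pos _).le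
        · intro i _
          refine (gaussian_sq_exp (hsb i)).2.trans (Real.exp_le_exp.2 ?_)
          have : b i ^ 2 ≤ 1 := by rw [← sq_abs]; nlinarith [abs_nonneg (b i), hb i]
          rw [mul_pow]; nlinarith [sq_nonneg s]
    _ = _ := by
        rw [Finset.prod_const, ← Real.exp_nat_mul, Finset.card_univ]; congr 1; ring

lemma chernoff_of_integral_le {α : Type*} [MeasurableSpace α] (ν : Measure α)
    [IsFiniteMeasure ν] (X : α → ℝ) (τ c : ℝ) {s : ℝ} (hs0 : 0 ≤ s)
    (h1 : Integrable (fun y => Real.exp (s * X y)) ν)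
    (h2 : ∫ y, Real.exp (s * X y) ∂ν ≤ Real.exp c) :
    ν {y | τ ≤ X y} ≤ ENNReal.ofReal (Real.exp (-s * τ + c)) := by
  have h3 := measure_ge_le_exp_mul_mgf (μ := ν) (X := X) τ hs0 h1
  rw [← ofReal_measureReal]
  apply ENNReal.ofReal_le_ofReal
  refine h3.trans ?_
  rw [Real.exp_add]
  gcongr
  exact h2

lemma weighted_sq_tail {ι : Type*} [Fintype ι] (τ : ℝ) {s : ℝ}
    (hs0 : 0 ≤ s) (hs : s ≤ 1 / 4) (b : ι → ℝ) (hb : ∀ i, |b i| ≤ 1) :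
    stdG ι {y | τ ≤ ∑ i, b i * (y i ^ 2 - 1)}
      ≤ ENNReal.ofReal (Real.exp (-s * τ + 4 * s ^ 2 * Fintype.card ι)) := by
  have hs' : |s| ≤ 1 / 4 := by rwa [abs_of_nonneg hs0]
  obtain ⟨h1, h2⟩ := exp_weighted_sq hs' b hb
  exact chernoff_of_integral_le (stdG ι) (fun y => ∑ i, b i * (y i ^ 2 - 1)) τ _ hs0 h1 h2

/-- Hanson–Wright type bound: after diagonalization a Gaussian quadratic form is a weighted sum of
independent `χ²₁` variables, to which the exponential Markov inequality applies. -/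
lemma quadForm_tail {ι : Type*} [Fintype ι] [DecidableEq ι] (B : Matrix ι ι ℝ)
    (hB : B.IsHermitian) (hbd : ∀ x : ι → ℝ, |x ⬝ᵥ B *ᵥ x| ≤ x ⬝ᵥ x) (τ : ℝ) {s : ℝ}
    (hs0 : 0 ≤ s) (hs : s ≤ 1 / 4) :
    stdG ι {x | τ ≤ |x ⬝ᵥ B *ᵥ x - B.trace|}
      ≤ ENNReal.ofReal (2 * Real.exp (-s * τ + 4 * s ^ 2 * Fintype.card ι)) := by
  have hb : ∀ i, |hB.eigenvalues i| ≤ 1 := fun i => by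
    have := hbd (hB.eigenvectorBasis i).ofLp
    rwa [eigenvalue_eq_quadForm, dotProduct_eigenbasis, if_pos rfl] at this
  have htr : B.trace = ∑ i, hB.eigenvalues i := by simpa using hB.trace_eq_sum_eigenvalues
  have hmeas : MeasurableSet {x : ι → ℝ | τ ≤ |x ⬝ᵥ B *ᵥ x - B.trace|} := by
    apply measurableSet_le measurable_const
    exact (Continuous.measurable (by fun_prop))
  rw [← stdG_map_eigenbasis hB, Measure.map_apply (by fun_prop) hmeas]
  have hset : (fun y : ι → ℝ => ∑ i, y i • (hB.eigenvectorBasis i).ofLp) ⁻¹'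
      {x | τ ≤ |x ⬝ᵥ B *ᵥ x - B.trace|}
      ⊆ {y | τ ≤ ∑ i, hB.eigenvalues i * (y i ^ 2 - 1)} ∪
        {y | τ ≤ ∑ i, (-hB.eigenvalues i) * (y i ^ 2 - 1)} := by
    intro y hy
    simp only [Set.mem_preimage, Set.mem_ofPred_eq, quadForm_eigenbasis, htr,
      ← Finset.sum_sub_distrib] at hy
    have e1 : ∑ i, (hB.eigenvalues i * y i ^ 2 - hB.eigenvalues i)
        = ∑ i, hB.eigenvalues i * (y i ^ 2 - 1) :=
      Finset.sum_congr rfl fun i _ => by ring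
    have e2 : ∑ i, (-hB.eigenvalues i) * (y i ^ 2 - 1)
        = -∑ i, hB.eigenvalues i * (y i ^ 2 - 1) := by
      rw [← Finset.sum_neg_distrib]; exact Finset.sum_congr rfl fun i _ => by ring
    rw [e1] at hy
    simp only [Set.mem_union, Set.mem_ofPred_eq, e2]
    exact le_abs.1 hy
  have hs' : |s| ≤ 1 / 4 := by rwa [abs_of_nonneg hs0]
  have one := fun b hb => weighted_sq_tail (ι := ι) τ hs0 hs b hb
  refine (measure_mono hset).trans ((measure_union_le _ _).trans ?_)
  refine (add_le_add (one _ hb) (one _ fun i => by rw [abs_neg]; exact hb i)).trans ?_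
  rw [← ENNReal.ofReal_add (by positivity) (by positivity), two_mul]

/-! ### Gaussian integration by parts and Slepian's comparison inequality -/

/-- Any subfamily (possibly reindexed) of a standard Gaussian family is standard Gaussian. -/
lemma stdG_map_comp {ι κ : Type*} [Fintype ι] [Fintype κ] {f : ι → κ}
    (hf : Function.Injective f) : (stdG κ).map (fun x i => x (f i)) = stdG ι := by
  classical
  refine (Measure.pi_eq fun s hs => ?_).symm
  rw [Measure.map_apply (by fun_prop) (MeasurableSet.univ_pi hs)]
  set t : κ → Set ℝ := fun k => if h : ∃ i, f i = k then s h.choose else Set.univ with ht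
  have htf : ∀ i, t (f i) = s i := fun i => by
    have h : ∃ j, f j = f i := ⟨i, rfl⟩
    simp only [ht, dif_pos h]
    rw [hf h.choose_spec]
  have hpre : (fun (x : κ → ℝ) i => x (f i)) ⁻¹' Set.univ.pi s = Set.univ.pi t := by
    ext x
    simp only [Set.mem_preimage, Set.mem_univ_pi]
    constructor
    · intro h k
      by_cases hk : ∃ i, f i = k
      · obtain ⟨i, rfl⟩ := hk
        rw [htf]; exact h i
      · simp [ht, dif_neg hk]
    · intro h i
      rw [← htf]; exact h (f i)
  rw [hpre, Measure.pi_pi]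
  have : ∏ i, gaussianReal 0 1 (s i) = ∏ k ∈ Finset.univ.image f, gaussianReal 0 1 (t k) := by
    rw [Finset.prod_image fun a _ b _ h => hf h]
    exact Finset.prod_congr rfl fun i _ => by rw [htf]
  rw [this]
  symm
  apply Finset.prod_subset (Finset.subset_univ _)
  intro k _ hk
  have : ¬ ∃ i, f i = k := by simpa using hk
  simp [ht, dif_neg this]

lemma hasDerivAt_gaussianPDFReal (x : ℝ) :
    HasDerivAt (gaussianPDFReal 0 1) (-x * gaussianPDFReal 0 1 x) x := by
  have h : gaussianPDFReal 0 1
      = fun x : ℝ => (Real.sqrt (2 * Real.pi))⁻¹ * Real.exp (-x ^ 2 / 2) := by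
    ext x; simp [gaussianPDFReal]
  rw [h]
  have h1 : HasDerivAt (fun x : ℝ => -x ^ 2 / 2) (-x) x := by
    have := ((hasDerivAt_pow 2 x).neg).div_const 2
    refine this.congr_deriv ?_
    push_cast; ring
  refine (h1.exp.const_mul (Real.sqrt (2 * Real.pi))⁻¹).congr_deriv ?_
  ring

lemma integrable_id_gaussianReal : Integrable (fun x : ℝ => x) (gaussianReal 0 1) :=
  (memLp_id_gaussianReal 1).integrable (by simp)

lemma stein_one {f f' : ℝ → ℝ} {C : ℝ} (hf : ∀ x, |f x| ≤ C) (hf' : ∀ x, |f' x| ≤ C)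
    (hd : ∀ x, HasDerivAt f (f' x) x) (hc : Continuous f') :
    ∫ x, x * f x ∂(gaussianReal 0 1) = ∫ x, f' x ∂(gaussianReal 0 1) := by
  have hcf : Continuous f := continuous_iff_continuousAt.2 fun x => (hd x).continuousAt
  have i0 : Integrable (gaussianPDFReal 0 1) := integrable_gaussianPDFReal 0 1
  have i1 : Integrable (fun x => x * gaussianPDFReal 0 1 x) := by
    have h := integrable_id_gaussianReal
    rw [gaussianReal_of_var_ne_zero _ one_ne_zero,
      integrable_withDensity_iff_integrable_smul' (measurable_gaussianPDF 0 1)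
        (ae_of_all _ fun x => gaussianPDF_lt_top)] at h
    refine h.congr (ae_of_all _ fun x => ?_)
    simp [toReal_gaussianPDF, mul_comm]
  have h := integral_mul_deriv_eq_deriv_mul_of_integrable
    (u := f) (v := gaussianPDFReal 0 1) (u' := f') (v' := fun x => -x * gaussianPDFReal 0 1 x)
    (fun x _ => hd x) (fun x _ => hasDerivAt_gaussianPDFReal x)
    (Integrable.bdd_mul (c := C) (by simpa using i1.neg) hcf.aestronglyMeasurable
      (ae_of_all _ hf))
    (Integrable.bdd_mul (c := C) i0 hc.aestronglyMeasurable (ae_of_all _ hf'))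
    (Integrable.bdd_mul (c := C) i0 hcf.aestronglyMeasurable (ae_of_all _ hf))
  rw [integral_gaussianReal_eq_integral_smul one_ne_zero,
    integral_gaussianReal_eq_integral_smul one_ne_zero]
  simp only [smul_eq_mul]
  have e1 : ∀ x, gaussianPDFReal 0 1 x * (x * f x) = -(f x * (-x * gaussianPDFReal 0 1 x)) :=
    fun x => by ring
  have e2 : ∀ x, gaussianPDFReal 0 1 x * f' x = f' x * gaussianPDFReal 0 1 x :=
    fun x => by ring
  simp_rw [e1, e2]
  rw [integral_neg, h, neg_neg]

lemma integrable_coord {ι : Type*} [Fintype ι] (l : ι) :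
    Integrable (fun x : ι → ℝ => x l) (stdG ι) := by
  exact integrable_comp_eval (μ := fun _ : ι => gaussianReal 0 1) (i := l)
    (f := fun x : ℝ => x) integrable_id_gaussianReal

lemma stein_fin {d : ℕ} (l : Fin (d + 1)) {f f' : (Fin (d + 1) → ℝ) → ℝ} {C : ℝ}
    (hf : ∀ x, |f x| ≤ C) (hf' : ∀ x, |f' x| ≤ C) (hcf : Continuous f) (hcf' : Continuous f')
    (hd : ∀ x t, HasDerivAt (fun t => f (Function.update x l t)) (f' (Function.update x l t)) t) :
    ∫ x, x l * f x ∂(stdG (Fin (d + 1))) = ∫ x, f' x ∂(stdG (Fin (d + 1))) := by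
  have hmp := (measurePreserving_piFinSuccAbove (fun _ : Fin (d + 1) => gaussianReal 0 1) l).symm
  have I1 : Integrable (fun x => x l * f x) (stdG (Fin (d + 1))) :=
    (integrable_coord l).mul_bdd (c := C) hcf.aestronglyMeasurable (ae_of_all _ hf)
  have I2 : Integrable f' (stdG (Fin (d + 1))) :=
    Integrable.of_bound hcf'.aestronglyMeasurable C (ae_of_all _ hf')
  rw [← hmp.integral_comp', ← hmp.integral_comp']
  rw [integral_prod_symm, integral_prod_symm]
  rotate_left
  · exact (hmp.integrable_comp_emb (MeasurableEquiv.measurableEmbedding _)).2 I2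
  · exact (hmp.integrable_comp_emb (MeasurableEquiv.measurableEmbedding _)).2 I1
  congr 1
  ext y
  simp only [MeasurableEquiv.piFinSuccAbove_symm_apply, Fin.insertNthEquiv_apply,
    Fin.insertNth_apply_same]
  refine stein_one (C := C) (fun x => hf _) (fun x => hf' _) (fun t => ?_) ?_
  · have := hd (l.insertNth (α := fun _ => ℝ) (0 : ℝ) y) t
    simp only [Fin.update_insertNth] at this
    exact this
  · have h := Continuous.finInsertNth (A := fun _ => ℝ) l continuous_id
      (continuous_const (y := y))
    exact hcf'.comp h

/-- Gaussian integration by parts in the coordinate `l`. -/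
lemma stein {ι : Type*} [Fintype ι] [DecidableEq ι] (l : ι) {f f' : (ι → ℝ) → ℝ} {C : ℝ}
    (hf : ∀ x, |f x| ≤ C) (hf' : ∀ x, |f' x| ≤ C) (hcf : Continuous f) (hcf' : Continuous f')
    (hd : ∀ x t, HasDerivAt (fun t => f (Function.update x l t)) (f' (Function.update x l t)) t) :
    ∫ x, x l * f x ∂(stdG ι) = ∫ x, f' x ∂(stdG ι) := by
  obtain ⟨d, hd'⟩ : ∃ d, Fintype.card ι = d + 1 :=
    ⟨Fintype.card ι - 1, by have := Fintype.card_pos_iff.2 ⟨l⟩; omega⟩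
  let e : ι ≃ Fin (d + 1) := (Fintype.equivFin ι).trans (finCongr hd')
  rw [← stdG_map_comp e.injective]
  have hm : Measurable (fun (x : Fin (d + 1) → ℝ) (i : ι) => x (e i)) := by fun_prop
  rw [integral_map hm.aemeasurable (by exact Continuous.aestronglyMeasurable (by fun_prop)),
    integral_map hm.aemeasurable (by exact Continuous.aestronglyMeasurable (by fun_prop))]
  refine stein_fin (C := C) (e l) (f := fun x => f (fun i => x (e i)))
    (f' := fun x => f' (fun i => x (e i))) (fun x => hf _) (fun x => hf' _)
    (by fun_prop) (by fun_prop) ?_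
  intro x t
  have hup : ∀ t, (fun i => Function.update x (e l) t (e i))
      = Function.update (fun i => x (e i)) l t := by
    intro t; ext i
    by_cases h : i = l
    · subst h; simp
    · rw [Function.update_of_ne h, Function.update_of_ne (fun h' => h (e.injective h'))]
  simp only [hup]
  exact hd _ t

/-- A smooth surrogate `exp (-∑ᵢ exp xᵢ)` for the indicator of `{max xᵢ < 0}`. -/
def gumb {T : Type*} [Fintype T] (x : T → ℝ) : ℝ := Real.exp (-∑ i, Real.exp (x i))

section gumb
variable {T : Type*} [Fintype T]

lemma gumb_pos (x : T → ℝ) : 0 < gumb x := Real.exp_pos _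

lemma gumb_le_one (x : T → ℝ) : gumb x ≤ 1 := by
  unfold gumb
  rw [Real.exp_le_one_iff, neg_nonpos]
  exact Finset.sum_nonneg fun i _ => (Real.exp_pos _).le

lemma exp_mul_gumb_le (x : T → ℝ) (i : T) : Real.exp (x i) * gumb x ≤ 1 := by
  have h1 : Real.exp (x i) ≤ ∑ i, Real.exp (x i) :=
    Finset.single_le_sum (f := fun i => Real.exp (x i)) (fun i _ => (Real.exp_pos _).le)
      (Finset.mem_univ i)
  set S := ∑ i, Real.exp (x i)
  have h2 := Real.add_one_le_exp S
  unfold gumb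
  rw [Real.exp_neg, ← div_eq_mul_inv, div_le_one (Real.exp_pos _)]
  linarith

lemma exp_mul_exp_mul_gumb_le (x : T → ℝ) (i j : T) :
    Real.exp (x i) * Real.exp (x j) * gumb x ≤ 2 := by
  have h1 : ∀ i, Real.exp (x i) ≤ ∑ i, Real.exp (x i) := fun i =>
    Finset.single_le_sum (f := fun i => Real.exp (x i)) (fun i _ => (Real.exp_pos _).le)
      (Finset.mem_univ i)
  have h0 : 0 ≤ ∑ i, Real.exp (x i) := (Real.exp_pos _).le.trans (h1 i)
  unfold gumb
  set S := ∑ i, Real.exp (x i)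
  have h2 := Real.quadratic_le_exp_of_nonneg h0
  rw [Real.exp_neg, ← div_eq_mul_inv, div_le_iff₀ (Real.exp_pos _)]
  have := mul_le_mul (h1 i) (h1 j) (Real.exp_pos _).le h0
  nlinarith

lemma hasDerivAt_gumb {x : ℝ → T → ℝ} {x' : T → ℝ} {t : ℝ}
    (hx : ∀ i, HasDerivAt (fun t => x t i) (x' i) t) :
    HasDerivAt (fun t => gumb (x t)) (-∑ i, x' i * (Real.exp (x t i) * gumb (x t))) t := by
  unfold gumb
  have h := (HasDerivAt.fun_sum (u := Finset.univ) fun i _ => (hx i).exp).fun_neg.exp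
  refine h.congr_deriv ?_
  simp only [Finset.mul_sum, mul_neg]
  congr 1
  exact Finset.sum_congr rfl fun i _ => by ring

lemma hasDerivAt_exp_mul_gumb {x : ℝ → T → ℝ} {x' : T → ℝ} {t : ℝ}
    (hx : ∀ i, HasDerivAt (fun t => x t i) (x' i) t) (i : T) :
    HasDerivAt (fun t => Real.exp (x t i) * gumb (x t))
      (x' i * (Real.exp (x t i) * gumb (x t))
        - ∑ j, x' j * (Real.exp (x t i) * Real.exp (x t j) * gumb (x t))) t := by
  refine ((hx i).exp.mul (hasDerivAt_gumb hx)).congr_deriv ?_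
  rw [mul_neg, Finset.mul_sum, sub_eq_add_neg]
  congr 1
  · ring
  · congr 1
    exact Finset.sum_congr rfl fun j _ => by ring

@[fun_prop]
lemma continuous_gumb : Continuous (gumb : (T → ℝ) → ℝ) := by
  unfold gumb; fun_prop

end gumb

lemma hasDerivAt_dotProduct_update {ι : Type*} [Fintype ι] [DecidableEq ι] (v x : ι → ℝ) (l : ι)
    (c t : ℝ) : HasDerivAt (fun t => v ⬝ᵥ Function.update x l t + c) (v l) t := by
  have h : ∀ t, v ⬝ᵥ Function.update x l t + c
      = v l * t + (∑ i ∈ Finset.univ.erase l, v i * x i + c) := by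
    intro t
    rw [dotProduct, ← Finset.add_sum_erase _ _ (Finset.mem_univ l), Function.update_self, add_assoc]
    congr 2
    exact Finset.sum_congr rfl fun i hi => by
      rw [Function.update_of_ne (Finset.ne_of_mem_erase hi)]
  simp_rw [h]
  exact (((hasDerivAt_id' t).const_mul (v l)).add_const _).congr_deriv (mul_one _)

lemma integrable_dotProduct {ι : Type*} [Fintype ι] (w : ι → ℝ) :
    Integrable (fun x : ι → ℝ => w ⬝ᵥ x) (stdG ι) := by
  simp only [dotProduct]
  exact integrable_finsetSum _ fun l _ => (integrable_coord l).const_mul _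

/-- Integration by parts against the gradient of `gumb` composed with an affine map. -/
lemma stein_gumb {T ι : Type*} [Fintype T] [Fintype ι] (v : T → ι → ℝ) (w : ι → ℝ)
    (c : ℝ) (i : T) :
    ∫ ξ, (w ⬝ᵥ ξ) * (Real.exp (v i ⬝ᵥ ξ + c) * gumb (fun j => v j ⬝ᵥ ξ + c)) ∂(stdG ι)
      = ∫ ξ, ((w ⬝ᵥ v i) * (Real.exp (v i ⬝ᵥ ξ + c) * gumb (fun j => v j ⬝ᵥ ξ + c))
        - ∑ j, (w ⬝ᵥ v j) * (Real.exp (v i ⬝ᵥ ξ + c) * Real.exp (v j ⬝ᵥ ξ + c)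
          * gumb (fun j => v j ⬝ᵥ ξ + c))) ∂(stdG ι) := by
  classical
  set f : (ι → ℝ) → ℝ := fun ξ => Real.exp (v i ⬝ᵥ ξ + c) * gumb (fun j => v j ⬝ᵥ ξ + c) with hf
  set f' : ι → (ι → ℝ) → ℝ := fun l ξ => v i l * f ξ
    - ∑ j, v j l * (Real.exp (v i ⬝ᵥ ξ + c) * Real.exp (v j ⬝ᵥ ξ + c)
          * gumb (fun j => v j ⬝ᵥ ξ + c)) with hf'
  have hcf : Continuous f := by rw [hf]; fun_prop
  have hcf' : ∀ l, Continuous (f' l) := by intro l; rw [hf']; fun_prop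
  have hfpos : ∀ ξ, 0 ≤ f ξ := fun ξ => mul_nonneg (Real.exp_pos _).le (gumb_pos _).le
  have hfb : ∀ ξ, |f ξ| ≤ 1 := fun ξ => by
    rw [abs_of_nonneg (hfpos ξ)]; exact exp_mul_gumb_le (fun j => v j ⬝ᵥ ξ + c) i
  have hfb' : ∀ l ξ, |f' l ξ| ≤ |v i l| + ∑ j, |v j l| * 2 := fun l ξ => by
    refine (abs_sub _ _).trans (add_le_add ?_ ((Finset.abs_sum_le_sum_abs _ _).trans
      (Finset.sum_le_sum fun j _ => ?_)))
    · rw [abs_mul]; exact mul_le_of_le_one_right (abs_nonneg _) (hfb ξ)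
    · rw [abs_mul]
      refine mul_le_mul_of_nonneg_left ?_ (abs_nonneg _)
      rw [abs_of_nonneg (by have := gumb_pos (fun j => v j ⬝ᵥ ξ + c); positivity)]
      exact exp_mul_exp_mul_gumb_le (fun j => v j ⬝ᵥ ξ + c) i j
  have hst : ∀ l, ∫ ξ, ξ l * f ξ ∂(stdG ι) = ∫ ξ, f' l ξ ∂(stdG ι) := by
    intro l
    refine stein (C := max 1 (|v i l| + ∑ j, |v j l| * 2)) l
      (fun x => (hfb x).trans (le_max_left _ _)) (fun x => (hfb' l x).trans (le_max_right _ _))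
      hcf (hcf' l) ?_
    intro x t
    exact hasDerivAt_exp_mul_gumb
      (x := fun t j => v j ⬝ᵥ Function.update x l t + c) (x' := fun j => v j l)
      (fun j => hasDerivAt_dotProduct_update (v j) x l c t) i
  have If : ∀ l, Integrable (fun ξ => ξ l * f ξ) (stdG ι) := fun l =>
    (integrable_coord l).mul_bdd (c := 1) hcf.aestronglyMeasurable (ae_of_all _ hfb)
  have If' : ∀ l, Integrable (f' l) (stdG ι) := fun l =>
    Integrable.of_bound (hcf' l).aestronglyMeasurable _ (ae_of_all _ (hfb' l))
  calc ∫ ξ, (w ⬝ᵥ ξ) * f ξ ∂(stdG ι) = ∫ ξ, ∑ l, w l * (ξ l * f ξ) ∂(stdG ι) := by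
        congr 1; ext ξ; rw [dotProduct, Finset.sum_mul]
        exact Finset.sum_congr rfl fun l _ => by ring
    _ = ∑ l, w l * ∫ ξ, f' l ξ ∂(stdG ι) := by
        rw [integral_finsetSum _ fun l _ => (If l).const_mul _]
        exact Finset.sum_congr rfl fun l _ => by rw [integral_const_mul, hst]
    _ = ∫ ξ, ∑ l, w l * f' l ξ ∂(stdG ι) := by
        rw [integral_finsetSum _ fun l _ => (If' l).const_mul _]
        exact Finset.sum_congr rfl fun l _ => by rw [integral_const_mul]
    _ = _ := by
        congr 1; ext ξ
        simp_rw [show ∀ j, w ⬝ᵥ v j = ∑ l, w l * v j l from fun _ => rfl]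
        simp only [hf', mul_sub, Finset.sum_sub_distrib, Finset.sum_mul, Finset.mul_sum]
        congr 1
        · rw [hf]
          exact Finset.sum_congr rfl fun l _ => by ring
        · rw [Finset.sum_comm]
          exact Finset.sum_congr rfl fun l _ => Finset.sum_congr rfl fun j _ => by ring

/-- Slepian's inequality for the smooth functional `gumb`: along the interpolation
`cos t · X + sin t · Y` of two independent centred Gaussian families with equal variances, the
derivative of the expectation has the sign of the covariance difference. -/
lemma slepian_gumb {T ι : Type*} [Fintype T] [Fintype ι] (a b : T → ι → ℝ) (c : ℝ)
    (horth : ∀ i j, a i ⬝ᵥ b j = 0) (hle : ∀ i j, b i ⬝ᵥ b j ≤ a i ⬝ᵥ a j)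
    (heq : ∀ i, a i ⬝ᵥ a i = b i ⬝ᵥ b i) :
    ∫ ξ, gumb (fun i => b i ⬝ᵥ ξ + c) ∂(stdG ι) ≤ ∫ ξ, gumb (fun i => a i ⬝ᵥ ξ + c) ∂(stdG ι) := by
  let v : ℝ → T → ι → ℝ := fun t i => Real.cos t • a i + Real.sin t • b i
  let w : ℝ → T → ι → ℝ := fun t i => -Real.sin t • a i + Real.cos t • b i
  let G : ℝ → (ι → ℝ) → ℝ := fun t ξ => gumb (fun i => v t i ⬝ᵥ ξ + c)
  let E : ℝ → (ι → ℝ) → T → ℝ := fun t ξ i => Real.exp (v t i ⬝ᵥ ξ + c)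
  have hvw : ∀ t i j, w t i ⬝ᵥ v t j
      = -(Real.sin t * Real.cos t * (a i ⬝ᵥ a j - b i ⬝ᵥ b j)) := by
    intro t i j
    have h : b i ⬝ᵥ a j = 0 := by rw [dotProduct_comm]; exact horth j i
    simp only [v, w, add_dotProduct, dotProduct_add, smul_dotProduct, dotProduct_smul, horth,
      smul_eq_mul, neg_smul, neg_dotProduct, h]
    ring
  have hcG : ∀ t, Continuous (G t) := fun t => by simp only [G]; fun_prop
  have hder : ∀ t, HasDerivAt (fun t => ∫ ξ, G t ξ ∂(stdG ι))
      (∫ ξ, -∑ i, (w t i ⬝ᵥ ξ) * (E t ξ i * G t ξ) ∂(stdG ι)) t := by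
    intro t
    refine (hasDerivAt_integral_of_dominated_loc_of_deriv_le
      (F' := fun t ξ => -∑ i, (w t i ⬝ᵥ ξ) * (E t ξ i * G t ξ))
      (bound := fun ξ => ∑ i, (|a i ⬝ᵥ ξ| + |b i ⬝ᵥ ξ|)) (s := Set.univ) univ_mem
      (Eventually.of_forall fun t => (hcG t).aestronglyMeasurable)
      (Integrable.of_bound (hcG t).aestronglyMeasurable 1 (ae_of_all _ fun ξ => ?_)) ?_
      (ae_of_all _ fun ξ t _ => ?_) ?_ (ae_of_all _ fun ξ t _ => ?_)).2
    · rw [Real.norm_eq_abs, abs_of_pos (gumb_pos _)]; exact gumb_le_one _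
    · apply Continuous.aestronglyMeasurable
      simp only [E, G]; fun_prop
    · rw [norm_neg]
      refine (norm_sum_le _ _).trans (Finset.sum_le_sum fun i _ => ?_)
      rw [norm_mul, Real.norm_eq_abs, Real.norm_eq_abs]
      have h1 : |E t ξ i * G t ξ| ≤ 1 := by
        rw [abs_of_pos (mul_pos (Real.exp_pos _) (gumb_pos _))]
        exact exp_mul_gumb_le (fun i => v t i ⬝ᵥ ξ + c) i
      have h2 : |w t i ⬝ᵥ ξ| ≤ |a i ⬝ᵥ ξ| + |b i ⬝ᵥ ξ| := by
        simp only [w, add_dotProduct, smul_dotProduct, smul_eq_mul]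
        refine (abs_add_le _ _).trans (add_le_add ?_ ?_) <;> rw [abs_mul]
        · rw [abs_neg]; exact mul_le_of_le_one_left (abs_nonneg _) (Real.abs_sin_le_one t)
        · exact mul_le_of_le_one_left (abs_nonneg _) (Real.abs_cos_le_one t)
      exact (mul_le_of_le_one_right (abs_nonneg _) h1).trans h2
    · exact integrable_finsetSum _ fun i _ =>
        (integrable_dotProduct (a i)).abs.add (integrable_dotProduct (b i)).abs
    · refine hasDerivAt_gumb (x := fun t i => v t i ⬝ᵥ ξ + c) (x' := fun i => w t i ⬝ᵥ ξ)
        fun i => ?_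
      simp only [v, w, add_dotProduct, smul_dotProduct, smul_eq_mul]
      exact ((((Real.hasDerivAt_cos t).mul_const _).fun_add
        ((Real.hasDerivAt_sin t).mul_const _)).add_const c)
  have hanti : AntitoneOn (fun t => ∫ ξ, G t ξ ∂(stdG ι)) (Set.Icc 0 (Real.pi / 2)) := by
    refine antitoneOn_of_deriv_nonpos (convex_Icc _ _)
      (fun t _ => (hder t).continuousAt.continuousWithinAt)
      (fun t _ => (hder t).differentiableAt.differentiableWithinAt) fun t ht => ?_
    rw [interior_Icc] at ht
    have hsin : 0 ≤ Real.sin t :=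
      (Real.sin_pos_of_pos_of_lt_pi ht.1 (by linarith [ht.2, Real.pi_pos])).le
    have hcos : 0 ≤ Real.cos t := (Real.cos_pos_of_mem_Ioo ⟨by linarith [ht.1, Real.pi_pos], ht.2⟩).le
    rw [(hder t).deriv, integral_neg, neg_nonpos, integral_finsetSum]
    · refine Finset.sum_nonneg fun i _ => ?_
      have := stein_gumb (v t) (w t i) c i
      simp only [E, G]
      rw [this]
      refine integral_nonneg fun ξ => ?_
      simp only [hvw, heq, sub_self, mul_zero, neg_zero, zero_mul, zero_sub, Pi.zero_apply]
      rw [neg_nonneg]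
      refine Finset.sum_nonpos fun j _ => mul_nonpos_of_nonpos_of_nonneg ?_ ?_
      · rw [neg_nonpos]
        exact mul_nonneg (mul_nonneg hsin hcos)
          (by have := hle i j; rw [sub_nonneg]; exact this)
      · have := gumb_pos (fun j => v t j ⬝ᵥ ξ + c); positivity
    · intro i _
      refine (integrable_dotProduct (w t i)).mul_bdd (c := 1)
        (by apply Continuous.aestronglyMeasurable; simp only [E, G]; fun_prop)
        (ae_of_all _ fun ξ => ?_)
      rw [Real.norm_eq_abs, abs_of_pos (mul_pos (Real.exp_pos _) (gumb_pos _))]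
      exact exp_mul_gumb_le (fun i => v t i ⬝ᵥ ξ + c) i
  have h := hanti (a := 0) (b := Real.pi / 2) ⟨le_rfl, by positivity⟩ ⟨by positivity, le_rfl⟩
    (by positivity)
  simpa [G, v] using h

/-- Slepian's inequality: the family with the larger covariances has the smaller maximum. -/
lemma slepian {T ι : Type*} [Fintype T] [Fintype ι] (a b : T → ι → ℝ)
    (horth : ∀ i j, a i ⬝ᵥ b j = 0) (hle : ∀ i j, b i ⬝ᵥ b j ≤ a i ⬝ᵥ a j)
    (heq : ∀ i, a i ⬝ᵥ a i = b i ⬝ᵥ b i) {s s' : ℝ} (hss : s < s') :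
    (stdG ι) {ξ | ∃ i, s' ≤ a i ⬝ᵥ ξ} ≤ (stdG ι) {ξ | ∃ i, s < b i ⬝ᵥ ξ} := by
  set m := (s + s') / 2 with hm
  set δ := (s' - s) / 2 with hδ
  have hδ0 : 0 < δ := by rw [hδ]; linarith
  have mA : MeasurableSet {ξ : ι → ℝ | ∃ i, s' ≤ a i ⬝ᵥ ξ} := by
    rw [Set.ofPred_exists]
    exact MeasurableSet.iUnion fun i => measurableSet_le measurable_const
      (Continuous.measurable (by fun_prop))
  have mB : MeasurableSet {ξ : ι → ℝ | ∃ i, s < b i ⬝ᵥ ξ} := by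
    rw [Set.ofPred_exists]
    exact MeasurableSet.iUnion fun i => measurableSet_lt measurable_const
      (Continuous.measurable (by fun_prop))
  set A := {ξ : ι → ℝ | ∃ i, s' ≤ a i ⬝ᵥ ξ}
  set B := {ξ : ι → ℝ | ∃ i, s < b i ⬝ᵥ ξ}
  have key : ∀ β : ℝ, 0 < β → (stdG ι).real A * (1 - Real.exp (-Real.exp (β * δ)))
      ≤ (stdG ι).real B + (Fintype.card T) * Real.exp (-(β * δ)) := by
    intro β hβ
    have h := slepian_gumb (fun i => β • a i) (fun i => β • b i) (-(β * m))
      (by intro i j; simp [horth]) (by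
        intro i j
        simp only [smul_dotProduct, dotProduct_smul, smul_eq_mul]
        have := hle i j
        gcongr) (by intro i; simp [heq])
    simp only [smul_dotProduct, smul_eq_mul] at h
    set FA : (ι → ℝ) → ℝ := fun ξ => gumb fun i => β * (a i ⬝ᵥ ξ) + -(β * m) with hFA
    set FB : (ι → ℝ) → ℝ := fun ξ => gumb fun i => β * (b i ⬝ᵥ ξ) + -(β * m) with hFB
    have IA : Integrable FA (stdG ι) := Integrable.of_bound
      (Continuous.aestronglyMeasurable (by rw [hFA]; fun_prop)) 1 (ae_of_all _ fun ξ => by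
        rw [Real.norm_eq_abs, abs_of_pos (gumb_pos _)]; exact gumb_le_one _)
    have IB : Integrable FB (stdG ι) := Integrable.of_bound
      (Continuous.aestronglyMeasurable (by rw [hFB]; fun_prop)) 1 (ae_of_all _ fun ξ => by
        rw [Real.norm_eq_abs, abs_of_pos (gumb_pos _)]; exact gumb_le_one _)
    have h1 : ∫ ξ, FA ξ ∂(stdG ι)
        ≤ ∫ ξ, (1 - A.indicator (fun _ => 1 - Real.exp (-Real.exp (β * δ))) ξ) ∂(stdG ι) := by
      refine integral_mono IA ((integrable_const _).sub ((integrable_const _).indicator mA))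
        fun ξ => ?_
      by_cases hξ : ξ ∈ A
      · simp only [Set.indicator_of_mem hξ, sub_sub_cancel]
        obtain ⟨i, hi⟩ := hξ
        simp only [hFA, gumb]
        rw [Real.exp_le_exp, neg_le_neg_iff]
        refine le_trans ?_ (Finset.single_le_sum
          (f := fun i => Real.exp (β * (a i ⬝ᵥ ξ) + -(β * m)))
          (fun i _ => (Real.exp_pos _).le) (Finset.mem_univ i))
        rw [Real.exp_le_exp]
        have : δ ≤ a i ⬝ᵥ ξ - m := by rw [hδ, hm]; linarith
        nlinarith
      · simp only [Set.indicator_of_notMem hξ, sub_zero]; exact gumb_le_one _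
    have h2 : ∫ ξ, (1 - (B.indicator (fun _ => (1 : ℝ)) ξ
        + (Fintype.card T) * Real.exp (-(β * δ)))) ∂(stdG ι) ≤ ∫ ξ, FB ξ ∂(stdG ι) := by
      refine integral_mono ((integrable_const _).sub
        (((integrable_const _).indicator mB).add (integrable_const _))) IB fun ξ => ?_
      by_cases hξ : ξ ∈ B
      · simp only [Set.indicator_of_mem hξ]
        have := gumb_pos fun i => β * (b i ⬝ᵥ ξ) + -(β * m)
        have : 0 ≤ (Fintype.card T) * Real.exp (-(β * δ)) := by positivity
        simp only [hFB]
        linarith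
      · simp only [Set.indicator_of_notMem hξ, zero_add, hFB, gumb]
        have hB : ∀ i, b i ⬝ᵥ ξ ≤ s := by
          intro i; by_contra hc; exact hξ ⟨i, not_le.1 hc⟩
        refine le_trans ?_ (Real.one_sub_le_exp_neg _)
        have : ∑ i, Real.exp (β * (b i ⬝ᵥ ξ) + -(β * m))
            ≤ ∑ _i : T, Real.exp (-(β * δ)) := by
          refine Finset.sum_le_sum fun i _ => Real.exp_le_exp.2 ?_
          have : b i ⬝ᵥ ξ - m ≤ -δ := by rw [hδ, hm]; linarith [hB i]
          nlinarith
        rw [Finset.sum_const, Finset.card_univ, nsmul_eq_mul] at this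
        linarith
    have h3 := (h2.trans h).trans h1
    rw [integral_sub (integrable_const _) (((integrable_const _).indicator mB).add
      (integrable_const _)), integral_sub (integrable_const _)
      ((integrable_const _).indicator mA), integral_add ((integrable_const _).indicator mB)
      (integrable_const _), integral_indicator_const _ mA, integral_indicator_const _ mB] at h3
    simp only [integral_const, probReal_univ, smul_eq_mul, one_mul, mul_one] at h3
    linarith
  have hlim : (stdG ι).real A ≤ (stdG ι).real B := by
    have t1 : Tendsto (fun β : ℝ => β * δ) atTop atTop :=
      tendsto_id.atTop_mul_const hδ0
    have t2 : Tendsto (fun β : ℝ => Real.exp (-(β * δ))) atTop (𝓝 0) :=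
      Real.tendsto_exp_neg_atTop_nhds_zero.comp t1
    have t3 : Tendsto (fun β : ℝ => Real.exp (-Real.exp (β * δ))) atTop (𝓝 0) :=
      Real.tendsto_exp_neg_atTop_nhds_zero.comp (Real.tendsto_exp_atTop.comp t1)
    have t4 := (t3.const_sub 1).const_mul ((stdG ι).real A)
    have t5 := (t2.const_mul (Fintype.card T : ℝ)).const_add ((stdG ι).real B)
    have := le_of_tendsto_of_tendsto t4 t5 ((eventually_gt_atTop 0).mono fun β hβ => key β hβ)
    simpa using this
  exact (ENNReal.toReal_le_toReal (measure_ne_top _ _) (measure_ne_top _ _)).1 hlim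

/-! ### The largest singular value of a Gaussian matrix -/

lemma stdG_sum (A B : Type*) [Fintype A] [Fintype B] :
    (stdG (A ⊕ B)).map (fun ξ => (fun i => ξ (Sum.inl i), fun j => ξ (Sum.inr j)))
      = (stdG A).prod (stdG B) :=
  (measurePreserving_sumPiEquivProdPi (fun _ : A ⊕ B => gaussianReal 0 1)).map_eq

/-- Inverse of the probability that a standard normal variable is nonnegative. -/
def kappaG : ENNReal := (gaussianReal 0 1 (Set.Ici 0))⁻¹

lemma gaussian_Ici_ne_zero : gaussianReal 0 1 (Set.Ici 0) ≠ 0 := by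
  intro h
  have := gaussianReal_absolutelyContinuous' 0 (one_ne_zero (α := NNReal)) h
  simp at this

lemma kappaG_ne_top : kappaG ≠ ⊤ := ENNReal.inv_ne_top.2 gaussian_Ici_ne_zero

lemma dot_sq_le {J : Type*} [Fintype J] (u v : J → ℝ) : (u ⬝ᵥ v) ^ 2 ≤ (u ⬝ᵥ u) * (v ⬝ᵥ v) := by
  have := Finset.sum_mul_sq_le_sq_mul_sq Finset.univ u v
  simpa [dotProduct, sq] using this

lemma dot_le_of_sq_le {J : Type*} [Fintype J] (u v : J → ℝ) {r : ℝ} (hr : 0 ≤ r)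
    (hu : u ⬝ᵥ u = 1) (hv : v ⬝ᵥ v ≤ r ^ 2) : u ⬝ᵥ v ≤ r := by
  have := dot_sq_le u v
  rw [hu, one_mul] at this
  exact abs_le_of_sq_le_sq' (this.trans hv) hr |>.2

lemma dot_le_one {J : Type*} [Fintype J] (u v : J → ℝ) (hu : u ⬝ᵥ u = 1) (hv : v ⬝ᵥ v = 1) :
    u ⬝ᵥ v ≤ 1 :=
  dot_le_of_sq_le u v zero_le_one hu (by rw [hv]; norm_num)

lemma measurableSet_lt_dot {J : Type*} [Fintype J] (r : ℝ) :
    MeasurableSet {g : J → ℝ | r < g ⬝ᵥ g} :=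
  measurableSet_lt measurable_const (Continuous.measurable (by fun_prop))

/-- Chevet's inequality in probabilistic form, for finitely many pairs of unit vectors: compare
`yᵀWx + g₀` with `g·y + h·x`; the auxiliary variable `g₀` equalizes the variances. -/
lemma chevet_finite {T N Q : Type*} [Fintype T] [Fintype N] [Fintype Q]
    (x : T → Q → ℝ) (y : T → N → ℝ) (hx : ∀ t, x t ⬝ᵥ x t = 1) (hy : ∀ t, y t ⬝ᵥ y t = 1)
    {r₁ r₂ s' : ℝ} (h₁ : 0 ≤ r₁) (h₂ : 0 ≤ r₂) (hs : r₁ + r₂ < s') :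
    stdG (N × Q) {w | ∃ t, s' ≤ ∑ q : N × Q, y t q.1 * x t q.2 * w q}
      ≤ kappaG * (stdG N {g | r₁ ^ 2 < g ⬝ᵥ g} + stdG Q {h | r₂ ^ 2 < h ⬝ᵥ h}) := by
  let a : T → ((N × Q) ⊕ Unit) ⊕ (N ⊕ Q) → ℝ := fun t =>
    Sum.elim (Sum.elim (fun q => y t q.1 * x t q.2) fun _ => 1) 0
  let b : T → ((N × Q) ⊕ Unit) ⊕ (N ⊕ Q) → ℝ := fun t =>
    Sum.elim 0 (Sum.elim (y t) (x t))
  have haa : ∀ t t', a t ⬝ᵥ a t' = (y t ⬝ᵥ y t') * (x t ⬝ᵥ x t') + 1 := by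
    intro t t'
    simp only [a, sumElim_dotProduct_sumElim, zero_dotProduct, add_zero]
    simp only [dotProduct, Fintype.sum_prod_type, Finset.sum_mul_sum]
    simp only [Finset.univ_unique, mul_one, Finset.sum_singleton, add_left_inj]
    exact Finset.sum_congr rfl fun i _ => Finset.sum_congr rfl fun j _ => by ring
  have hbb : ∀ t t', b t ⬝ᵥ b t' = y t ⬝ᵥ y t' + x t ⬝ᵥ x t' := by
    intro t t'
    simp only [b, sumElim_dotProduct_sumElim, zero_dotProduct, zero_add]
  have hsl := slepian a b (by intro i j; simp [a, b, sumElim_dotProduct_sumElim])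
    (by
      intro i j
      rw [haa, hbb]
      nlinarith [dot_le_one (y i) (y j) (hy i) (hy j), dot_le_one (x i) (x j) (hx i) (hx j)])
    (by intro i; rw [haa, hbb, hx, hy]; norm_num) hs
  have mE : MeasurableSet {w : N × Q → ℝ | ∃ t, s' ≤ ∑ q : N × Q, y t q.1 * x t q.2 * w q} := by
    rw [Set.ofPred_exists]
    exact MeasurableSet.iUnion fun i => measurableSet_le measurable_const
      (Continuous.measurable (by fun_prop))
  set E := {w : N × Q → ℝ | ∃ t, s' ≤ ∑ q : N × Q, y t q.1 * x t q.2 * w q} with hE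
  have mU : MeasurableSet {g : Unit → ℝ | 0 ≤ g ()} :=
    measurableSet_le measurable_const (measurable_pi_apply _)
  have hU : stdG Unit {g | 0 ≤ g ()} = gaussianReal 0 1 (Set.Ici 0) := by
    have := (measurePreserving_eval (fun _ : Unit => gaussianReal 0 1) ()).measure_preimage
      (measurableSet_Ici (a := (0 : ℝ))).nullMeasurableSet
    rw [← this]; rfl
  have hleft : stdG (N × Q) E * gaussianReal 0 1 (Set.Ici 0)
      ≤ stdG _ {ξ | ∃ t, s' ≤ a t ⬝ᵥ ξ} := by
    rw [← hU, ← Measure.prod_prod, ← stdG_sum, ← stdG_map_comp (κ := ((N × Q) ⊕ Unit) ⊕ (N ⊕ Q))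
      (f := Sum.inl) Sum.inl_injective, Measure.map_map (by fun_prop) (by fun_prop),
      Measure.map_apply (by fun_prop) (mE.prod mU)]
    apply measure_mono
    rintro ξ ⟨⟨t, ht⟩, h0⟩
    refine ⟨t, ?_⟩
    simp only [Function.comp, Set.mem_ofPred_eq] at ht h0
    simp only [a, dotProduct, Fintype.sum_sum_type, Sum.elim_inl, Sum.elim_inr, Pi.zero_apply,
      zero_mul, Finset.sum_const_zero, add_zero, one_mul, Finset.univ_unique,
      Finset.sum_singleton]
    exact ht.trans (le_add_of_nonneg_right h0)
  have hright : stdG _ {ξ | ∃ t, r₁ + r₂ < b t ⬝ᵥ ξ}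
      ≤ stdG N {g | r₁ ^ 2 < g ⬝ᵥ g} + stdG Q {h | r₂ ^ 2 < h ⬝ᵥ h} := by
    rw [← stdG_map_comp (ι := N) (κ := ((N × Q) ⊕ Unit) ⊕ (N ⊕ Q))
        (f := fun i => Sum.inr (Sum.inl i)) (fun i j h => by simpa using h),
      ← stdG_map_comp (ι := Q) (κ := ((N × Q) ⊕ Unit) ⊕ (N ⊕ Q))
        (f := fun i => Sum.inr (Sum.inr i)) (fun i j h => by simpa using h),
      Measure.map_apply (by fun_prop) (measurableSet_lt_dot _), Measure.map_apply (by fun_prop) (measurableSet_lt_dot _)]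
    refine le_trans (measure_mono ?_) (measure_union_le _ _)
    rintro ξ ⟨t, ht⟩
    by_contra hc
    simp only [Set.mem_union, Set.mem_preimage, Set.mem_ofPred_eq, not_or, not_lt] at hc
    have e1 := dot_le_of_sq_le (y t) _ h₁ (hy t) hc.1
    have e2 := dot_le_of_sq_le (x t) _ h₂ (hx t) hc.2
    have : b t ⬝ᵥ ξ = (y t ⬝ᵥ fun i => ξ (Sum.inr (Sum.inl i)))
        + (x t ⬝ᵥ fun i => ξ (Sum.inr (Sum.inr i))) := by
      simp only [b, dotProduct, Fintype.sum_sum_type, Sum.elim_inl, Sum.elim_inr, Pi.zero_apply,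
        zero_mul, Finset.sum_const_zero, zero_add]
    rw [this] at ht
    linarith
  have hfin := (hleft.trans hsl).trans hright
  calc stdG (N × Q) E = kappaG * (stdG (N × Q) E * gaussianReal 0 1 (Set.Ici 0)) := by
        rw [kappaG, mul_left_comm, ENNReal.inv_mul_cancel gaussian_Ici_ne_zero
          (measure_ne_top _ _), mul_one]
    _ ≤ _ := by gcongr

/-- Chevet's inequality for the operator norm, by exhausting a countable dense set of pairs. -/
lemma chevet {N Q : Type*} [Fintype N] [Fintype Q]
    {r₁ r₂ s' : ℝ} (h₁ : 0 ≤ r₁) (h₂ : 0 ≤ r₂) (hs : r₁ + r₂ < s') :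
    stdG (N × Q) {w | ∃ (x : Q → ℝ) (y : N → ℝ), x ⬝ᵥ x = 1 ∧ y ⬝ᵥ y = 1 ∧
        s' < ∑ q : N × Q, y q.1 * x q.2 * w q}
      ≤ kappaG * (stdG N {g | r₁ ^ 2 < g ⬝ᵥ g} + stdG Q {h | r₂ ^ 2 < h ⬝ᵥ h}) := by
  let K : Set ((Q → ℝ) × (N → ℝ)) := {p | p.1 ⬝ᵥ p.1 = 1 ∧ p.2 ⬝ᵥ p.2 = 1}
  rcases isEmpty_or_nonempty K with hK | hK
  · have : {w : N × Q → ℝ | ∃ (x : Q → ℝ) (y : N → ℝ), x ⬝ᵥ x = 1 ∧ y ⬝ᵥ y = 1 ∧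
        s' < ∑ q : N × Q, y q.1 * x q.2 * w q} = ∅ := by
      ext w
      simp only [Set.mem_ofPred_eq, Set.mem_empty_iff_false, iff_false]
      rintro ⟨x, y, hx, hy, -⟩
      exact hK.elim ⟨(x, y), hx, hy⟩
    rw [this]; simp
  · let D : ℕ → K := TopologicalSpace.denseSeq K
    have hD : DenseRange D := TopologicalSpace.denseRange_denseSeq K
    let A : ℕ → Set (N × Q → ℝ) := fun n => {w | ∃ t : Fin n,
      s' ≤ ∑ q : N × Q, (D t).1.2 q.1 * (D t).1.1 q.2 * w q}
    have hmono : Monotone A := by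
      rintro m n hmn w ⟨t, ht⟩
      exact ⟨⟨t, t.2.trans_le hmn⟩, ht⟩
    refine (measure_mono (t := ⋃ n, A n) ?_).trans ?_
    · rintro w ⟨x, y, hx, hy, hw⟩
      have hopen : IsOpen {p : K | s' < ∑ q : N × Q, p.1.2 q.1 * p.1.1 q.2 * w q} :=
        isOpen_lt continuous_const (by fun_prop)
      obtain ⟨n, hn⟩ := hD.exists_mem_open hopen ⟨⟨(x, y), hx, hy⟩, hw⟩
      exact Set.mem_iUnion.2 ⟨n + 1, ⟨n, n.lt_succ_self⟩, hn.le⟩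
    · rw [hmono.measure_iUnion]
      refine iSup_le fun n => ?_
      exact chevet_finite (fun t : Fin n => (D t).1.1) (fun t : Fin n => (D t).1.2)
        (fun t => (D t).2.1) (fun t => (D t).2.2) h₁ h₂ hs

/-! ### Almost sure bounds along the sequence -/

/-- Exponential rate obtained from `quadForm_tail` for deviations `η n` in dimension at most
`L n`. -/
def cRate (η L : ℝ) : ℝ := min (1 / 4) (η / (8 * L)) * η / 2

lemma cRate_pos {η L : ℝ} (hη : 0 < η) (hL : 0 < L) : 0 < cRate η L := by
  unfold cRate
  have : 0 < min (1 / 4) (η / (8 * L)) := lt_min (by norm_num) (by positivity)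
  positivity

lemma quadForm_tail_rate {ι : Type*} [Fintype ι] [DecidableEq ι] (B : Matrix ι ι ℝ)
    (hB : B.IsHermitian) (hbd : ∀ x : ι → ℝ, |x ⬝ᵥ B *ᵥ x| ≤ x ⬝ᵥ x) {η L r τ : ℝ}
    (hη : 0 < η) (hL : 0 < L) (hr : 0 ≤ r) (hτ : η * r ≤ τ) (hcard : (Fintype.card ι : ℝ) ≤ L * r) :
    stdG ι {x | τ ≤ |x ⬝ᵥ B *ᵥ x - B.trace|}
      ≤ ENNReal.ofReal (2 * Real.exp (-(cRate η L * r))) := by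
  set s := min (1 / 4) (η / (8 * L)) with hs
  have hs0 : 0 < s := lt_min (by norm_num) (by positivity)
  refine (quadForm_tail B hB hbd τ hs0.le (min_le_left _ _)).trans
    (ENNReal.ofReal_le_ofReal ?_)
  gcongr
  have h1 : s * (8 * L) ≤ η := by
    rw [← le_div_iff₀ (by positivity)]; exact min_le_right _ _
  have h2 : cRate η L = s * η / 2 := rfl
  rw [h2]
  have h3 : s * (η * r) ≤ s * τ := by gcongr
  have h4 : 4 * s ^ 2 * (Fintype.card ι : ℝ) ≤ 4 * s ^ 2 * (L * r) := by gcongr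
  have h5 : s * r * (s * (8 * L)) ≤ s * r * η := by gcongr
  nlinarith

lemma norm_tail_rate {ι : Type*} [Fintype ι] {η L r τ : ℝ}
    (hη : 0 < η) (hL : 0 < L) (hr : 0 ≤ r) (hτ : η * r ≤ τ - Fintype.card ι)
    (hcard : (Fintype.card ι : ℝ) ≤ L * r) :
    stdG ι {x | τ < x ⬝ᵥ x} ≤ ENNReal.ofReal (2 * Real.exp (-(cRate η L * r))) := by
  classical
  refine (measure_mono ?_).trans (quadForm_tail_rate (1 : Matrix ι ι ℝ) Matrix.isHermitian_one
    (fun x => ?_) hη hL hr hτ hcard)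
  · intro x hx
    simp only [Set.mem_ofPred_eq, one_mulVec, trace_one] at hx ⊢
    exact le_trans (by linarith) (le_abs_self _)
  · rw [one_mulVec, abs_of_nonneg]
    exact Finset.sum_nonneg fun i _ => mul_self_nonneg _

lemma IIDGaussian.measure_le {Ω ι : Type*} [MeasurableSpace Ω] [Fintype ι] {P : Measure Ω}
    {X : Ω → ι → ℝ} (h : IIDGaussian P X 1) (B : Set (ι → ℝ)) :
    P {ω | X ω ∈ B} ≤ stdG ι B := by
  have hX : AEMeasurable X P := by
    by_contra hc
    have h0 : Measure.map X P = 0 := Measure.map_of_not_aemeasurable hc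
    unfold IIDGaussian at h
    rw [h0] at h
    exact IsProbabilityMeasure.ne_zero (stdG ι) h.symm
  calc P {ω | X ω ∈ B} ≤ (P.map X) B := Measure.le_map_apply hX B
    _ = stdG ι B := by rw [h]

/-- Borel–Cantelli with polynomial-times-exponentially small probabilities. -/
lemma ae_eventually_of_exp_bound {Ω : Type*} [MeasurableSpace Ω] {P : Measure Ω}
    [IsFiniteMeasure P] {A : ℕ → Set Ω} {K c : ℝ} (m : ℕ) (hc : 0 < c)
    (h : ∀ᶠ n : ℕ in atTop,
      P (A n) ≤ ENNReal.ofReal (K * ((n : ℝ) ^ m * Real.exp (-c * n)))) :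
    ∀ᵐ ω ∂P, ∀ᶠ n in atTop, ω ∉ A n := by
  obtain ⟨n₀, hn₀⟩ := eventually_atTop.1 h
  have hsum : Summable fun n : ℕ => K * ((n : ℝ) ^ m * Real.exp (-c * n)) :=
    (Real.summable_pow_mul_exp_neg_nat_mul m hc).mul_left K
  have h1 : ∑' n, P (A (n + n₀)) ≠ ⊤ := by
    refine ne_top_of_le_ne_top ?_ (ENNReal.tsum_le_tsum fun n => hn₀ (n + n₀) (by omega))
    have := ((summable_nat_add_iff n₀).2 hsum).tsum_ofReal_ne_top
    exact this
  filter_upwards [ae_eventually_notMem h1] with ω hω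
  obtain ⟨n₁, hn₁⟩ := eventually_atTop.1 hω
  refine eventually_atTop.2 ⟨n₁ + n₀, fun n hn => ?_⟩
  have := hn₁ (n - n₀) (by omega)
  rwa [Nat.sub_add_cancel (by omega)] at this

lemma dot_self_nonneg {J : Type*} [Fintype J] (u : J → ℝ) : 0 ≤ u ⬝ᵥ u :=
  Finset.sum_nonneg fun _ _ => mul_self_nonneg _

lemma dot_mulVec_gram {N Q : Type*} [Fintype N] [Fintype Q] (W : Matrix N Q ℝ) (x : Q → ℝ) :
    x ⬝ᵥ (Wᵀ * W) *ᵥ x = (W *ᵥ x) ⬝ᵥ (W *ᵥ x) := by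
  rw [← mulVec_mulVec, dotProduct_mulVec, vecMul_transpose]

/-- A violation of the bound `WᵀW ≤ s²` is witnessed by a pair of unit vectors. -/
lemma exists_unit_of_gram_gt {N Q : Type*} [Fintype N] [Fintype Q] (W : Matrix N Q ℝ)
    {s : ℝ} {x : Q → ℝ} (hx : s ^ 2 * (x ⬝ᵥ x) < x ⬝ᵥ (Wᵀ * W) *ᵥ x) :
    ∃ (x : Q → ℝ) (y : N → ℝ), x ⬝ᵥ x = 1 ∧ y ⬝ᵥ y = 1 ∧
      s < ∑ q : N × Q, y q.1 * x q.2 * matEntries W q := by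
  rw [dot_mulVec_gram] at hx
  have hx0 : 0 < x ⬝ᵥ x := by
    rcases (dot_self_nonneg x).lt_or_eq with h | h
    · exact h
    · rw [dotProduct_self_eq_zero.1 h.symm] at hx; simp at hx
  have hy0 : 0 < (W *ᵥ x) ⬝ᵥ (W *ᵥ x) := lt_of_le_of_lt (by positivity) hx
  set p := Real.sqrt (x ⬝ᵥ x) with hp
  set q := Real.sqrt ((W *ᵥ x) ⬝ᵥ (W *ᵥ x)) with hq
  have hp0 : 0 < p := Real.sqrt_pos.2 hx0
  have hq0 : 0 < q := Real.sqrt_pos.2 hy0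
  have hp2 : x ⬝ᵥ x = p ^ 2 := (Real.sq_sqrt hx0.le).symm
  have hq2 : (W *ᵥ x) ⬝ᵥ (W *ᵥ x) = q ^ 2 := (Real.sq_sqrt hy0.le).symm
  refine ⟨p⁻¹ • x, q⁻¹ • (W *ᵥ x), ?_, ?_, ?_⟩
  · rw [smul_dotProduct, dotProduct_smul, hp2]; simp only [smul_eq_mul]; field_simp
  · rw [smul_dotProduct, dotProduct_smul, hq2]; simp only [smul_eq_mul]; field_simp
  · have : ∑ r : N × Q, (q⁻¹ • (W *ᵥ x)) r.1 * (p⁻¹ • x) r.2 * matEntries W r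
        = q⁻¹ * p⁻¹ * ((W *ᵥ x) ⬝ᵥ (W *ᵥ x)) := by
      rw [Fintype.sum_prod_type]
      have hY : (W *ᵥ x) ⬝ᵥ (W *ᵥ x) = ∑ i, (W *ᵥ x) i * ∑ j, W i j * x j := rfl
      rw [hY]
      generalize W *ᵥ x = Y
      simp only [matEntries, Pi.smul_apply, smul_eq_mul, Finset.mul_sum]
      refine Finset.sum_congr rfl fun i _ => Finset.sum_congr rfl fun j _ => by ring
    rw [this, hq2]
    have h1 : s * p < q := by
      rw [hp2, hq2] at hx
      exact lt_of_pow_lt_pow_left₀ 2 hq0.le (by rw [mul_pow]; exact hx)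
    have h2 : q⁻¹ * p⁻¹ * q ^ 2 = q / p := by field_simp
    rw [h2, lt_div_iff₀ hp0]; exact h1

/-- The largest eigenvalue of `WᵀW / n` is asymptotically at most `(1 + √c)²`. -/
lemma ae_gram_le {Ω : Type*} [MeasurableSpace Ω] {P : Measure Ω} [IsProbabilityMeasure P]
    {N Q : ℕ → ℕ} (W : ∀ n, Ω → Matrix (Fin (N n)) (Fin (Q n)) ℝ)
    (hW : ∀ n, IIDGaussian P (fun ω => matEntries (W n ω)) 1) {c : ℝ} (hc : 0 ≤ c)
    (hN : Tendsto (fun n : ℕ => (N n : ℝ) / n) atTop (𝓝 1))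
    (hQ : Tendsto (fun n : ℕ => (Q n : ℝ) / n) atTop (𝓝 c)) {z : ℝ}
    (hz : (1 + Real.sqrt c) ^ 2 < z) :
    ∀ᵐ ω ∂P, ∀ᶠ n : ℕ in atTop, ∀ x : Fin (Q n) → ℝ,
      x ⬝ᵥ ((W n ω)ᵀ * W n ω) *ᵥ x ≤ n * z * (x ⬝ᵥ x) := by
  have hsc : 0 ≤ Real.sqrt c := Real.sqrt_nonneg c
  have hz0 : 0 < z := lt_of_le_of_lt (by positivity) hz
  have hsz : 1 + Real.sqrt c < Real.sqrt z := Real.lt_sqrt_of_sq_lt hz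
  set δ := (Real.sqrt z - (1 + Real.sqrt c)) / 3 with hδ
  have hδ0 : 0 < δ := by rw [hδ]; linarith
  set η := δ ^ 2 / 2 with hη
  have hη0 : 0 < η := by positivity
  set L := max 2 (c + 1) with hL
  have hL0 : 0 < L := lt_of_lt_of_le two_pos (le_max_left _ _)
  have hc2 : Real.sqrt c ^ 2 = c := Real.sq_sqrt hc
  have key : ∀ᶠ n : ℕ in atTop,
      P {ω | ¬ ∀ x : Fin (Q n) → ℝ, x ⬝ᵥ ((W n ω)ᵀ * W n ω) *ᵥ x ≤ n * z * (x ⬝ᵥ x)}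
        ≤ ENNReal.ofReal (kappaG.toReal * 4 * ((n : ℝ) ^ 0 * Real.exp (-cRate η L * n))) := by
    have e1 : ∀ᶠ n : ℕ in atTop, (N n : ℝ) / n < 1 + min 1 (2 * δ) :=
      hN.eventually_lt_const (by
        have : 0 < min 1 (2 * δ) := lt_min one_pos (by positivity)
        linarith)
    have e2 : ∀ᶠ n : ℕ in atTop, (Q n : ℝ) / n < c + min 1 η :=
      hQ.eventually_lt_const (by
        have : 0 < min 1 η := lt_min one_pos (by positivity)
        linarith)
    filter_upwards [e1, e2, eventually_gt_atTop 0] with n h1 h2 hn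
    have hn0 : (0 : ℝ) < n := by exact_mod_cast hn
    rw [div_lt_iff₀ hn0] at h1 h2
    have hm1 := min_le_left 1 (2 * δ)
    have hm2 := min_le_right 1 (2 * δ)
    have hm3 := min_le_left 1 η
    have hm4 := min_le_right 1 η
    set sn := Real.sqrt n
    have hsn : 0 < sn := Real.sqrt_pos.2 hn0
    have hsn2 : sn ^ 2 = n := Real.sq_sqrt hn0.le
    have hch := chevet (N := Fin (N n)) (Q := Fin (Q n)) (r₁ := sn * (1 + δ))
      (r₂ := sn * (Real.sqrt c + δ)) (s' := sn * Real.sqrt z) (by positivity) (by positivity)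
      (by rw [← mul_add]; apply mul_lt_mul_of_pos_left _ hsn; rw [hδ]; linarith)
    have t1 := norm_tail_rate (ι := Fin (N n)) (τ := (sn * (1 + δ)) ^ 2) hη0 hL0 hn0.le
      (by
        rw [Fintype.card_fin, mul_pow, hsn2, hη]
        nlinarith)
      (by
        rw [Fintype.card_fin]
        have : (2 : ℝ) ≤ L := le_max_left _ _
        nlinarith)
    have t2 := norm_tail_rate (ι := Fin (Q n)) (τ := (sn * (Real.sqrt c + δ)) ^ 2) 
      hη0 hL0 hn0.le
      (by
        rw [Fintype.card_fin, mul_pow, hsn2]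
        have : c + 2 * η ≤ (Real.sqrt c + δ) ^ 2 := by rw [hη]; nlinarith
        nlinarith)
      (by
        rw [Fintype.card_fin]
        have : c + 1 ≤ L := le_max_right _ _
        nlinarith)
    refine le_trans (measure_mono (t := {ω | matEntries (W n ω) ∈ {w : Fin (N n) × Fin (Q n) → ℝ |
      ∃ (x : Fin (Q n) → ℝ) (y : Fin (N n) → ℝ), x ⬝ᵥ x = 1 ∧ y ⬝ᵥ y = 1 ∧
        sn * Real.sqrt z < ∑ q : Fin (N n) × Fin (Q n), y q.1 * x q.2 * w q}}) ?_)
      ((hW n).measure_le _ |>.trans (hch.trans ?_))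
    · intro ω hω
      simp only [Set.mem_ofPred_eq, not_forall, not_le] at hω ⊢
      obtain ⟨x, hx⟩ := hω
      refine exists_unit_of_gram_gt (W n ω) (x := x) ?_
      rwa [mul_pow, hsn2, Real.sq_sqrt hz0.le]
    · refine (mul_le_mul_right (add_le_add t1 t2) _).trans ?_
      rw [← ENNReal.ofReal_add (by positivity) (by positivity),
        ← ENNReal.ofReal_toReal kappaG_ne_top, ← ENNReal.ofReal_mul ENNReal.toReal_nonneg,
        ENNReal.ofReal_toReal kappaG_ne_top]
      apply le_of_eq
      congr 1
      rw [pow_zero, neg_mul]; ring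
  filter_upwards [ae_eventually_of_exp_bound 0 (cRate_pos hη0 hL0) key] with ω hω
  filter_upwards [hω] with n hn
  simpa using hn

/-! ### Resolvents: deterministic bounds and the leave-one-out identity -/

section Resolvent
variable {Q : Type*} [Fintype Q] [DecidableEq Q]

lemma isUnit_det_of_coercive {A : Matrix Q Q ℝ} {η : ℝ} (hη : 0 < η)
    (hA : ∀ x : Q → ℝ, η * (x ⬝ᵥ x) ≤ x ⬝ᵥ A *ᵥ x) : IsUnit A.det := by
  rw [isUnit_iff_ne_zero]
  intro h
  obtain ⟨x, hx, h0⟩ := Matrix.exists_mulVec_eq_zero_iff.2 h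
  have := hA x
  rw [h0, dotProduct_zero] at this
  have h1 : x ⬝ᵥ x = 0 := le_antisymm (by nlinarith [dot_self_nonneg x]) (dot_self_nonneg x)
  exact hx (dotProduct_self_eq_zero.1 h1)

lemma inv_mulVec_bounds {A : Matrix Q Q ℝ} {η : ℝ} (hη : 0 < η)
    (hA : ∀ x : Q → ℝ, η * (x ⬝ᵥ x) ≤ x ⬝ᵥ A *ᵥ x) (x : Q → ℝ) :
    0 ≤ x ⬝ᵥ A⁻¹ *ᵥ x ∧ η * (x ⬝ᵥ A⁻¹ *ᵥ x) ≤ x ⬝ᵥ x ∧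
      η ^ 2 * ((A⁻¹ *ᵥ x) ⬝ᵥ (A⁻¹ *ᵥ x)) ≤ x ⬝ᵥ x := by
  have hu := isUnit_det_of_coercive hη hA
  set y := A⁻¹ *ᵥ x with hy
  have hAy : A *ᵥ y = x := by
    rw [hy, mulVec_mulVec, mul_nonsing_inv _ hu, one_mulVec]
  have h1 := hA y
  rw [hAy, dotProduct_comm y x] at h1
  have hyy := dot_self_nonneg y
  have hxx := dot_self_nonneg x
  have h0 : 0 ≤ x ⬝ᵥ y := le_trans (by positivity) h1
  have hcs : (x ⬝ᵥ y) ^ 2 ≤ (x ⬝ᵥ x) * (y ⬝ᵥ y) := dot_sq_le x y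
  have h2 : η * (x ⬝ᵥ y) ≤ x ⬝ᵥ x := by
    rcases h0.lt_or_eq with h | h
    · refine le_of_mul_le_mul_right ?_ h
      calc η * (x ⬝ᵥ y) * (x ⬝ᵥ y) = η * (x ⬝ᵥ y) ^ 2 := by ring
        _ ≤ η * ((x ⬝ᵥ x) * (y ⬝ᵥ y)) := by gcongr
        _ = (x ⬝ᵥ x) * (η * (y ⬝ᵥ y)) := by ring
        _ ≤ (x ⬝ᵥ x) * (x ⬝ᵥ y) := by gcongr
    · rw [← h]; simpa using hxx
  refine ⟨h0, h2, ?_⟩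
  calc η ^ 2 * (y ⬝ᵥ y) = η * (η * (y ⬝ᵥ y)) := by ring
    _ ≤ η * (x ⬝ᵥ y) := by gcongr
    _ ≤ _ := h2

/-- Rank-one update of a coercive matrix: effect on the quadratic form of the inverse along the
perturbing vector, and on the trace of the inverse. -/
lemma rank_one_resolvent {A A' : Matrix Q Q ℝ} {η a : ℝ} (hη : 0 < η) (ha : 0 ≤ a) (w : Q → ℝ)
    (hA : ∀ x : Q → ℝ, η * (x ⬝ᵥ x) ≤ x ⬝ᵥ A *ᵥ x)
    (hA' : A' = A + a • vecMulVec w w) :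
    (1 - a * (w ⬝ᵥ A'⁻¹ *ᵥ w)) * (1 + a * (w ⬝ᵥ A⁻¹ *ᵥ w)) = 1 ∧
      η ^ 2 * |A⁻¹.trace - A'⁻¹.trace| ≤ a * (w ⬝ᵥ w) := by
  have hquad : ∀ x : Q → ℝ, A' *ᵥ x = A *ᵥ x + (a * (w ⬝ᵥ x)) • w := by
    intro x
    rw [hA', add_mulVec, smul_mulVec, vecMulVec_mulVec]
    simp [smul_smul]
  have hA2 : ∀ x : Q → ℝ, η * (x ⬝ᵥ x) ≤ x ⬝ᵥ A' *ᵥ x := by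
    intro x
    rw [hquad, dotProduct_add, dotProduct_smul, dotProduct_comm x w, smul_eq_mul]
    have := hA x
    nlinarith [mul_nonneg ha (mul_self_nonneg (w ⬝ᵥ x))]
  have hu := isUnit_det_of_coercive hη hA
  have hu' := isUnit_det_of_coercive hη hA2
  have hdiff : A⁻¹ - A'⁻¹ = a • (A⁻¹ * vecMulVec w w * A'⁻¹) := by
    have : A⁻¹ * (A' - A) * A'⁻¹ = A⁻¹ - A'⁻¹ := by
      rw [mul_sub, sub_mul, Matrix.mul_assoc, mul_nonsing_inv _ hu', nonsing_inv_mul _ hu,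
        Matrix.mul_one, Matrix.one_mul]
    rw [← this, hA', add_sub_cancel_left, Matrix.mul_smul, Matrix.smul_mul]
  have hform : A⁻¹ * vecMulVec w w * A'⁻¹ = vecMulVec (A⁻¹ *ᵥ w) (w ᵥ* A'⁻¹) := by
    rw [mul_vecMulVec, vecMulVec_mul]
  constructor
  · have h1 : w ⬝ᵥ (A⁻¹ - A'⁻¹) *ᵥ w = a * ((w ⬝ᵥ A⁻¹ *ᵥ w) * (w ⬝ᵥ A'⁻¹ *ᵥ w)) := by
      rw [hdiff, hform, smul_mulVec, vecMulVec_mulVec, ← dotProduct_mulVec]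
      simp only [dotProduct_smul, smul_eq_mul, MulOpposite.smul_eq_mul_unop, MulOpposite.unop_op]
    rw [sub_mulVec, dotProduct_sub] at h1
    linear_combination a * h1
  · have h2 : A⁻¹.trace - A'⁻¹.trace = a * ((A'⁻¹ *ᵥ (A⁻¹ *ᵥ w)) ⬝ᵥ w) := by
      rw [← trace_sub, hdiff, hform, trace_smul, trace_vecMulVec, dotProduct_comm,
        ← dotProduct_mulVec, dotProduct_comm]
      rfl
    obtain ⟨-, -, h3⟩ := inv_mulVec_bounds hη hA w
    obtain ⟨-, -, h4⟩ := inv_mulVec_bounds hη hA2 (A⁻¹ *ᵥ w)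
    set y := A'⁻¹ *ᵥ (A⁻¹ *ᵥ w) with hy
    have hcs : (y ⬝ᵥ w) ^ 2 ≤ (y ⬝ᵥ y) * (w ⬝ᵥ w) := dot_sq_le y w
    have h5 : |η ^ 2 * (y ⬝ᵥ w)| ≤ w ⬝ᵥ w := by
      apply abs_le_of_sq_le_sq _ (dot_self_nonneg w)
      calc (η ^ 2 * (y ⬝ᵥ w)) ^ 2 = η ^ 4 * (y ⬝ᵥ w) ^ 2 := by ring
        _ ≤ η ^ 4 * ((y ⬝ᵥ y) * (w ⬝ᵥ w)) := by gcongr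
        _ = η ^ 2 * (η ^ 2 * (y ⬝ᵥ y)) * (w ⬝ᵥ w) := by ring
        _ ≤ (w ⬝ᵥ w) * (w ⬝ᵥ w) := by
          refine mul_le_mul_of_nonneg_right ?_ (dot_self_nonneg w)
          exact (mul_le_mul_of_nonneg_left h4 (by positivity)).trans h3
        _ = (w ⬝ᵥ w) ^ 2 := by ring
    rw [h2, abs_mul, abs_of_nonneg ha]
    rw [abs_mul, abs_of_nonneg (by positivity)] at h5
    calc η ^ 2 * (a * |y ⬝ᵥ w|) = a * (η ^ 2 * |y ⬝ᵥ w|) := by ring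
      _ ≤ _ := by gcongr

end Resolvent

/-- The matrix `z - WᵀW/n`. -/
def shiftGram {N Q : Type*} [Fintype N] [DecidableEq Q] (n z : ℝ) (W : Matrix N Q ℝ) :
    Matrix Q Q ℝ :=
  z • 1 - (1 / n) • (Wᵀ * W)

/-- The condition `WᵀW ≤ n ζ` in the sense of quadratic forms. -/
def GramLE {N Q : Type*} [Fintype N] [Fintype Q] (n ζ : ℝ) (W : Matrix N Q ℝ) : Prop :=
  ∀ x : Q → ℝ, x ⬝ᵥ (Wᵀ * W) *ᵥ x ≤ n * ζ * (x ⬝ᵥ x)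

section LeaveOneOut
set_option linter.unusedSectionVars false
variable {N Q : Type*} [Fintype N] [Fintype Q] [DecidableEq N] [DecidableEq Q]

lemma shiftGram_isHermitian (n z : ℝ) (W : Matrix N Q ℝ) : (shiftGram n z W).IsHermitian := by
  unfold shiftGram IsHermitian
  simp [conjTranspose_eq_transpose_of_trivial, transpose_mul]

lemma shiftGram_coercive {n ζ z : ℝ} (hn : 0 < n) {W : Matrix N Q ℝ} (hW : GramLE n ζ W)
    (x : Q → ℝ) : (z - ζ) * (x ⬝ᵥ x) ≤ x ⬝ᵥ shiftGram n z W *ᵥ x := by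
  unfold shiftGram
  rw [sub_mulVec, dotProduct_sub, smul_mulVec, smul_mulVec, dotProduct_smul, dotProduct_smul,
    one_mulVec, smul_eq_mul, smul_eq_mul, sub_mul]
  have := hW x
  have h2 : 1 / n * (x ⬝ᵥ (Wᵀ * W) *ᵥ x) ≤ 1 / n * (n * ζ * (x ⬝ᵥ x)) := by gcongr
  have h3 : 1 / n * (n * ζ * (x ⬝ᵥ x)) = ζ * (x ⬝ᵥ x) := by field_simp
  linarith

lemma gram_updateRow (W : Matrix N Q ℝ) (i : N) :
    Wᵀ * W = (W.updateRow i 0)ᵀ * W.updateRow i 0 + vecMulVec (W i) (W i) := by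
  ext a b
  simp only [mul_apply, transpose_apply, Matrix.add_apply, vecMulVec_apply]
  rw [← Finset.add_sum_erase _ _ (Finset.mem_univ i),
    ← Finset.add_sum_erase (a := i) (f := fun j => W.updateRow i 0 j a * _) _
      (Finset.mem_univ i)]
  have : ∀ j ∈ Finset.univ.erase i, W.updateRow i 0 j a * W.updateRow i 0 j b = W j a * W j b := by
    intro j hj
    rw [updateRow_ne (Finset.ne_of_mem_erase hj)]
  rw [Finset.sum_congr rfl this]
  simp [updateRow_self]

lemma GramLE.updateRow {n ζ : ℝ} {W : Matrix N Q ℝ} (h : GramLE n ζ W) (i : N) :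
    GramLE n ζ (W.updateRow i 0) := by
  intro x
  have := h x
  rw [gram_updateRow W i, add_mulVec, dotProduct_add, vecMulVec_mulVec] at this
  have h2 : x ⬝ᵥ (MulOpposite.op (W i ⬝ᵥ x) • W i) = (W i ⬝ᵥ x) ^ 2 := by
    simp [dotProduct_comm x, sq]
  rw [h2] at this
  nlinarith [sq_nonneg (W i ⬝ᵥ x)]

lemma GramLE.row_le {n ζ : ℝ} {W : Matrix N Q ℝ} (h : GramLE n ζ W) (h0 : 0 ≤ n * ζ) (i : N) :
    W i ⬝ᵥ W i ≤ n * ζ := by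
  have h1 := h (W i)
  rw [dot_mulVec_gram] at h1
  have h2 : (W i ⬝ᵥ W i) ^ 2 ≤ (W *ᵥ W i) ⬝ᵥ (W *ᵥ W i) := by
    rw [sq]
    exact Finset.single_le_sum (f := fun j => (W *ᵥ W i) j * (W *ᵥ W i) j)
      (fun j _ => mul_self_nonneg _) (Finset.mem_univ i)
  rcases (dot_self_nonneg (W i)).lt_or_eq with h3 | h3
  · exact le_of_mul_le_mul_right (by nlinarith) h3
  · rw [← h3]; exact h0

/-- If each row of `W` has a well-concentrated quadratic form in the resolvent built from the
other rows, the normalised trace of the resolvent almost solves the Marchenko–Pastur equation. -/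
lemma leave_one_out {n ζ z ε : ℝ} (hn : 0 < n) (hζ : 0 ≤ ζ) (hz : ζ < z) {W : Matrix N Q ℝ}
    (hW : GramLE n ζ W)
    (hε : ∀ i, |W i ⬝ᵥ (shiftGram n z (W.updateRow i 0))⁻¹ *ᵥ W i
      - (shiftGram n z (W.updateRow i 0))⁻¹.trace| ≤ ε * n) (φ : ℝ)
    (hφ : φ = (shiftGram n z W)⁻¹.trace / n) :
    |(1 - φ) * (z * φ - Fintype.card Q / n) - Fintype.card N / n * φ| ≤
      Fintype.card N / n * ((1 + ζ / (z - ζ)) * (ε + ζ / ((z - ζ) ^ 2 * n))) := by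
  set η := z - ζ with hη
  have hη0 : 0 < η := by rw [hη]; linarith
  set A := shiftGram n z W with hA
  have hco := shiftGram_coercive (z := z) hn hW
  have hu := isUnit_det_of_coercive hη0 hco
  set s : N → ℝ := fun i => 1 / n * (W i ⬝ᵥ A⁻¹ *ᵥ W i) with hs
  have key : ∀ i, |(1 - φ) * s i - φ| ≤ (1 + ζ / η) * (ε + ζ / (η ^ 2 * n)) := by
    intro i
    have hA' : shiftGram n z (W.updateRow i 0) = A + (1 / n) • vecMulVec (W i) (W i) := by
      rw [hA]; unfold shiftGram; rw [gram_updateRow W i, smul_add]; abel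
    obtain ⟨h1, h2⟩ := rank_one_resolvent hη0 (by positivity : 0 ≤ 1 / n) (W i) hco hA'
    obtain ⟨h3, h4, -⟩ := inv_mulVec_bounds hη0 hco (W i)
    have h5 := hε i
    have h6 := hW.row_le (by positivity) i
    set A' := shiftGram n z (W.updateRow i 0)
    set q := 1 / n * (W i ⬝ᵥ A'⁻¹ *ᵥ W i) with hq
    have hs0 : 0 ≤ s i := by positivity
    have hs1 : s i ≤ ζ / η := by
      rw [le_div_iff₀ hη0]
      calc s i * η = 1 / n * (η * (W i ⬝ᵥ A⁻¹ *ᵥ W i)) := by rw [hs]; ring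
        _ ≤ 1 / n * (n * ζ) := mul_le_mul_of_nonneg_left (h4.trans h6) (by positivity)
        _ = ζ := by field_simp
    have ht : |A⁻¹.trace - A'⁻¹.trace| ≤ ζ / η ^ 2 := by
      rw [le_div_iff₀ (by positivity), mul_comm]
      refine h2.trans ?_
      calc 1 / n * (W i ⬝ᵥ W i) ≤ 1 / n * (n * ζ) := by gcongr
        _ = ζ := by field_simp
    have hqφ : |q - φ| ≤ ε + ζ / (η ^ 2 * n) := by
      have e : q - φ = 1 / n * ((W i ⬝ᵥ A'⁻¹ *ᵥ W i - A'⁻¹.trace)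
          - (A⁻¹.trace - A'⁻¹.trace)) := by
        rw [hq, hφ]; field_simp; ring
      rw [e, abs_mul, abs_of_pos (by positivity)]
      calc 1 / n * |_| ≤ 1 / n * (ε * n + ζ / η ^ 2) := by
            gcongr
            exact (abs_sub _ _).trans (add_le_add h5 ht)
        _ = _ := by field_simp
    have e2 : (1 - φ) * s i - φ = (1 + s i) * (q - φ) := by
      linear_combination h1
    rw [e2, abs_mul, abs_of_nonneg (by linarith)]
    gcongr
  have hsum : ∑ i, s i = z * (n * φ) - Fintype.card Q := by
    have h1 : (z • (1 : Matrix Q Q ℝ) - (1 / n) • (Wᵀ * W)) * A⁻¹ = 1 := mul_nonsing_inv A hu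
    have h2 := congrArg Matrix.trace h1
    rw [sub_mul, trace_sub, smul_mul, smul_mul, trace_smul, trace_smul, Matrix.one_mul,
      trace_one, smul_eq_mul, smul_eq_mul] at h2
    have h3 : (Wᵀ * W * A⁻¹).trace = ∑ i, W i ⬝ᵥ A⁻¹ *ᵥ W i := by
      rw [Matrix.mul_assoc, trace_mul_comm, Matrix.trace]
      refine Finset.sum_congr rfl fun i _ => ?_
      simp only [diag_apply, mul_apply, transpose_apply, dotProduct, mulVec, Finset.sum_mul,
        Finset.mul_sum]
      rw [Finset.sum_comm]
      simp only [mul_assoc]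
    rw [hs, ← Finset.mul_sum, ← h3, hφ, mul_div_cancel₀ _ hn.ne']
    linarith
  have e3 : (1 - φ) * (z * φ - Fintype.card Q / n) - Fintype.card N / n * φ
      = 1 / n * ∑ i, ((1 - φ) * s i - φ) := by
    rw [Finset.sum_sub_distrib, ← Finset.mul_sum, hsum, Finset.sum_const, Finset.card_univ,
      nsmul_eq_mul]
    field_simp
  rw [e3, abs_mul, abs_of_pos (by positivity)]
  calc 1 / n * |∑ i, ((1 - φ) * s i - φ)|
      ≤ 1 / n * ∑ _i : N, (1 + ζ / η) * (ε + ζ / (η ^ 2 * n)) := by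
        gcongr
        exact (Finset.abs_sum_le_sum_abs _ _).trans (Finset.sum_le_sum fun i _ => key i)
    _ = _ := by
      rw [Finset.sum_const, Finset.card_univ, nsmul_eq_mul]; ring

end LeaveOneOut

/-! ### Concentration of the row quadratic forms -/

lemma continuous_entry_shiftGram {X N Q : Type*} [TopologicalSpace X] [Fintype N]
    [DecidableEq Q] (n z : ℝ) {W : X → Matrix N Q ℝ} (hW : ∀ i j, Continuous fun x => W x i j) :
    Continuous fun x => shiftGram n z (W x) := by
  have hW' : Continuous W := continuous_matrix hW
  unfold shiftGram
  exact continuous_const.sub ((hW'.matrix_transpose.matrix_mul hW').const_smul (1 / n))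

lemma measurable_entry_inv {X Q : Type*} [TopologicalSpace X] [MeasurableSpace X] [BorelSpace X]
    [Fintype Q] [DecidableEq Q] {A : X → Matrix Q Q ℝ} (hA : Continuous A) (i j : Q) :
    Measurable fun x => (A x)⁻¹ i j := by
  have h : (fun x => (A x)⁻¹ i j) = fun x => (A x).det⁻¹ * (A x).adjugate i j := by
    funext x
    rw [Matrix.inv_def, Ring.inverse_eq_inv', Matrix.smul_apply, smul_eq_mul]
  rw [h]
  have h1 : Continuous fun x => (A x).det := hA.matrix_det
  have h2 : Continuous fun x => (A x).adjugate i j :=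
    (continuous_apply_apply i j).comp hA.matrix_adjugate
  exact (h1.measurable.inv).mul h2.measurable

/-- The matrix with prescribed entries outside row `i` and zeros in row `i`. -/
def restMat {N Q : Type*} [DecidableEq N] (i : N) (w : {q : N × Q // q.1 ≠ i} → ℝ) :
    Matrix N Q ℝ :=
  Matrix.of fun a b => if h : a ≠ i then w ⟨(a, b), h⟩ else 0

lemma stdG_row_deviation {N Q : Type*} [Fintype N] [Fintype Q] [DecidableEq N] [DecidableEq Q]
    (i : N) {n ζ z ε L : ℝ} (hn : 0 < n) (hz : ζ < z) (hε : 0 < ε) (hL : 0 < L)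
    (hQ : (Fintype.card Q : ℝ) ≤ L * n) :
    stdG (N × Q) {w | GramLE n ζ ((Matrix.of (Function.curry w)).updateRow i 0) ∧
      ε * n < |(fun b => w (i, b)) ⬝ᵥ
          (shiftGram n z ((Matrix.of (Function.curry w)).updateRow i 0))⁻¹ *ᵥ (fun b => w (i, b))
        - (shiftGram n z ((Matrix.of (Function.curry w)).updateRow i 0))⁻¹.trace|}
      ≤ ENNReal.ofReal (2 * Real.exp (-(cRate ((z - ζ) * ε) L * n))) := by
  have hη : 0 < z - ζ := by linarith
  set R := {q : N × Q // q.1 ≠ i}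
  set C : Set ((R → ℝ) × (Q → ℝ)) := {y | GramLE n ζ (restMat i y.1) ∧
    ε * n < |y.2 ⬝ᵥ (shiftGram n z (restMat i y.1))⁻¹ *ᵥ y.2
      - (shiftGram n z (restMat i y.1))⁻¹.trace|} with hC
  have hcont : ∀ a b, Continuous fun y : (R → ℝ) × (Q → ℝ) => restMat i y.1 a b := by
    intro a b
    simp only [restMat, Matrix.of_apply]
    split_ifs
    · fun_prop
    · fun_prop
  have hcontM : Continuous fun y : (R → ℝ) × (Q → ℝ) => restMat i y.1 := continuous_matrix hcont
  have hCm : MeasurableSet C := by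
    refine MeasurableSet.inter ?_ ?_
    · have : IsClosed {y : (R → ℝ) × (Q → ℝ) | GramLE n ζ (restMat i y.1)} := by
        have e : {y : (R → ℝ) × (Q → ℝ) | GramLE n ζ (restMat i y.1)}
            = ⋂ x : Q → ℝ, {y | x ⬝ᵥ ((restMat i y.1)ᵀ * restMat i y.1) *ᵥ x
              ≤ n * ζ * (x ⬝ᵥ x)} := by
          ext y; simp [GramLE]
        rw [e]
        refine isClosed_iInter fun x => isClosed_le ?_ continuous_const
        exact continuous_const.dotProduct
          ((hcontM.matrix_transpose.matrix_mul hcontM).matrix_mulVec continuous_const)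
      exact this.measurableSet
    · have hinv := fun a b => measurable_entry_inv (continuous_entry_shiftGram n z hcont) a b
      refine measurableSet_lt (f := fun _ => ε * n)
        (g := fun y : (R → ℝ) × (Q → ℝ) => |y.2 ⬝ᵥ (shiftGram n z (restMat i y.1))⁻¹ *ᵥ y.2
          - (shiftGram n z (restMat i y.1))⁻¹.trace|) measurable_const ?_
      refine Measurable.abs ?_
      simp only [dotProduct, mulVec, Matrix.trace, diag_apply]
      refine Measurable.sub (Finset.measurable_fun_sum _ fun a _ => Measurable.mul (by fun_prop)
        (Finset.measurable_fun_sum _ fun b _ => (hinv a b).mul (by fun_prop)))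
        (Finset.measurable_fun_sum _ fun a _ => hinv a a)
  set f : R ⊕ Q → N × Q := Sum.elim Subtype.val (fun b => (i, b)) with hf
  have hfi : Function.Injective f := by
    rintro (⟨⟨a, b⟩, h⟩ | b) (⟨⟨a', b'⟩, h'⟩ | b') e
    · exact congrArg Sum.inl (Subtype.ext e)
    · simp only [hf, Sum.elim_inl, Sum.elim_inr, Prod.mk.injEq] at e
      exact absurd e.1 h
    · simp only [hf, Sum.elim_inl, Sum.elim_inr, Prod.mk.injEq] at e
      exact absurd e.1.symm h'
    · simpa [hf] using e
  have hrest : ∀ w : N × Q → ℝ,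
      (Matrix.of (Function.curry w)).updateRow i 0 = restMat i (fun q : R => w q.1) := by
    intro w
    ext a b
    by_cases h : a = i
    · subst h; simp [restMat]
    · rw [updateRow_ne h]; simp [restMat, h, Function.curry]
  calc _ = (stdG (N × Q)) ((fun x : N × Q → ℝ => fun r => x (f r)) ⁻¹'
          ((fun ξ : R ⊕ Q → ℝ => (fun r => ξ (Sum.inl r), fun b => ξ (Sum.inr b))) ⁻¹' C)) := by
        congr 1
        ext w
        simp only [hrest, hC, hf, Set.mem_ofPred_eq, Set.mem_preimage, Sum.elim_inl, Sum.elim_inr]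
    _ = ((stdG R).prod (stdG Q)) C := by
        rw [← stdG_sum, ← stdG_map_comp hfi, Measure.map_map (by fun_prop) (by fun_prop),
          Measure.map_apply (by fun_prop) hCm]
        rfl
    _ ≤ _ := by
        rw [Measure.prod_apply hCm]
        have hsec : ∀ y : R → ℝ, stdG Q (Prod.mk y ⁻¹' C)
            ≤ ENNReal.ofReal (2 * Real.exp (-(cRate ((z - ζ) * ε) L * n))) := by
          intro y
          by_cases hy : GramLE n ζ (restMat i y)
          · have hco := shiftGram_coercive (z := z) hn hy
            set G := (shiftGram n z (restMat i y))⁻¹ with hG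
            refine (measure_mono ?_).trans (quadForm_tail_rate ((z - ζ) • G) ?_ ?_ (mul_pos hη hε)
              hL hn.le le_rfl hQ)
            · rintro x ⟨-, hx⟩
              simp only [Set.mem_ofPred_eq, smul_mulVec, dotProduct_smul, trace_smul, smul_eq_mul,
                ← mul_sub, abs_mul, abs_of_pos hη]
              rw [mul_assoc]
              exact mul_le_mul_of_nonneg_left hx.le hη.le
            · have : G.IsHermitian := (shiftGram_isHermitian n z (restMat i y)).inv
              unfold IsHermitian at this ⊢
              rw [conjTranspose_smul, this]; simp
            · intro x
              obtain ⟨h1, h2, -⟩ := inv_mulVec_bounds hη hco x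
              rw [smul_mulVec, dotProduct_smul, smul_eq_mul, abs_of_nonneg (by positivity)]
              exact h2
          · have : Prod.mk y ⁻¹' C = ∅ := by
              ext x; simp [hC, hy]
            rw [this]; simp
        refine (lintegral_mono hsec).trans ?_
        simp

/-- The normalised trace of the resolvent of `WᵀW/n` at `z`. -/
def resTrace {N Q : Type*} [Fintype N] [Fintype Q] [DecidableEq Q] (n z : ℝ)
    (W : Matrix N Q ℝ) : ℝ :=
  (shiftGram n z W)⁻¹.trace / n

lemma ae_resTrace_equation {Ω : Type*} [MeasurableSpace Ω] {P : Measure Ω}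
    [IsProbabilityMeasure P] {N Q : ℕ → ℕ} (W : ∀ n, Ω → Matrix (Fin (N n)) (Fin (Q n)) ℝ)
    (hW : ∀ n, IIDGaussian P (fun ω => matEntries (W n ω)) 1) {c : ℝ} (hc : 0 ≤ c)
    (hN : Tendsto (fun n : ℕ => (N n : ℝ) / n) atTop (𝓝 1))
    (hQ : Tendsto (fun n : ℕ => (Q n : ℝ) / n) atTop (𝓝 c)) {z : ℝ}
    (hz : (1 + Real.sqrt c) ^ 2 < z) :
    ∀ᵐ ω ∂P, Tendsto (fun n : ℕ => (1 - resTrace n z (W n ω)) *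
        (z * resTrace n z (W n ω) - Q n / n) - N n / n * resTrace n z (W n ω)) atTop (𝓝 0) := by
  obtain ⟨ζ, hζ1, hζ2⟩ := exists_between hz
  have hζ0 : 0 ≤ ζ := le_trans (by positivity) hζ1.le
  have hη : 0 < z - ζ := by linarith
  have hev : ∀ m : ℕ, ∀ᵐ ω ∂P, ∀ᶠ n : ℕ in atTop, ∀ i, GramLE n ζ ((W n ω).updateRow i 0) →
      |W n ω i ⬝ᵥ (shiftGram n z ((W n ω).updateRow i 0))⁻¹ *ᵥ W n ω i
      - (shiftGram n z ((W n ω).updateRow i 0))⁻¹.trace| ≤ 1 / ((m : ℝ) + 1) * n := by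
    intro m
    set ε := 1 / ((m : ℝ) + 1) with hε
    have hε0 : 0 < ε := by positivity
    have hbound : ∀ᶠ n : ℕ in atTop, P {ω | ∃ i, GramLE n ζ ((W n ω).updateRow i 0) ∧
        ε * n < |W n ω i ⬝ᵥ (shiftGram n z ((W n ω).updateRow i 0))⁻¹ *ᵥ W n ω i
          - (shiftGram n z ((W n ω).updateRow i 0))⁻¹.trace|}
        ≤ ENNReal.ofReal (4 * ((n : ℝ) ^ 1 *
          Real.exp (-cRate ((z - ζ) * ε) (c + 1) * n))) := by
      filter_upwards [hN.eventually_lt_const (by norm_num : (1 : ℝ) < 2),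
        hQ.eventually_lt_const (by linarith : c < c + 1), eventually_gt_atTop 0] with n h1 h2 h3
      have hn : (0 : ℝ) < n := by exact_mod_cast h3
      rw [div_lt_iff₀ hn] at h1 h2
      rw [Set.ofPred_exists]
      refine (measure_iUnion_le _).trans ?_
      have hi : ∀ i : Fin (N n), P {ω | GramLE n ζ ((W n ω).updateRow i 0) ∧
          ε * n < |W n ω i ⬝ᵥ (shiftGram n z ((W n ω).updateRow i 0))⁻¹ *ᵥ W n ω i
          - (shiftGram n z ((W n ω).updateRow i 0))⁻¹.trace|}
          ≤ ENNReal.ofReal (2 * Real.exp (-(cRate ((z - ζ) * ε) (c + 1) * n))) := fun i =>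
        ((hW n).measure_le _).trans (stdG_row_deviation i hn hζ2 hε0 (by linarith)
          (by rw [Fintype.card_fin]; exact h2.le))
      rw [tsum_fintype]
      refine (Finset.sum_le_sum fun i _ => hi i).trans ?_
      rw [Finset.sum_const, Finset.card_univ, Fintype.card_fin, ← ENNReal.ofReal_nsmul]
      refine ENNReal.ofReal_le_ofReal ?_
      rw [nsmul_eq_mul, neg_mul, pow_one]
      have he := Real.exp_pos (-(cRate ((z - ζ) * ε) (c + 1) * n))
      nlinarith
    filter_upwards [ae_eventually_of_exp_bound 1
      (cRate_pos (mul_pos hη hε0) (by linarith : 0 < c + 1)) hbound] with ω hω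
    filter_upwards [hω] with n hn i hi
    by_contra hlt
    exact hn ⟨i, hi, not_le.1 hlt⟩
  filter_upwards [ae_all_iff.2 hev, ae_gram_le W hW hc hN hQ hζ1] with ω h1 h2
  rw [Metric.tendsto_nhds]
  intro δ hδ
  have hK : 0 < 2 * (1 + ζ / (z - ζ)) := by positivity
  obtain ⟨m, hm⟩ := exists_nat_one_div_lt (show 0 < δ / (2 * (1 + ζ / (z - ζ))) / 2 by positivity)
  have hsmall : Tendsto (fun n : ℕ => ζ / ((z - ζ) ^ 2 * n)) atTop (𝓝 0) :=
    Tendsto.const_div_atTop (tendsto_natCast_atTop_atTop.const_mul_atTop (by positivity)) _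
  filter_upwards [h1 m, h2, hN.eventually_lt_const (by norm_num : (1 : ℝ) < 2),
    eventually_gt_atTop 0, hsmall.eventually_lt_const
      (show 0 < δ / (2 * (1 + ζ / (z - ζ))) / 2 by positivity)] with n a1 a2 a3 a4 a5
  have hn : (0 : ℝ) < n := by exact_mod_cast a4
  have hg : GramLE n ζ (W n ω) := a2
  have := leave_one_out hn hζ0 hζ2 hg (fun i => a1 i (hg.updateRow i)) (resTrace n z (W n ω)) rfl
  rw [Real.dist_0_eq_abs]
  simp only [Fintype.card_fin] at this
  refine this.trans_lt ?_
  have hsum : 1 / ((m : ℝ) + 1) + ζ / ((z - ζ) ^ 2 * n) < δ / (2 * (1 + ζ / (z - ζ))) := by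
    linarith
  rw [lt_div_iff₀ hK] at hsum
  have hnn : 0 ≤ (1 + ζ / (z - ζ)) * (1 / ((m : ℝ) + 1) + ζ / ((z - ζ) ^ 2 * n)) := by positivity
  calc _ ≤ 2 * ((1 + ζ / (z - ζ)) * (1 / ((m : ℝ) + 1) + ζ / ((z - ζ) ^ 2 * n))) := by gcongr
    _ < δ := by linarith

/-! ### Ordered eigenvalues -/

lemma ithEigDesc_spec {p : ℕ} {A : Matrix (Fin p) (Fin p) ℝ} (hA : A.IsHermitian) :
    Antitone (fun α : Fin p => ithEigDesc A α) ∧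
    (∀ α : Fin p, ∃ i, ithEigDesc A α = hA.eigenvalues i) ∧
    ∀ f : ℝ → ℝ, ∑ α : Fin p, f (ithEigDesc A α) = ∑ i, f (hA.eigenvalues i) := by
  set l := (List.ofFn hA.eigenvalues).insertionSort (· ≥ ·) with hl
  have hperm : l.Perm (List.ofFn hA.eigenvalues) := List.perm_insertionSort _ _
  have hlen : l.length = p := by rw [hperm.length_eq, List.length_ofFn]
  have heq : ∀ (i : ℕ) (hi : i < l.length), ithEigDesc A i = l[i] := by
    intro i hi
    unfold ithEigDesc eigsDesc
    rw [dif_pos hA]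
    exact List.getD_eq_getElem _ _ hi
  have hsort : l.Pairwise (· ≥ ·) := List.pairwise_insertionSort _ _
  refine ⟨fun a b hab => ?_, fun α => ?_, fun f => ?_⟩
  · have ha : (a : ℕ) < l.length := by rw [hlen]; exact a.2
    have hb : (b : ℕ) < l.length := by rw [hlen]; exact b.2
    simp only
    rw [heq a ha, heq b hb]
    rcases hab.lt_or_eq with h | h
    · exact List.pairwise_iff_getElem.1 hsort a b ha hb h
    · subst h; exact le_rfl
  · have ha : (α : ℕ) < l.length := by rw [hlen]; exact α.2
    rw [heq α ha]
    have hmem : l[(α : ℕ)] ∈ List.ofFn hA.eigenvalues := hperm.mem_iff.1 (List.getElem_mem ha)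
    obtain ⟨i, hi⟩ := (List.mem_ofFn' _ _).1 hmem
    exact ⟨i, hi.symm⟩
  · have h1 : (l.map f).sum = ∑ i, f (hA.eigenvalues i) := by
      rw [(hperm.map f).sum_eq, List.map_ofFn, List.sum_ofFn]; rfl
    rw [← h1]
    have h2 : l.map f = List.ofFn fun α : Fin p => f (ithEigDesc A α) := by
      apply List.ext_getElem
      · simp [hlen]
      · intro i h3 h4
        rw [List.getElem_map, List.getElem_ofFn, heq i (by simpa using h3)]
    rw [h2, List.sum_ofFn]

lemma gram_isHermitian {N Q : Type*} [Fintype N] (W : Matrix N Q ℝ) : (Wᵀ * W).IsHermitian := by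
  unfold IsHermitian
  simp [conjTranspose_eq_transpose_of_trivial, transpose_mul]

lemma trace_inv_shiftGram {N Q : Type*} [Fintype N] [Fintype Q] [DecidableEq Q] {n z : ℝ}
    (W : Matrix N Q ℝ) (h : ∀ i, z - (gram_isHermitian W).eigenvalues i / n ≠ 0) :
    (shiftGram n z W)⁻¹.trace = ∑ i, (z - (gram_isHermitian W).eigenvalues i / n)⁻¹ := by
  set hS := gram_isHermitian W
  set U : Matrix Q Q ℝ := hS.eigenvectorUnitary.1 with hU
  have hU1 : U * star U = 1 := Unitary.coe_mul_star_self _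
  have hU2 : star U * U = 1 := Unitary.coe_star_mul_self _
  have hspec : Wᵀ * W = U * diagonal hS.eigenvalues * star U := by
    have := hS.spectral_theorem
    rw [Unitary.conjStarAlgAut_apply] at this
    exact this
  have hA : shiftGram n z W = U * diagonal (fun i => z - hS.eigenvalues i / n) * star U := by
    have e : diagonal (fun i => z - hS.eigenvalues i / n)
        = z • (1 : Matrix Q Q ℝ) - (1 / n) • diagonal hS.eigenvalues := by
      ext i j
      by_cases hij : i = j
      · subst hij; simp; ring
      · simp [hij]
    rw [e, mul_sub, sub_mul, Matrix.mul_smul, Matrix.mul_smul, Matrix.smul_mul, Matrix.smul_mul,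
      ← hspec, Matrix.mul_one, hU1]
    rfl
  have hinv : (shiftGram n z W)⁻¹
      = U * diagonal (fun i => (z - hS.eigenvalues i / n)⁻¹) * star U := by
    apply inv_eq_right_inv
    rw [hA]
    calc _ = U * diagonal (fun i => z - hS.eigenvalues i / n) * (star U * U) *
          diagonal (fun i => (z - hS.eigenvalues i / n)⁻¹) * star U := by
          simp only [Matrix.mul_assoc]
      _ = U * (diagonal (fun i => z - hS.eigenvalues i / n) *
          diagonal (fun i => (z - hS.eigenvalues i / n)⁻¹)) * star U := by
          rw [hU2, Matrix.mul_one]; simp only [Matrix.mul_assoc]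
      _ = 1 := by
          rw [diagonal_mul_diagonal]
          simp only [mul_inv_cancel₀ (h _)]
          rw [diagonal_one, Matrix.mul_one, hU1]
  rw [hinv, trace_mul_comm, ← Matrix.mul_assoc, hU2, Matrix.one_mul, trace_diagonal]

lemma gram_eigenvalues_bounds {N Q : Type*} [Fintype N] [Fintype Q] [DecidableEq Q] {n ζ : ℝ}
    {W : Matrix N Q ℝ} (i : Q) :
    0 ≤ (gram_isHermitian W).eigenvalues i ∧
      (GramLE n ζ W → (gram_isHermitian W).eigenvalues i ≤ n * ζ) := by
  have h := eigenvalue_eq_quadForm (gram_isHermitian W) i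
  constructor
  · rw [← h, dot_mulVec_gram]; exact dot_self_nonneg _
  · intro hW
    have := hW ((gram_isHermitian W).eigenvectorBasis i).ofLp
    rwa [h, dotProduct_eigenbasis, if_pos rfl, mul_one] at this

/-- `l` lists in decreasing order the eigenvalues of `WᵀW / n`. -/
def IsGramSpec {N : Type*} [Fintype N] {q : ℕ} (n : ℕ) (W : Matrix N (Fin q) ℝ)
    (l : Fin q → ℝ) : Prop :=
  ∀ α : Fin q, (n : ℝ) * l α = ithEigDesc (Wᵀ * W) α

section Spec
variable {N : Type*} [Fintype N] {q n : ℕ} {W : Matrix N (Fin q) ℝ} {l : Fin q → ℝ}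

lemma IsGramSpec.antitone (hl : IsGramSpec n W l) (hn : 0 < n) : Antitone l := by
  have hn' : (0 : ℝ) < n := by exact_mod_cast hn
  intro a b hab
  have h := (ithEigDesc_spec (gram_isHermitian W)).1 hab
  simp only [← hl a, ← hl b] at h
  exact le_of_mul_le_mul_left h hn'

lemma IsGramSpec.nonneg (hl : IsGramSpec n W l) (hn : 0 < n) (a : Fin q) : 0 ≤ l a := by
  have hn' : (0 : ℝ) < n := by exact_mod_cast hn
  obtain ⟨i, hi⟩ := (ithEigDesc_spec (gram_isHermitian W)).2.1 a
  rw [← hl a] at hi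
  have := (gram_eigenvalues_bounds (n := n) (ζ := 0) (W := W) i).1
  rw [← hi] at this
  exact nonneg_of_mul_nonneg_right this hn'

lemma IsGramSpec.le (hl : IsGramSpec n W l) (hn : 0 < n) {ζ : ℝ} (hW : GramLE n ζ W)
    (a : Fin q) : l a ≤ ζ := by
  have hn' : (0 : ℝ) < n := by exact_mod_cast hn
  obtain ⟨i, hi⟩ := (ithEigDesc_spec (gram_isHermitian W)).2.1 a
  rw [← hl a] at hi
  have := (gram_eigenvalues_bounds (W := W) i).2 hW
  rw [← hi] at this
  exact le_of_mul_le_mul_left this hn'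

lemma IsGramSpec.resTrace_eq (hl : IsGramSpec n W l) (hn : 0 < n) {ζ z : ℝ} (hW : GramLE n ζ W)
    (hz : ζ < z) : resTrace n z W = (∑ a, (z - l a)⁻¹) / n := by
  have hn' : (0 : ℝ) < n := by exact_mod_cast hn
  unfold resTrace
  congr 1
  rw [trace_inv_shiftGram]
  · rw [← (ithEigDesc_spec (gram_isHermitian W)).2.2 (fun t => (z - t / n)⁻¹)]
    refine Finset.sum_congr rfl fun a _ => ?_
    rw [← hl a, mul_div_cancel_left₀ _ hn'.ne']
  · intro i
    have := (gram_eigenvalues_bounds (W := W) i).2 hW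
    have h2 : (gram_isHermitian W).eigenvalues i / n ≤ ζ := by
      rw [div_le_iff₀ hn']; linarith
    linarith

end Spec

/-! ### Selecting the root of the Marchenko–Pastur equation -/

/-- The left side of the quadratic equation satisfied by the limiting normalised trace. -/
def mpPoly (c z x : ℝ) : ℝ := (1 - x) * (z * x - c) - x

lemma mpPoly_other_root {c z r t : ℝ} (hz : 0 < z) (hr0 : 0 < r) (hrt : r < t)
    (ht1 : t < 1) (hr : mpPoly c z r = 0) (ht : 0 < mpPoly c z t) :
    ∃ R, t < R ∧ R < 1 ∧ ∀ x, mpPoly c z x = -z * ((x - r) * (x - R)) := by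
  have hfac : ∀ x, mpPoly c z x = -z * ((x - r) * (x - c / (z * r))) := by
    intro x
    unfold mpPoly at hr ⊢
    have h1 : z + c - 1 = z * r + c / r := by
      field_simp
      linear_combination hr
    field_simp
    field_simp at h1
    linear_combination x * h1
  refine ⟨c / (z * r), ?_, ?_, hfac⟩
  · by_contra hle
    rw [hfac t] at ht
    have : 0 ≤ (t - r) * (t - c / (z * r)) := mul_nonneg (by linarith) (by linarith)
    nlinarith
  · by_contra hle
    have h1 : mpPoly c z 1 = -1 := by unfold mpPoly; ring
    rw [hfac 1] at h1
    have : 0 ≤ (1 - r) * (c / (z * r) - 1) := mul_nonneg (by linarith) (by linarith)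
    nlinarith

/-- Two decreasing approximate solutions at parameters `z₀ < z₁`: the second one follows the
small root. -/
lemma tendsto_small_root {c z₀ z₁ r₀ r₁ t : ℝ} (hz₀ : 0 < z₀) (hz : z₀ < z₁)
    (h₀ : 0 < r₀) (h₁ : 0 < r₁) (ht₀ : r₀ < t) (ht₁ : r₁ < t) (ht1 : t < 1)
    (hr₀ : mpPoly c z₀ r₀ = 0) (hr₁ : mpPoly c z₁ r₁ = 0)
    (hp₀ : 0 < mpPoly c z₀ t) (hp₁ : 0 < mpPoly c z₁ t) {x y : ℕ → ℝ}
    (hxy : ∀ᶠ n in atTop, y n ≤ x n)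
    (hx : Tendsto (fun n => mpPoly c z₀ (x n)) atTop (𝓝 0))
    (hy : Tendsto (fun n => mpPoly c z₁ (y n)) atTop (𝓝 0)) :
    Tendsto y atTop (𝓝 r₁) := by
  obtain ⟨R₀, hR0, hR0', hf0⟩ := mpPoly_other_root hz₀ h₀ ht₀ ht1 hr₀ hp₀
  obtain ⟨R₁, hR1, hR1', hf1⟩ := mpPoly_other_root (hz₀.trans hz) h₁ ht₁ ht1 hr₁ hp₁
  have hRR : R₀ < R₁ := by
    have e1 : mpPoly c z₁ R₁ = 0 := by rw [hf1]; ring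
    have e2 : mpPoly c z₀ R₁ = mpPoly c z₁ R₁ - (z₁ - z₀) * (R₁ * (1 - R₁)) := by
      unfold mpPoly; ring
    have e3 : 0 < (z₁ - z₀) * (R₁ * (1 - R₁)) :=
      mul_pos (by linarith) (mul_pos (by linarith) (by linarith))
    rw [hf0, e1] at e2
    have e4 : 0 < (R₁ - r₀) * (R₁ - R₀) := by
      by_contra hneg
      have : 0 ≤ -z₀ * ((R₁ - r₀) * (R₁ - R₀)) := by nlinarith
      linarith
    have := (mul_pos_iff_of_pos_left (by linarith : 0 < R₁ - r₀)).1 e4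
    linarith
  set κ := (R₁ - R₀) / 2 with hκ
  have hκ0 : 0 < κ := by rw [hκ]; linarith
  have hxs : ∀ᶠ n in atTop, x n < R₀ + κ := by
    have : ∀ᶠ n in atTop, -(z₀ * κ ^ 2) < mpPoly c z₀ (x n) :=
      hx.eventually_const_lt (by have : 0 < z₀ * κ ^ 2 := by positivity
                                 linarith)
    filter_upwards [this] with n hn
    by_contra hle
    rw [hf0] at hn
    have h5 : κ * κ ≤ (x n - r₀) * (x n - R₀) :=
      mul_le_mul (by linarith) (by linarith) hκ0.le (by linarith)
    nlinarith
  rw [← tendsto_sub_nhds_zero_iff]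
  have hbound : Tendsto (fun n => |mpPoly c z₁ (y n)| / (z₁ * κ)) atTop (𝓝 0) := by
    simpa using hy.abs.div_const (z₁ * κ)
  refine squeeze_zero_norm' ?_ hbound
  filter_upwards [hxs, hxy] with n h1 h2
  have hz1 : 0 < z₁ := hz₀.trans hz
  rw [le_div_iff₀ (by positivity), hf1, Real.norm_eq_abs, abs_mul, abs_neg, abs_mul,
    abs_of_pos hz1]
  have : κ ≤ |y n - R₁| := by
    rw [abs_sub_comm]
    exact le_trans (by rw [hκ] at h1 ⊢; linarith) (le_abs_self _)
  have h3 := mul_le_mul_of_nonneg_left this (abs_nonneg (y n - r₁))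
  nlinarith

/-! ### Convergence of the normalised trace of the resolvent -/

/-- Limit of the normalised resolvent trace, `-γ⁻¹ m(z)`. -/
def phiLim (γ z : ℝ) : ℝ := -(γ⁻¹ * mpStieltjes γ z)

lemma bGamma_eq (γ : ℝ) : bGamma γ = (1 + Real.sqrt γ⁻¹) ^ 2 := by
  unfold bGamma
  rw [Real.sqrt_inv, one_div]

lemma phiLim_spec {γ z : ℝ} (hγ : 1 ≤ γ) (hz : bGamma γ < z) :
    0 < phiLim γ z ∧ phiLim γ z < Real.sqrt γ⁻¹ / (1 + Real.sqrt γ⁻¹) ∧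
      mpPoly γ⁻¹ z (phiLim γ z) = 0 ∧
      0 < mpPoly γ⁻¹ z (Real.sqrt γ⁻¹ / (1 + Real.sqrt γ⁻¹)) ∧
      Real.sqrt γ⁻¹ / (1 + Real.sqrt γ⁻¹) < 1 := by
  obtain ⟨h1, h2, h3⟩ := mpStieltjes_spec hγ hz
  have hγ0 : 0 < γ⁻¹ := inv_pos.2 (by linarith)
  have es : 1 / Real.sqrt γ = Real.sqrt γ⁻¹ := by rw [Real.sqrt_inv, one_div]
  rw [es] at h2
  rw [bGamma_eq] at hz
  set s := Real.sqrt γ⁻¹ with hs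
  have hs0 : 0 < s := Real.sqrt_pos.2 hγ0
  have hs2 : s ^ 2 = γ⁻¹ := Real.sq_sqrt hγ0.le
  have hlt : s / (1 + s) < 1 := by rw [div_lt_one (by positivity)]; linarith
  refine ⟨h1, h2, ?_, ?_, hlt⟩
  · change z * phiLim γ z = γ⁻¹ + phiLim γ z / (1 - phiLim γ z) at h3
    change phiLim γ z < _ at h2
    have : 0 < 1 - phiLim γ z := by linarith
    unfold mpPoly
    rw [h3]
    field_simp
    ring
  · have : mpPoly γ⁻¹ z (s / (1 + s)) = s / (1 + s) ^ 2 * (z - (1 + s) ^ 2) := by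
      unfold mpPoly
      rw [← hs2]
      field_simp
      ring
    rw [this]
    exact mul_pos (by positivity) (by linarith)

lemma sum_inv_bounds {q : ℕ} {l : Fin q → ℝ} {ζ z : ℝ} (hl : ∀ a, l a ≤ ζ) (hz : ζ < z) :
    0 ≤ ∑ a, (z - l a)⁻¹ ∧ ∑ a, (z - l a)⁻¹ ≤ q * (z - ζ)⁻¹ := by
  constructor
  · exact Finset.sum_nonneg fun a _ => inv_nonneg.2 (by linarith [hl a])
  · calc ∑ a, (z - l a)⁻¹ ≤ ∑ _a : Fin q, (z - ζ)⁻¹ := by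
          refine Finset.sum_le_sum fun a _ => ?_
          exact inv_anti₀ (by linarith) (by linarith [hl a])
      _ = _ := by simp

lemma sum_inv_lipschitz {q : ℕ} {l : Fin q → ℝ} {ζ η z z' : ℝ} (hη : 0 < η) (hl : ∀ a, l a ≤ ζ)
    (hz : ζ + η ≤ z) (hz' : ζ + η ≤ z') :
    |∑ a, (z - l a)⁻¹ - ∑ a, (z' - l a)⁻¹| ≤ q * (|z - z'| / η ^ 2) := by
  rw [← Finset.sum_sub_distrib]
  refine (Finset.abs_sum_le_sum_abs _ _).trans ?_
  calc ∑ a, |(z - l a)⁻¹ - (z' - l a)⁻¹| ≤ ∑ _a : Fin q, |z - z'| / η ^ 2 := by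
        refine Finset.sum_le_sum fun a _ => ?_
        have h1 : η ≤ z - l a := by linarith [hl a]
        have h2 : η ≤ z' - l a := by linarith [hl a]
        have h1' : 0 < z - l a := by linarith
        have h2' : 0 < z' - l a := by linarith
        have e : (z - l a)⁻¹ - (z' - l a)⁻¹ = (z' - z) / ((z - l a) * (z' - l a)) := by
          field_simp
          ring
        rw [e, abs_div, abs_of_pos (mul_pos h1' h2'), abs_sub_comm, sq]
        gcongr
    _ = _ := by simp

section TraceLimit
variable {Ω : Type*} [MeasurableSpace Ω] {P : Measure Ω} [IsProbabilityMeasure P] {N Q : ℕ → ℕ}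

lemma ae_tendsto_trace_at
    (W : ∀ n, Ω → Matrix (Fin (N n)) (Fin (Q n)) ℝ)
    (hW : ∀ n, IIDGaussian P (fun ω => matEntries (W n ω)) 1) {γ : ℝ} (hγ : 1 ≤ γ)
    (hN : Tendsto (fun n : ℕ => (N n : ℝ) / n) atTop (𝓝 1))
    (hQ : Tendsto (fun n : ℕ => (Q n : ℝ) / n) atTop (𝓝 γ⁻¹))
    (l : ∀ n, Ω → Fin (Q n) → ℝ) (hl : ∀ n ω, IsGramSpec n (W n ω) (l n ω))
    {z : ℝ} (hz : bGamma γ < z) :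
    ∀ᵐ ω ∂P, Tendsto (fun n : ℕ => (∑ a, (z - l n ω a)⁻¹) / n) atTop (𝓝 (phiLim γ z)) := by
  have hc : 0 ≤ γ⁻¹ := inv_nonneg.2 (by linarith)
  obtain ⟨z₀, hz0, hz0'⟩ := exists_between hz
  obtain ⟨ζ, hζ, hζ'⟩ := exists_between hz0
  have hb : 0 ≤ bGamma γ := by unfold bGamma; positivity
  have hpoly : ∀ y, ζ < y → ∀ᵐ ω ∂P,
      Tendsto (fun n : ℕ => mpPoly γ⁻¹ y ((∑ a, (y - l n ω a)⁻¹) / n)) atTop (𝓝 0) := by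
    intro y hy
    have hyb : (1 + Real.sqrt γ⁻¹) ^ 2 < y := by rw [← bGamma_eq]; linarith
    filter_upwards [ae_resTrace_equation W hW hc hN hQ hyb,
      ae_gram_le W hW hc hN hQ (by rwa [← bGamma_eq])] with ω h1 h2
    have hdiff : Tendsto (fun n : ℕ => mpPoly γ⁻¹ y (resTrace n y (W n ω))
        - ((1 - resTrace n y (W n ω)) * (y * resTrace n y (W n ω) - Q n / n)
          - N n / n * resTrace n y (W n ω))) atTop (𝓝 0) := by
      set C := (γ⁻¹ + 1) * (y - ζ)⁻¹ with hC
      have hz1 : Tendsto (fun n : ℕ => (1 + C) * |(Q n : ℝ) / n - γ⁻¹| + C * |(N n : ℝ) / n - 1|)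
          atTop (𝓝 0) := by
        have e1 := ((tendsto_sub_nhds_zero_iff.2 hQ).abs.const_mul (1 + C)).add
          ((tendsto_sub_nhds_zero_iff.2 hN).abs.const_mul C)
        simpa using e1
      refine squeeze_zero_norm' ?_ hz1
      filter_upwards [h2, eventually_gt_atTop 0, hQ.eventually_lt_const
        (by linarith : γ⁻¹ < γ⁻¹ + 1)] with n a1 a2 a3
      have hn : (0 : ℝ) < n := by exact_mod_cast a2
      have hg : GramLE n ζ (W n ω) := a1
      have hb := sum_inv_bounds ((hl n ω).le a2 hg) hy
      rw [(hl n ω).resTrace_eq a2 hg hy]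
      set x := (∑ a, (y - l n ω a)⁻¹) / n with hx
      have hx0 : 0 ≤ x := div_nonneg hb.1 hn.le
      have hx1 : x ≤ C := by
        rw [hx, hC, div_le_iff₀ hn]
        rw [div_lt_iff₀ hn] at a3
        refine hb.2.trans ?_
        have : 0 < (y - ζ)⁻¹ := inv_pos.2 (by linarith)
        nlinarith
      have e : mpPoly γ⁻¹ y x - ((1 - x) * (y * x - Q n / n) - N n / n * x)
          = (1 - x) * ((Q n : ℝ) / n - γ⁻¹) + x * ((N n : ℝ) / n - 1) := by
        unfold mpPoly; ring
      rw [e, Real.norm_eq_abs]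
      refine (abs_add_le _ _).trans ?_
      rw [abs_mul, abs_mul, abs_of_nonneg hx0]
      have : |1 - x| ≤ 1 + C := by rw [abs_le]; constructor <;> linarith
      gcongr
    have hsum := h1.add hdiff
    simp only [add_zero, add_sub_cancel] at hsum
    refine hsum.congr' ?_
    filter_upwards [h2, eventually_gt_atTop 0] with n a1 a2
    rw [(hl n ω).resTrace_eq a2 a1 hy]
  filter_upwards [hpoly z₀ hζ', hpoly z (hζ'.trans hz0'),
    ae_gram_le W hW hc hN hQ (by rwa [← bGamma_eq])] with ω h1 h2 h3
  obtain ⟨p1, p2, p3, p4, p5⟩ := phiLim_spec hγ hz0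
  obtain ⟨q1, q2, q3, q4, -⟩ := phiLim_spec hγ hz
  refine tendsto_small_root (by linarith) hz0' p1 q1 p2 q2 p5 p3 q3 p4 q4 ?_ h1 h2
  filter_upwards [h3, eventually_gt_atTop 0] with n a1 a2
  have hle := (hl n ω).le a2 a1
  gcongr with a
  · linarith [hle a]

lemma phiLim_lipschitz
    (W : ∀ n, Ω → Matrix (Fin (N n)) (Fin (Q n)) ℝ)
    (hW : ∀ n, IIDGaussian P (fun ω => matEntries (W n ω)) 1) {γ : ℝ} (hγ : 1 ≤ γ)
    (hN : Tendsto (fun n : ℕ => (N n : ℝ) / n) atTop (𝓝 1))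
    (hQ : Tendsto (fun n : ℕ => (Q n : ℝ) / n) atTop (𝓝 γ⁻¹))
    (l : ∀ n, Ω → Fin (Q n) → ℝ) (hl : ∀ n ω, IsGramSpec n (W n ω) (l n ω))
    {ζ η z z' : ℝ} (hζ : bGamma γ < ζ) (hη : 0 < η) (hz : ζ + η ≤ z)
    (hz' : ζ + η ≤ z') : |phiLim γ z - phiLim γ z'| ≤ γ⁻¹ * (|z - z'| / η ^ 2) := by
  have hc : 0 ≤ γ⁻¹ := inv_nonneg.2 (by linarith)
  have h := ((ae_tendsto_trace_at W hW hγ hN hQ l hl (by linarith : bGamma γ < z)).and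
    (ae_tendsto_trace_at W hW hγ hN hQ l hl (by linarith : bGamma γ < z'))).and
    (ae_gram_le W hW hc hN hQ (by rwa [← bGamma_eq] : _ < ζ))
  obtain ⟨ω, ⟨h1, h2⟩, h3⟩ := h.exists
  refine le_of_tendsto_of_tendsto (h1.sub h2).abs (hQ.mul_const (|z - z'| / η ^ 2)) ?_
  filter_upwards [h3, eventually_gt_atTop 0] with n a1 a2
  have hn : (0 : ℝ) < n := by exact_mod_cast a2
  rw [← sub_div, abs_div, abs_of_pos hn, div_le_iff₀ hn]
  refine (sum_inv_lipschitz hη ((hl n ω).le a2 a1) hz hz').trans (le_of_eq ?_)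
  field_simp

lemma ae_tendsto_trace
    (W : ∀ n, Ω → Matrix (Fin (N n)) (Fin (Q n)) ℝ)
    (hW : ∀ n, IIDGaussian P (fun ω => matEntries (W n ω)) 1) {γ : ℝ} (hγ : 1 ≤ γ)
    (hN : Tendsto (fun n : ℕ => (N n : ℝ) / n) atTop (𝓝 1))
    (hQ : Tendsto (fun n : ℕ => (Q n : ℝ) / n) atTop (𝓝 γ⁻¹))
    (l : ∀ n, Ω → Fin (Q n) → ℝ) (hl : ∀ n ω, IsGramSpec n (W n ω) (l n ω)) :
    ∀ᵐ ω ∂P, ∀ z₀, bGamma γ < z₀ →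
      Tendsto (fun x : ℕ × ℝ => (∑ a, (x.2 - l x.1 ω a)⁻¹) / x.1) (atTop ×ˢ 𝓝 z₀)
        (𝓝 (phiLim γ z₀)) := by
  have hc : 0 ≤ γ⁻¹ := inv_nonneg.2 (by linarith)
  have hrat : ∀ᵐ ω ∂P, ∀ q : ℚ, bGamma γ < q →
      Tendsto (fun n : ℕ => (∑ a, ((q : ℝ) - l n ω a)⁻¹) / n) atTop (𝓝 (phiLim γ q)) := by
    rw [ae_all_iff]
    intro q
    by_cases hq : bGamma γ < q
    · filter_upwards [ae_tendsto_trace_at W hW hγ hN hQ l hl hq] with ω h _ using h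
    · exact ae_of_all _ fun ω h => absurd h hq
  have hgr : ∀ᵐ ω ∂P, ∀ q : ℚ, bGamma γ < q → ∀ᶠ n : ℕ in atTop, GramLE n q (W n ω) := by
    rw [ae_all_iff]
    intro q
    by_cases hq : bGamma γ < q
    · filter_upwards [ae_gram_le W hW hc hN hQ (by rwa [← bGamma_eq] : _ < (q : ℝ))] with ω h _
        using h
    · exact ae_of_all _ fun ω h => absurd h hq
  filter_upwards [hrat, hgr] with ω h1 h2 z₀ hz₀
  obtain ⟨ζ, hζ, hζ'⟩ := exists_rat_btwn hz₀
  set η := (z₀ - ζ) / 2 with hη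
  have hη0 : 0 < η := by rw [hη]; linarith
  rw [Metric.tendsto_nhds]
  intro ε hε
  set K := (γ⁻¹ + 1) / η ^ 2 with hK
  have hK0 : 0 < K := by positivity
  set δ := min η (ε / (8 * K)) with hδ
  have hδ0 : 0 < δ := lt_min hη0 (by positivity)
  have hδ1 : δ ≤ η := min_le_left _ _
  have hδ2 : δ * (8 * K) ≤ ε := by
    rw [← le_div_iff₀ (by positivity)]; exact min_le_right _ _
  obtain ⟨q, hq1, hq2⟩ := exists_rat_btwn (show z₀ - δ < z₀ by linarith)
  have hqb : bGamma γ < q := by linarith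
  have hlim := h1 q hqb
  rw [Metric.tendsto_nhds] at hlim
  have hz : ∀ᶠ x : ℕ × ℝ in atTop ×ˢ 𝓝 z₀, |x.2 - z₀| < δ :=
    Eventually.prod_inr (p := fun y : ℝ => |y - z₀| < δ) (Metric.ball_mem_nhds z₀ hδ0) _
  have hn : ∀ᶠ x : ℕ × ℝ in atTop ×ˢ 𝓝 z₀, GramLE x.1 ζ (W x.1 ω) ∧ 0 < x.1 ∧
      (Q x.1 : ℝ) / x.1 < γ⁻¹ + 1 ∧
      dist ((∑ a, ((q : ℝ) - l x.1 ω a)⁻¹) / x.1) (phiLim γ q) < ε / 4 := by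
    refine Eventually.prod_inl (p := fun n : ℕ => GramLE n ζ (W n ω) ∧ 0 < n ∧
      (Q n : ℝ) / n < γ⁻¹ + 1 ∧
      dist ((∑ a, ((q : ℝ) - l n ω a)⁻¹) / n) (phiLim γ q) < ε / 4) ?_ _
    filter_upwards [h2 ζ hζ, eventually_gt_atTop 0, hQ.eventually_lt_const
      (by linarith : γ⁻¹ < γ⁻¹ + 1), hlim (ε / 4) (by positivity)] with n a b c d
      using ⟨a, b, c, d⟩
  filter_upwards [hz, hn] with x hx ⟨a1, a2, a3, a4⟩
  have hn' : (0 : ℝ) < x.1 := by exact_mod_cast a2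
  rw [abs_lt] at hx
  have hqz : |x.2 - q| ≤ 2 * δ := by rw [abs_le]; constructor <;> linarith
  have hqz' : |(q : ℝ) - z₀| ≤ δ := by rw [abs_le]; constructor <;> linarith
  have s1 := sum_inv_lipschitz (z := x.2) (z' := q) hη0 ((hl x.1 ω).le a2 a1)
    (by rw [hη] at *; linarith) (by rw [hη] at *; linarith)
  have s2 := phiLim_lipschitz W hW hγ hN hQ l hl (z := q) (z' := z₀) hζ hη0
    (by rw [hη] at *; linarith) (by rw [hη] at *; linarith)
  have s3 : |(∑ a, (x.2 - l x.1 ω a)⁻¹) / x.1 - (∑ a, ((q : ℝ) - l x.1 ω a)⁻¹) / x.1|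
      ≤ K * (2 * δ) := by
    rw [← sub_div, abs_div, abs_of_pos hn', div_le_iff₀ hn']
    refine s1.trans ?_
    rw [div_lt_iff₀ hn'] at a3
    calc (Q x.1 : ℝ) * (|x.2 - q| / η ^ 2)
        ≤ ((γ⁻¹ + 1) * x.1) * ((2 * δ) / η ^ 2) := by gcongr
      _ = K * (2 * δ) * x.1 := by rw [hK]; ring
  have s4 : |phiLim γ q - phiLim γ z₀| ≤ K * δ := by
    refine s2.trans ?_
    calc γ⁻¹ * (|(q : ℝ) - z₀| / η ^ 2) ≤ (γ⁻¹ + 1) * (δ / η ^ 2) := by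
          gcongr
          linarith
      _ = K * δ := by rw [hK]; ring
  rw [Real.dist_eq] at a4 ⊢
  rw [abs_lt] at a4 ⊢
  rw [abs_le] at s3 s4
  constructor <;> nlinarith

end TraceLimit

/-! ### Weighted sums of Gaussian products with monotone weights -/

/-- Abel's inequality: nonincreasing nonnegative weights are controlled by the partial sums. -/
lemma abel_bound {q : ℕ} : ∀ {ρ ξ : Fin q → ℝ} {C B : ℝ}, Antitone ρ → (∀ a, 0 ≤ ρ a) →
    (∀ a, ρ a ≤ C) → 0 ≤ C → (∀ m ≤ q, |∑ a : Fin q, if (a : ℕ) < m then ξ a else 0| ≤ B) →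
    |∑ a, ρ a * ξ a| ≤ C * B := by
  induction q with
  | zero =>
    intro ρ ξ C B _ _ _ hC hB
    have := hB 0 le_rfl
    simp only [Finset.univ_eq_empty, Finset.sum_empty, abs_zero] at this ⊢
    positivity
  | succ q ih =>
    intro ρ ξ C B hρ h0 hle hC hB
    set r := ρ (Fin.last q) with hr
    have h1 := ih (ρ := fun a => ρ a.castSucc - r) (ξ := fun a => ξ a.castSucc) (C := C - r)
      (B := B) (fun a b hab => by
        have := hρ (Fin.castSucc_le_castSucc_iff.2 hab)
        simp only; linarith)
      (fun a => sub_nonneg.2 (hρ (Fin.le_last _)))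
      (fun a => by linarith [hle a.castSucc]) (by linarith [hle (Fin.last q)])
      (fun m hm => by
        have := hB m (by omega)
        rw [Fin.sum_univ_castSucc] at this
        simpa [not_lt.2 hm] using this)
    have h2 : |∑ a, ξ a| ≤ B := by
      have := hB (q + 1) le_rfl
      rwa [Finset.sum_congr rfl fun (a : Fin (q + 1)) _ => if_pos a.2] at this
    have e : ∑ a, ρ a * ξ a = ∑ a : Fin q, (ρ a.castSucc - r) * ξ a.castSucc + r * ∑ a, ξ a := by
      rw [Fin.sum_univ_castSucc, Fin.sum_univ_castSucc ξ, mul_add, Finset.mul_sum, ← add_assoc,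
        ← Finset.sum_add_distrib]
      congr 1
      refine Finset.sum_congr rfl fun a _ => by ring
    rw [e]
    refine (abs_add_le _ _).trans ?_
    rw [abs_mul, abs_of_nonneg (h0 (Fin.last q))]
    have := mul_le_mul_of_nonneg_left h2 (h0 (Fin.last q))
    nlinarith

/-- The symmetric matrix of the quadratic form `x ↦ ∑_{a < m} x (f a) x (g a)`. -/
def pairMat {ι : Type*} [DecidableEq ι] {q : ℕ} (f g : Fin q → ι) (m : ℕ) : Matrix ι ι ℝ :=
  ∑ a : Fin q, if (a : ℕ) < m then
    (1 / 2 : ℝ) • (Matrix.single (f a) (g a) 1 + Matrix.single (g a) (f a) 1) else 0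

lemma pairMat_isHermitian {ι : Type*} [DecidableEq ι] {q : ℕ} (f g : Fin q → ι) (m : ℕ) :
    (pairMat f g m).IsHermitian := by
  unfold IsHermitian pairMat
  rw [conjTranspose_sum]
  refine Finset.sum_congr rfl fun a _ => ?_
  split_ifs
  · simp [add_comm]
  · simp

section PairMat
variable {ι : Type*} [Fintype ι] [DecidableEq ι] {q : ℕ} (f g : Fin q → ι) (m : ℕ)

lemma dotProduct_single_mulVec (i j : ι) (x : ι → ℝ) :
    x ⬝ᵥ (Matrix.single i j (1 : ℝ)) *ᵥ x = x i * x j := by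
  simp [Matrix.single_mulVec, dotProduct, Function.update_apply]

lemma pairMat_quadForm (x : ι → ℝ) :
    x ⬝ᵥ pairMat f g m *ᵥ x = ∑ a : Fin q, if (a : ℕ) < m then x (f a) * x (g a) else 0 := by
  unfold pairMat
  rw [sum_mulVec, dotProduct_sum]
  refine Finset.sum_congr rfl fun a _ => ?_
  split_ifs
  · rw [smul_mulVec, add_mulVec, dotProduct_smul, dotProduct_add, dotProduct_single_mulVec,
      dotProduct_single_mulVec, smul_eq_mul]
    ring
  · simp

lemma pairMat_trace :
    (pairMat f g m).trace
      = ∑ a : Fin q, if (a : ℕ) < m then (if f a = g a then 1 else 0) else 0 := by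
  unfold pairMat
  rw [trace_sum]
  refine Finset.sum_congr rfl fun a _ => ?_
  split_ifs with h1 h2
  · rw [h2]
    simp [trace_add]
    norm_num
  · simp [trace_add, Matrix.trace_single_eq_of_ne _ _ _ h2,
      Matrix.trace_single_eq_of_ne _ _ _ (Ne.symm h2)]
  · simp

lemma pairMat_le (hf : Function.Injective f) (hg : Function.Injective g) (x : ι → ℝ) :
    |x ⬝ᵥ pairMat f g m *ᵥ x| ≤ x ⬝ᵥ x := by
  rw [pairMat_quadForm]
  refine (Finset.abs_sum_le_sum_abs _ _).trans ?_
  have hinj : ∀ {h : Fin q → ι}, Function.Injective h → ∑ a, x (h a) ^ 2 ≤ x ⬝ᵥ x := by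
    intro h hh
    have : x ⬝ᵥ x = ∑ i, x i ^ 2 := by simp [dotProduct, sq]
    rw [this]
    refine (Finset.sum_map Finset.univ ⟨h, hh⟩ (fun i => x i ^ 2)).symm.le.trans ?_
    exact Finset.sum_le_univ_sum_of_nonneg fun i => sq_nonneg _
  have h1 := hinj hf
  have h2 := hinj hg
  have h3 : ∀ a : Fin q, |if (a : ℕ) < m then x (f a) * x (g a) else 0|
      ≤ 1 / 2 * (x (f a) ^ 2 + x (g a) ^ 2) := by
    intro a
    split_ifs
    · rw [abs_le]
      constructor <;> nlinarith [sq_nonneg (x (f a) + x (g a)), sq_nonneg (x (f a) - x (g a))]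
    · rw [abs_zero]; positivity
  refine (Finset.sum_le_sum fun a _ => h3 a).trans ?_
  rw [← Finset.mul_sum, Finset.sum_add_distrib]
  linarith

end PairMat

/-- Uniform law of large numbers for the partial sums of products of entries of a Gaussian
vector. -/
lemma ae_partial_sums {Ω : Type*} [MeasurableSpace Ω] {P : Measure Ω} [IsProbabilityMeasure P]
    {ι : ℕ → Type*} [∀ n, Fintype (ι n)] (X : ∀ n, Ω → ι n → ℝ)
    (hX : ∀ n, IIDGaussian P (X n) 1) {L : ℝ} (hL : 0 < L)
    (hcard : ∀ᶠ n : ℕ in atTop, (Fintype.card (ι n) : ℝ) ≤ L * n) {q : ℕ → ℕ}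
    (f g : ∀ n, Fin (q n) → ι n) (hf : ∀ n, Function.Injective (f n))
    (hg : ∀ n, Function.Injective (g n)) (t : ∀ n, Fin (q n) → ℝ)
    (ht : ∀ n a, (f n a = g n a ∧ t n a = 1) ∨ (f n a ≠ g n a ∧ t n a = 0)) :
    ∀ᵐ ω ∂P, ∀ ε > 0, ∀ᶠ n : ℕ in atTop, ∀ m ≤ q n,
      |∑ a : Fin (q n), if (a : ℕ) < m then X n ω (f n a) * X n ω (g n a) - t n a else 0|
        ≤ ε * n := by
  classical
  have key : ∀ j : ℕ, ∀ᵐ ω ∂P, ∀ᶠ n : ℕ in atTop, ∀ m ≤ q n,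
      |∑ a : Fin (q n), if (a : ℕ) < m then X n ω (f n a) * X n ω (g n a) - t n a else 0|
        ≤ 1 / ((j : ℝ) + 1) * n := by
    intro j
    set ε := 1 / ((j : ℝ) + 1) with hε
    have hε0 : 0 < ε := by positivity
    have hbound : ∀ᶠ n : ℕ in atTop, P {ω | ∃ m : Fin (q n + 1), X n ω ∈ {x : ι n → ℝ |
        ε * n ≤ |x ⬝ᵥ pairMat (f n) (g n) m *ᵥ x - (pairMat (f n) (g n) m).trace|}}
        ≤ ENNReal.ofReal ((2 * (L + 1)) * ((n : ℝ) ^ 1 * Real.exp (-cRate ε L * n))) := by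
      filter_upwards [hcard, eventually_ge_atTop 1] with n h1 h2
      have hn : (1 : ℝ) ≤ n := by exact_mod_cast h2
      rw [Set.ofPred_exists]
      refine (measure_iUnion_le _).trans ?_
      rw [tsum_fintype]
      have hi : ∀ m : Fin (q n + 1), P {ω | X n ω ∈ {x : ι n → ℝ |
          ε * n ≤ |x ⬝ᵥ pairMat (f n) (g n) m *ᵥ x - (pairMat (f n) (g n) m).trace|}}
          ≤ ENNReal.ofReal (2 * Real.exp (-(cRate ε L * n))) := fun m =>
        ((hX n).measure_le _).trans
          (quadForm_tail_rate _ (pairMat_isHermitian (f n) (g n) m)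
            (pairMat_le (f n) (g n) m (hf n) (hg n)) hε0 hL (by linarith) le_rfl h1)
      refine (Finset.sum_le_sum fun m _ => hi m).trans ?_
      rw [Finset.sum_const, Finset.card_univ, Fintype.card_fin, ← ENNReal.ofReal_nsmul]
      refine ENNReal.ofReal_le_ofReal ?_
      rw [nsmul_eq_mul, neg_mul, pow_one]
      have he := Real.exp_pos (-(cRate ε L * n))
      have hq : (q n : ℝ) ≤ L * n := by
        refine le_trans ?_ h1
        have := Fintype.card_le_of_injective _ (hf n)
        rw [Fintype.card_fin] at this
        exact_mod_cast this
      push_cast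
      have h3 : (q n : ℝ) + 1 ≤ (L + 1) * n := by nlinarith
      calc ((q n : ℝ) + 1) * (2 * Real.exp (-(cRate ε L * n)))
          ≤ ((L + 1) * n) * (2 * Real.exp (-(cRate ε L * n))) := by gcongr
        _ = _ := by ring
    filter_upwards [ae_eventually_of_exp_bound 1 (cRate_pos hε0 hL) hbound] with ω hω
    filter_upwards [hω] with n hn m hm
    by_contra hlt
    refine hn ⟨⟨m, by omega⟩, ?_⟩
    simp only
    rw [pairMat_quadForm, pairMat_trace, ← Finset.sum_sub_distrib]
    refine (not_le.1 hlt).le.trans (le_of_eq ?_)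
    congr 1
    refine Finset.sum_congr rfl fun a _ => ?_
    split_ifs with h1 h2
    · rcases ht n a with h | h
      · rw [h.2]
      · exact absurd h2 h.1
    · rcases ht n a with h | h
      · exact absurd h.1 h2
      · rw [h.2]
    · simp
  filter_upwards [ae_all_iff.2 key] with ω hω ε hε
  obtain ⟨j, hj⟩ := exists_nat_one_div_lt hε
  filter_upwards [hω j] with n hn m hm
  refine (hn m hm).trans ?_
  gcongr

/-- Weighted sums of products of Gaussian entries concentrate, uniformly over nonincreasing
weights with values in `[0, C]`. -/
lemma tendsto_weighted_of_partial {q : ℕ → ℕ} {ξ : ∀ n, Fin (q n) → ℝ}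
    (hξ : ∀ ε > 0, ∀ᶠ n : ℕ in atTop, ∀ m ≤ q n,
      |∑ a : Fin (q n), if (a : ℕ) < m then ξ n a else 0| ≤ ε * n)
    {𝓕 : Filter ℝ} {ρ : ∀ n, ℝ → Fin (q n) → ℝ} {C : ℝ} (hC : 0 ≤ C)
    (hρ : ∀ᶠ x : ℕ × ℝ in atTop ×ˢ 𝓕, Antitone (ρ x.1 x.2) ∧ (∀ a, 0 ≤ ρ x.1 x.2 a) ∧
      ∀ a, ρ x.1 x.2 a ≤ C) :
    Tendsto (fun x : ℕ × ℝ => (∑ a, ρ x.1 x.2 a * ξ x.1 a) / x.1) (atTop ×ˢ 𝓕) (𝓝 0) := by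
  rw [Metric.tendsto_nhds]
  intro ε hε
  have h1 := (hξ (ε / (2 * (C + 1))) (by positivity)).and (eventually_gt_atTop 0)
  filter_upwards [hρ, Eventually.prod_inl h1 𝓕] with x ⟨a1, a2, a3⟩ ⟨b1, b2⟩
  have hn : (0 : ℝ) < x.1 := by exact_mod_cast b2
  have := abel_bound a1 a2 a3 hC b1
  rw [Real.dist_0_eq_abs, abs_div, abs_of_pos hn, div_lt_iff₀ hn]
  refine this.trans_lt ?_
  have e : C * (ε / (2 * (C + 1)) * x.1) = (C / (2 * (C + 1))) * (ε * x.1) := by ring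
  rw [e]
  have : C / (2 * (C + 1)) < 1 := by rw [div_lt_one (by positivity)]; linarith
  nlinarith [mul_pos hε hn]

/-- Independent Gaussian vectors form a Gaussian vector. -/
lemma IIDGaussian.sum {Ω A B : Type*} [MeasurableSpace Ω] [Fintype A] [Fintype B]
    {P : Measure Ω} [IsProbabilityMeasure P] {X : Ω → A → ℝ} {Y : Ω → B → ℝ}
    (hX : IIDGaussian P X 1) (hY : IIDGaussian P Y 1) (h : IndepFun X Y P) :
    IIDGaussian P (fun ω => Sum.elim (X ω) (Y ω)) 1 := by
  have mX : AEMeasurable X P := by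
    by_contra hc
    have h0 : Measure.map X P = 0 := Measure.map_of_not_aemeasurable hc
    unfold IIDGaussian at hX
    rw [h0] at hX
    exact IsProbabilityMeasure.ne_zero (stdG A) hX.symm
  have mY : AEMeasurable Y P := by
    by_contra hc
    have h0 : Measure.map Y P = 0 := Measure.map_of_not_aemeasurable hc
    unfold IIDGaussian at hY
    rw [h0] at hY
    exact IsProbabilityMeasure.ne_zero (stdG B) hY.symm
  have hprod := (indepFun_iff_map_prod_eq_prod_map_map mX mY).1 h
  unfold IIDGaussian at hX hY ⊢
  rw [hX, hY] at hprod
  have hmp := (measurePreserving_sumPiEquivProdPi_symm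
    (fun _ : A ⊕ B => gaussianReal 0 1)).map_eq
  have e : (fun ω => Sum.elim (X ω) (Y ω))
      = (MeasurableEquiv.sumPiEquivProdPi (fun _ : A ⊕ B => ℝ)).symm ∘ fun ω => (X ω, Y ω) := by
    funext ω
    ext s
    cases s <;> rfl
  rw [e, ← AEMeasurable.map_map_of_aemeasurable (MeasurableEquiv.measurable _).aemeasurable
    (mX.prodMk mY), hprod]
  exact hmp

/-! ### Entrywise limits of the noise blocks -/

lemma tendsto_weighted_sum {q : ℕ → ℕ} {ξ : ∀ n, Fin (q n) → ℝ} {t : ℝ}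
    (hξ : ∀ ε > 0, ∀ᶠ n : ℕ in atTop, ∀ m ≤ q n,
      |∑ a : Fin (q n), if (a : ℕ) < m then ξ n a - t else 0| ≤ ε * n)
    {𝓕 : Filter ℝ} {ρ : ∀ n, ℝ → Fin (q n) → ℝ} {C r : ℝ} (hC : 0 ≤ C)
    (hρ : ∀ᶠ x : ℕ × ℝ in atTop ×ˢ 𝓕, Antitone (ρ x.1 x.2) ∧ (∀ a, 0 ≤ ρ x.1 x.2 a) ∧
      ∀ a, ρ x.1 x.2 a ≤ C)
    (hr : Tendsto (fun x : ℕ × ℝ => t * ((∑ a, ρ x.1 x.2 a) / x.1)) (atTop ×ˢ 𝓕) (𝓝 r)) :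
    Tendsto (fun x : ℕ × ℝ => (∑ a, ρ x.1 x.2 a * ξ x.1 a) / x.1) (atTop ×ˢ 𝓕) (𝓝 r) := by
  have h := (tendsto_weighted_of_partial hξ hC hρ).add hr
  rw [zero_add] at h
  refine h.congr fun x => ?_
  rw [← mul_div_assoc, ← add_div, Finset.mul_sum, ← Finset.sum_add_distrib]
  congr 1
  exact Finset.sum_congr rfl fun a _ => by ring

/-- Partial-sum law of large numbers for all pairs of a finite family of disjoint blocks of
coordinates of a Gaussian vector. -/
lemma ae_block_sums {Ω : Type*} [MeasurableSpace Ω] {P : Measure Ω} [IsProbabilityMeasure P]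
    {ι : ℕ → Type*} [∀ n, Fintype (ι n)] (X : ∀ n, Ω → ι n → ℝ)
    (hX : ∀ n, IIDGaussian P (X n) 1) {r : ℕ → ℕ} {K c : ℝ} (hK : 0 ≤ K)
    (hcard : ∀ n, (Fintype.card (ι n) : ℝ) ≤ K * r n)
    (hr : Tendsto (fun n : ℕ => (r n : ℝ) / n) atTop (𝓝 c)) {J : Type*} [Fintype J] [DecidableEq J]
    (f : ∀ n, J → Fin (r n) → ι n) (hf : ∀ n i a j b, f n i a = f n j b → i = j ∧ a = b) :
    ∀ᵐ ω ∂P, ∀ i j : J, ∀ ε > 0, ∀ᶠ n : ℕ in atTop, ∀ m ≤ r n,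
      |∑ a : Fin (r n), if (a : ℕ) < m then
        X n ω (f n i a) * X n ω (f n j a) - (if i = j then 1 else 0) else 0| ≤ ε * n := by
  have hc : 0 ≤ c := ge_of_tendsto' hr fun n => by positivity
  refine ae_all_iff.2 fun i => ae_all_iff.2 fun j => ?_
  refine ae_partial_sums X hX (L := K * (c + 1) + 1) (by positivity) ?_ (fun n => f n i)
    (fun n => f n j) (fun n a b h => (hf n _ _ _ _ h).2) (fun n a b h => (hf n _ _ _ _ h).2)
    (fun n _ => if i = j then 1 else 0) ?_
  · filter_upwards [hr.eventually_lt_const (lt_add_one c), eventually_gt_atTop 0] with n h1 h2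
    have hn : (0 : ℝ) < n := by exact_mod_cast h2
    rw [div_lt_iff₀ hn] at h1
    have := mul_le_mul_of_nonneg_left h1.le hK
    linarith [hcard n]
  · intro n a
    by_cases h : i = j
    · left; simp [h]
    · right; exact ⟨fun h' => h (hf n _ _ _ _ h').1, by simp [h]⟩

lemma tendsto_dims {γ : ℝ} (hγ : 1 ≤ γ) {p : ℕ → ℕ} (k : ℕ)
    (h : Tendsto (fun n : ℕ => Real.sqrt n * ((n : ℝ) / (p n) - γ)) atTop (𝓝 0))
    (hp : Tendsto p atTop atTop) :
    Tendsto (fun n : ℕ => ((n - k : ℕ) : ℝ) / n) atTop (𝓝 1) ∧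
    Tendsto (fun n : ℕ => ((p n - k : ℕ) : ℝ) / n) atTop (𝓝 γ⁻¹) ∧
    Tendsto (fun n : ℕ => ((n - p n : ℕ) : ℝ) / n) atTop (𝓝 (1 - γ⁻¹)) := by
  have hγ0 : 0 < γ := by linarith
  have h1 : Tendsto (fun n : ℕ => (n : ℝ) / (p n)) atTop (𝓝 γ) := by
    have hs : Tendsto (fun n : ℕ => (Real.sqrt n)⁻¹) atTop (𝓝 0) :=
      tendsto_inv_atTop_zero.comp (Real.tendsto_sqrt_atTop.comp tendsto_natCast_atTop_atTop)
    have := (hs.mul h).add_const γ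
    rw [zero_mul, zero_add] at this
    refine this.congr' ?_
    filter_upwards [eventually_gt_atTop 0] with n hn
    have : 0 < Real.sqrt n := Real.sqrt_pos.2 (by exact_mod_cast hn)
    field_simp
    ring
  have h2 : Tendsto (fun n : ℕ => (p n : ℝ) / n) atTop (𝓝 γ⁻¹) := by
    refine (h1.inv₀ hγ0.ne').congr fun n => by rw [inv_div]
  have hk : Tendsto (fun n : ℕ => (k : ℝ) / n) atTop (𝓝 0) :=
    tendsto_const_div_atTop_nhds_zero_nat _
  refine ⟨?_, ?_, ?_⟩
  · have := hk.const_sub 1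
    rw [sub_zero] at this
    refine this.congr' ?_
    filter_upwards [eventually_ge_atTop k, eventually_gt_atTop 0] with n a1 a2
    have hn : (0 : ℝ) < n := by exact_mod_cast a2
    rw [Nat.cast_sub a1, sub_div, div_self hn.ne']
  · have := h2.sub hk
    rw [sub_zero] at this
    refine this.congr' ?_
    filter_upwards [hp.eventually_ge_atTop k] with n a1
    rw [Nat.cast_sub a1, sub_div]
  · have := (h2.const_sub 1).max (tendsto_const_nhds (x := (0 : ℝ)))
    rw [max_eq_left (sub_nonneg.2 (inv_le_one_of_one_le₀ hγ))] at this
    refine this.congr' ?_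
    filter_upwards [eventually_gt_atTop 0] with n a2
    have hn : (0 : ℝ) < n := by exact_mod_cast a2
    rcases le_total (p n) n with h | h
    · rw [Nat.cast_sub h, sub_div, div_self hn.ne', max_eq_left]
      rw [sub_nonneg, div_le_one hn]
      exact_mod_cast h
    · rw [Nat.sub_eq_zero_of_le h, max_eq_right]
      · simp
      · rw [sub_nonpos, one_le_div hn]
        exact_mod_cast h

/-! ### The Schur complement through the Woodbury identity -/

lemma schur_expand {κ q : Type*} [Fintype κ] [DecidableEq κ] [Fintype q] [DecidableEq q]
    (B : Matrix q q ℝ) (hB : IsUnit B) (F : Matrix κ q ℝ)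
    (hQ : IsUnit (1 + F * B⁻¹ * Fᵀ)) (D D' : Matrix κ κ ℝ) (H : Matrix q κ ℝ) (H' : Matrix κ q ℝ) :
    (D' * F + H') * (B + Fᵀ * F)⁻¹ * (Fᵀ * D + H)
      = D' * (F * B⁻¹ * Fᵀ) * D + D' * (F * B⁻¹ * H) + (H' * B⁻¹ * Fᵀ) * D + H' * B⁻¹ * H
        - (D' * (F * B⁻¹ * Fᵀ) + H' * B⁻¹ * Fᵀ) * (1 + F * B⁻¹ * Fᵀ)⁻¹
          * ((F * B⁻¹ * Fᵀ) * D + F * B⁻¹ * H) := by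
  have h := Matrix.add_mul_mul_inv_eq_sub B Fᵀ (1 : Matrix κ κ ℝ) F hB isUnit_one
    (by rwa [inv_one])
  rw [Matrix.mul_one, inv_one] at h
  rw [h]
  generalize (1 + F * B⁻¹ * Fᵀ)⁻¹ = S
  simp only [Matrix.mul_add, Matrix.add_mul, Matrix.mul_sub, Matrix.sub_mul, Matrix.mul_assoc]
  abel

lemma tendsto_matrix_inv {X κ : Type*} [Fintype κ] [DecidableEq κ] {𝓕 : Filter X}
    {f : X → Matrix κ κ ℝ} {A : Matrix κ κ ℝ} (hf : Tendsto f 𝓕 (𝓝 A)) (hA : A.det ≠ 0) :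
    Tendsto (fun x => (f x)⁻¹) 𝓕 (𝓝 A⁻¹) := by
  have hd : Tendsto (fun x => (f x).det) 𝓕 (𝓝 A.det) :=
    ((continuous_id.matrix_det).tendsto A).comp hf
  have ha : Tendsto (fun x => (f x).adjugate) 𝓕 (𝓝 A.adjugate) :=
    ((continuous_id.matrix_adjugate).tendsto A).comp hf
  simp only [Matrix.inv_def, Ring.inverse_eq_inv']
  exact (hd.inv₀ hA).smul ha

/-- The entries of the sandwich of a diagonal resolvent. -/
lemma sandwich_apply {κ : Type*} {q : ℕ} (s : ℝ) (A : Matrix κ (Fin q) ℝ) (w : Fin q → ℝ)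
    (B : Matrix (Fin q) κ ℝ) (i j : κ) :
    ((s • A) * Matrix.diagonal w * (s • B)) i j = s ^ 2 * ∑ a, w a * (A i a * B a j) := by
  rw [Matrix.mul_apply, Finset.mul_sum]
  refine Finset.sum_congr rfl fun a _ => ?_
  rw [Matrix.mul_diagonal]
  simp only [Matrix.smul_apply, smul_eq_mul]
  ring

/-! ### Passing to the limit in the secular matrix -/

lemma weight_props {q : ℕ} {l : Fin q → ℝ} {ζ η z : ℝ} (ha : Antitone l) (h0 : ∀ a, 0 ≤ l a)
    (hle : ∀ a, l a ≤ ζ) (hη : 0 < η) (hz : ζ + η ≤ z) {g : ℝ → ℝ} (hg : Monotone g)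
    (hg0 : ∀ x, 0 ≤ x → 0 ≤ g x) :
    Antitone (fun a => g (l a) * (z - l a)⁻¹) ∧ (∀ a, 0 ≤ g (l a) * (z - l a)⁻¹) ∧
      ∀ a, g (l a) * (z - l a)⁻¹ ≤ g ζ * η⁻¹ := by
  have hpos : ∀ a, η ≤ z - l a := fun a => by linarith [hle a]
  refine ⟨fun a b hab => ?_, fun a => ?_, fun a => ?_⟩
  · have h1 := ha hab
    refine mul_le_mul (hg h1) ?_ (inv_nonneg.2 (hη.le.trans (hpos b))) (hg0 _ (h0 a))
    exact inv_anti₀ (hη.trans_le (hpos a)) (by linarith)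
  · exact mul_nonneg (hg0 _ (h0 a)) (inv_nonneg.2 (hη.le.trans (hpos a)))
  · refine mul_le_mul (hg (hle a)) (inv_anti₀ hη (hpos a)) (inv_nonneg.2 (hη.le.trans (hpos a))) ?_
    exact hg0 _ ((h0 a).trans (hle a))

/-- Limit of `(1/n) A g(Λ) (Λ - z)⁻¹ B`, jointly in `n → ∞` and `z → z₀`, when the products of
the entries of `A` and `B` obey a law of large numbers with means `τ`. -/
lemma tendsto_sandwich {κ : Type*} {q : ℕ → ℕ} {l : ∀ n, Fin (q n) → ℝ} {b z₀ : ℝ} (hb : 0 ≤ b)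
    (hz₀ : b < z₀) (ha : ∀ n, 0 < n → Antitone (l n)) (h0 : ∀ n, 0 < n → ∀ a, 0 ≤ l n a)
    (hle : ∀ ζ, b < ζ → ∀ᶠ n in atTop, ∀ a, l n a ≤ ζ) {A : ∀ n, Matrix κ (Fin (q n)) ℝ}
    {B : ∀ n, Matrix (Fin (q n)) κ ℝ} {τ Rm : Matrix κ κ ℝ}
    (hAB : ∀ i j, ∀ ε > 0, ∀ᶠ n : ℕ in atTop, ∀ m ≤ q n,
      |∑ a : Fin (q n), if (a : ℕ) < m then A n i a * B n a j - τ i j else 0| ≤ ε * n)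
    {g : ℝ → ℝ} (hg : Monotone g) (hg0 : ∀ x, 0 ≤ x → 0 ≤ g x)
    (hr : ∀ i j, Tendsto (fun x : ℕ × ℝ =>
      τ i j * ((∑ a, g (l x.1 a) * (x.2 - l x.1 a)⁻¹) / x.1)) (atTop ×ˢ 𝓝 z₀) (𝓝 (Rm i j))) :
    Tendsto (fun x : ℕ × ℝ => ((1 / Real.sqrt x.1) • A x.1)
      * Matrix.diagonal (fun a => g (l x.1 a) * (l x.1 a - x.2)⁻¹)
      * ((1 / Real.sqrt x.1) • B x.1)) (atTop ×ˢ 𝓝 z₀) (𝓝 (-Rm)) := by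
  refine tendsto_pi_nhds.2 fun i => tendsto_pi_nhds.2 fun j => ?_
  set η := (z₀ - b) / 3 with hη
  have hη0 : 0 < η := by rw [hη]; linarith
  have h := tendsto_weighted_sum (𝓕 := 𝓝 z₀) (ρ := fun n z a => g (l n a) * (z - l n a)⁻¹)
    (ξ := fun n a => A n i a * B n a j) (hAB i j) (C := g (b + η) * η⁻¹)
    (mul_nonneg (hg0 _ (by linarith)) (inv_nonneg.2 hη0.le)) (by
      have h1 := (hle (b + η) (by linarith)).and (eventually_gt_atTop 0)
      have h2 : ∀ᶠ z in 𝓝 z₀, b + η + η < z := lt_mem_nhds (by rw [hη]; linarith)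
      filter_upwards [h1.prod_mk h2] with x ⟨⟨a1, a2⟩, a3⟩
      exact weight_props (ha _ a2) (h0 _ a2) a1 hη0 a3.le hg hg0) (hr i j)
  refine h.neg.congr fun x => ?_
  rw [sandwich_apply, div_pow, one_pow, Real.sq_sqrt (Nat.cast_nonneg _), neg_div', div_eq_mul_inv,
    mul_comm, one_div, ← Finset.sum_neg_distrib]
  congr 1
  refine Finset.sum_congr rfl fun a _ => ?_
  rw [← neg_sub (x.2) (l x.1 a), inv_neg]
  ring

/-- Limit of `(1/n) Eᵀ E` when the products of the entries of `E` obey a law of large numbers. -/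
lemma tendsto_gram {κ : Type*} [DecidableEq κ] {q : ℕ → ℕ} {E : ∀ n, Matrix (Fin (q n)) κ ℝ}
    (hE : ∀ i j : κ, ∀ ε > 0, ∀ᶠ n : ℕ in atTop, ∀ m ≤ q n,
      |∑ a : Fin (q n), if (a : ℕ) < m then E n a i * E n a j - (if i = j then 1 else 0) else 0|
        ≤ ε * n) {c : ℝ} (hc : Tendsto (fun n : ℕ => (q n : ℝ) / n) atTop (𝓝 c)) :
    Tendsto (fun n : ℕ => (1 / (n : ℝ)) • ((E n)ᵀ * E n)) atTop (𝓝 (c • 1)) := by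
  refine tendsto_pi_nhds.2 fun i => tendsto_pi_nhds.2 fun j => ?_
  have h := tendsto_weighted_sum (𝓕 := pure 0) (ρ := fun n _ _ => 1)
    (ξ := fun n a => E n a i * E n a j) (hE i j) (C := 1) (r := (if i = j then 1 else 0) * c)
    zero_le_one (Eventually.of_forall fun x => ⟨antitone_const, by simp, by simp⟩) (by
      refine Tendsto.const_mul _ ((hc.comp tendsto_fst).congr fun x => ?_)
      simp)
  have h2 := h.comp (tendsto_id.prodMk (tendsto_const_pure (a := (atTop : Filter ℕ)) (b := (0 : ℝ))))
  have e : (c • (1 : Matrix κ κ ℝ)) i j = (if i = j then 1 else 0) * c := by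
    simp [Matrix.one_apply]
  rw [e]
  refine h2.congr fun n => ?_
  simp [Matrix.mul_apply, div_eq_inv_mul]

/-- Algebraic form of the limit, by the quadratic equation of the Marchenko–Pastur transform. -/
lemma limit_identity {k : ℕ} {γ z : ℝ} (hγ : 1 ≤ γ) (hz : bGamma γ < z) {μ : Fin k → ℝ}
    (hμ : ∀ i, 0 < μ i) :
    let φ := phiLim γ z
    let D : Matrix (Fin k) (Fin k) ℝ := Matrix.diagonal fun i => Real.sqrt (μ i)
    let Q : Matrix (Fin k) (Fin k) ℝ := -(φ • 1)
    (Matrix.diagonal μ + 1) - z • 1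
      - (D * Q * D + D * 0 + 0 * D + -((z * φ - γ⁻¹) • 1)
        - (D * Q + 0) * (1 + Q)⁻¹ * (Q * D + 0)) = T0lim γ μ z := by
  intro φ D Q
  obtain ⟨h1, h2, h3, -, h4⟩ := phiLim_spec hγ hz
  have hφ1 : 1 - φ ≠ 0 := by
    have : φ < 1 := h2.trans h4
    linarith
  have hγ0 : γ ≠ 0 := by linarith
  have hm : mpStieltjes γ z = -(γ * φ) := by
    simp only [φ, phiLim]
    field_simp
  have hinv : (1 + Q)⁻¹ = (1 - φ)⁻¹ • (1 : Matrix (Fin k) (Fin k) ℝ) := by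
    refine Matrix.inv_eq_right_inv ?_
    have : 1 + Q = (1 - φ) • (1 : Matrix (Fin k) (Fin k) ℝ) := by
      rw [sub_smul, one_smul, sub_eq_add_neg]
    rw [this, Matrix.smul_mul, Matrix.one_mul, smul_smul, mul_inv_cancel₀ hφ1, one_smul]
  have hDD : D * D = Matrix.diagonal μ := by
    simp only [D, Matrix.diagonal_mul_diagonal]
    congr 1
    ext i
    exact Real.mul_self_sqrt (hμ i).le
  have hφ0 : φ ≠ 0 := h1.ne'
  rw [hinv]
  simp only [Q, T0lim, hm, Matrix.mul_zero, Matrix.zero_mul, add_zero, Matrix.mul_neg,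
    Matrix.neg_mul, Matrix.mul_smul, Matrix.smul_mul, Matrix.mul_one, Matrix.one_mul, hDD,
    neg_neg, smul_neg]
  have hp : (1 - φ) * (z * φ - γ⁻¹) - φ = 0 := h3
  have e1 : (1 + γ⁻¹ * -(γ * φ))⁻¹ = 1 + φ + φ * ((1 - φ)⁻¹ * φ) := by
    have : 1 + γ⁻¹ * -(γ * φ) = 1 - φ := by field_simp; ring
    rw [this]
    field_simp
    ring
  have e2 : (-(γ * φ))⁻¹ = 1 - z + (z * φ - γ⁻¹) := by
    field_simp
    field_simp at hp
    linarith
  rw [e1, e2]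
  module

/-- Joint convergence `F n z → f z₀` as `n → ∞`, `z → z₀`, at each `z₀` of a compact interval
forces uniform convergence. -/
lemma uniform_of_joint {F : ℕ → ℝ → ℝ} {f : ℝ → ℝ} {u v : ℝ}
    (h : ∀ z ∈ Set.Icc u v,
      Tendsto (fun x : ℕ × ℝ => F x.1 x.2) (atTop ×ˢ 𝓝 z) (𝓝 (f z))) :
    TendstoUniformlyOn F f atTop (Set.Icc u v) := by
  rw [← tendstoLocallyUniformlyOn_iff_tendstoUniformlyOn_of_compact isCompact_Icc,
    tendstoLocallyUniformlyOn_iff_filter]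
  intro z hz
  have hpt : ∀ w ∈ Set.Icc u v, Tendsto (fun n => F n w) atTop (𝓝 (f w)) := fun w hw =>
    (h w hw).comp (tendsto_id.prodMk (tendsto_const_nhds (x := w)))
  have hF : Tendsto (fun x : ℕ × ℝ => F x.1 x.2) (atTop ×ˢ 𝓝[Set.Icc u v] z) (𝓝 (f z)) :=
    (h z hz).mono_left (Filter.prod_mono le_rfl nhdsWithin_le_nhds)
  have hf : Tendsto f (𝓝[Set.Icc u v] z) (𝓝 (f z)) := by
    rw [Metric.tendsto_nhds]
    intro ε hε
    have h2 := (Metric.tendsto_nhds.1 hF (ε / 2) (by positivity))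
    obtain ⟨pa, hpa, pb, hpb, hab⟩ := eventually_prod_iff.1 h2
    filter_upwards [hpb, self_mem_nhdsWithin] with w hw hws
    have : dist (f w) (f z) ≤ ε / 2 := by
      refine le_of_tendsto ((hpt w hws).dist tendsto_const_nhds) ?_
      filter_upwards [hpa] with n hn using (hab hn hw).le
    linarith
  rw [tendstoUniformlyOnFilter_iff_tendsto]
  have := (hf.comp (tendsto_snd (f := (atTop : Filter ℕ)))).prodMk_nhds hF
  exact this.mono_right (nhds_le_uniformity (f z))

lemma measurable_matEntries {m n : Type*} :
    Measurable (matEntries : Matrix m n ℝ → m × n → ℝ) :=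
  measurable_pi_lambda _ fun q =>
    (measurable_pi_apply q.2).comp (measurable_pi_apply (X := fun _ : m => n → ℝ) q.1)

section Model
variable {k : ℕ} {γ : ℝ} {p : ℕ → ℕ} {Ω : Type*} [MeasurableSpace Ω] {P : Measure Ω}
  {μ : Fin k → ℝ}

/-- The entries of `E₁₂` and `E₂₁` gathered in one vector. -/
def BlockModel.offDiag (M : BlockModel k γ p Ω P μ) (n : ℕ) (ω : Ω) :
    (Fin k × Fin (p n - k)) ⊕ (Fin (p n - k) × Fin k) → ℝ :=
  Sum.elim (matEntries (M.E12 n ω)) (matEntries (M.E21 n ω))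

lemma BlockModel.offDiag_gauss [IsProbabilityMeasure P] (M : BlockModel k γ p Ω P μ) (n : ℕ) :
    IIDGaussian P (M.offDiag n) 1 :=
  (M.E12gauss n).sum (M.E21gauss n)
    ((M.indep3 n).comp measurable_matEntries (measurable_matEntries.comp measurable_fst))

/-- The secular matrix in terms of `k × k` matrices that have limits. Here `Q₁`, `Q₂`, `Q₃`, `Q₃'`
are the compressions of the resolvent of `Λ` by the off-diagonal blocks. -/
lemma BlockModel.T_eq (M : BlockModel k γ p Ω P μ) (n : ℕ) (ω : Ω) (z : ℝ)
    (hz : ∀ a, M.lam n ω a < z) :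
    let s : ℝ := 1 / Real.sqrt n
    let e := s • M.E11 n ω
    let D := Matrix.diagonal (M.d n ω)
    let Q₁ := (s • M.E12 n ω) * Matrix.diagonal (fun a => 1 * (M.lam n ω a - z)⁻¹)
      * (s • (M.E12 n ω)ᵀ)
    let Q₂ := (s • (M.E21 n ω)ᵀ) * Matrix.diagonal (fun a => M.lam n ω a * (M.lam n ω a - z)⁻¹)
      * (s • M.E21 n ω)
    let Q₃ := (s • M.E12 n ω)
      * Matrix.diagonal (fun a => Real.sqrt (M.lam n ω a) * (M.lam n ω a - z)⁻¹)
      * (s • M.E21 n ω)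
    let Q₃' := (s • (M.E21 n ω)ᵀ)
      * Matrix.diagonal (fun a => Real.sqrt (M.lam n ω a) * (M.lam n ω a - z)⁻¹)
      * (s • (M.E12 n ω)ᵀ)
    (∀ a, 0 ≤ M.lam n ω a) → (1 + Q₁).det ≠ 0 →
    M.T n ω z = M.S11 n ω - z • 1
      - ((D + eᵀ) * Q₁ * (D + e) + (D + eᵀ) * Q₃ + Q₃' * (D + e) + Q₂
        - ((D + eᵀ) * Q₁ + Q₃') * (1 + Q₁)⁻¹ * (Q₁ * (D + e) + Q₃)) := by
  intro s e D Q₁ Q₂ Q₃ Q₃' h0 hdet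
  have hss : s * s = 1 / (n : ℝ) := by
    simp only [s]
    rw [div_mul_div_comm, one_mul, Real.mul_self_sqrt (Nat.cast_nonneg n)]
  set B : Matrix (Fin (p n - k)) (Fin (p n - k)) ℝ :=
    Matrix.diagonal fun a => M.lam n ω a - z with hB
  have hne : ∀ a, M.lam n ω a - z ≠ 0 := fun a => (sub_neg.2 (hz a)).ne
  have hBinv : B⁻¹ = Matrix.diagonal fun a => (M.lam n ω a - z)⁻¹ := by
    refine Matrix.inv_eq_right_inv ?_
    rw [hB, Matrix.diagonal_mul_diagonal, ← Matrix.diagonal_one]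
    congr 1
    ext a
    exact mul_inv_cancel₀ (hne a)
  have hBu : IsUnit B := by
    rw [Matrix.isUnit_iff_isUnit_det, hB, Matrix.det_diagonal]
    exact (Finset.prod_ne_zero_iff.2 fun a _ => hne a).isUnit
  set F := s • M.E12 n ω with hF
  set Λ : Matrix (Fin (p n - k)) (Fin (p n - k)) ℝ :=
    Matrix.diagonal fun a => Real.sqrt (M.lam n ω a) with hΛ
  have hFt : Fᵀ = s • (M.E12 n ω)ᵀ := Matrix.transpose_smul _ _
  have e1 : F * B⁻¹ * Fᵀ = Q₁ := by
    rw [hBinv, hFt]; simp only [Q₁, one_mul, hF]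
  have e3 : F * B⁻¹ * (Λ * (s • M.E21 n ω)) = Q₃ := by
    simp only [Q₃]
    rw [← Matrix.mul_assoc, Matrix.mul_assoc F, hBinv, hΛ, Matrix.diagonal_mul_diagonal]
    simp only [mul_comm, hF]
  have e3' : ((s • (M.E21 n ω)ᵀ) * Λ) * B⁻¹ * Fᵀ = Q₃' := by
    simp only [Q₃']
    rw [Matrix.mul_assoc (s • (M.E21 n ω)ᵀ), hBinv, hΛ, Matrix.diagonal_mul_diagonal, hFt]
  have e2 : ((s • (M.E21 n ω)ᵀ) * Λ) * B⁻¹ * (Λ * (s • M.E21 n ω)) = Q₂ := by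
    simp only [Q₂]
    rw [← Matrix.mul_assoc, Matrix.mul_assoc (s • (M.E21 n ω)ᵀ), hBinv, hΛ,
      Matrix.diagonal_mul_diagonal, Matrix.mul_assoc (s • (M.E21 n ω)ᵀ),
      Matrix.diagonal_mul_diagonal]
    congr 3
    ext a
    rw [mul_right_comm, Real.mul_self_sqrt (h0 a)]
  have hQ : IsUnit (1 + F * B⁻¹ * Fᵀ) := by
    rw [e1, Matrix.isUnit_iff_isUnit_det]
    exact hdet.isUnit
  have main := schur_expand B hBu F hQ (D + e) (D + eᵀ) (Λ * (s • M.E21 n ω))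
    ((s • (M.E21 n ω)ᵀ) * Λ)
  rw [e1, e3, e3', e2] at main
  have hS12 : M.S12 n ω = (D + eᵀ) * F + (s • (M.E21 n ω)ᵀ) * Λ := by
    simp only [BlockModel.S12, ← hss, D, e, hF, hΛ, Matrix.transpose_smul, Matrix.add_mul,
      Matrix.smul_mul, Matrix.mul_smul, smul_smul, smul_add]
    abel
  have hS21 : M.S21 n ω = Fᵀ * (D + e) + Λ * (s • M.E21 n ω) := by
    simp only [BlockModel.S21, ← hss, D, e, hFt, hΛ, Matrix.mul_add,
      Matrix.smul_mul, Matrix.mul_smul, smul_smul, smul_add]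
    abel
  have hS22 : M.S22 n ω - z • 1 = B + Fᵀ * F := by
    have : B = Matrix.diagonal (M.lam n ω) - z • 1 := by
      rw [hB, Matrix.smul_one_eq_diagonal, Matrix.diagonal_sub]
    rw [hFt, hF, this, BlockModel.S22, ← hss, Matrix.smul_mul, Matrix.mul_smul, smul_smul]
    abel
  rw [BlockModel.T, hS12, hS21, hS22, main]

end Model

/-- Each entry is dominated by a diagonal entry of the Gram matrix. -/
lemma tendsto_zero_of_gram {k : ℕ} {E : ℕ → Matrix (Fin k) (Fin k) ℝ}
    (h : Tendsto (fun n : ℕ => (1 / (n : ℝ)) • ((E n)ᵀ * E n)) atTop (𝓝 0)) :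
    Tendsto (fun n : ℕ => (1 / Real.sqrt n) • E n) atTop (𝓝 0) := by
  refine tendsto_pi_nhds.2 fun i => tendsto_pi_nhds.2 fun j => ?_
  have hj : Tendsto (fun n : ℕ => ((1 / (n : ℝ)) • ((E n)ᵀ * E n)) j j) atTop (𝓝 0) :=
    (tendsto_pi_nhds.1 (tendsto_pi_nhds.1 h j)) j
  have h2 := (Real.continuous_sqrt.tendsto 0).comp hj
  rw [Real.sqrt_zero] at h2
  refine squeeze_zero_norm (fun n => ?_) h2
  simp only [Function.comp_apply]
  refine Real.abs_le_sqrt ?_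
  simp only [Matrix.smul_apply, smul_eq_mul, Matrix.mul_apply, Matrix.transpose_apply]
  rw [mul_pow, div_pow, one_pow, Real.sq_sqrt (Nat.cast_nonneg n)]
  refine mul_le_mul_of_nonneg_left ?_ (by positivity)
  rw [sq]
  exact Finset.single_le_sum (f := fun a => E n a j * E n a j) (fun a _ => mul_self_nonneg _)
    (Finset.mem_univ i)

/-- The coordinates of the off-diagonal noise vector, indexed by the rows of `E₁₂` and the
columns of `E₂₁`. -/
def offIdx {k : ℕ} (q : ℕ) (s : Fin k ⊕ Fin k) (a : Fin q) : (Fin k × Fin q) ⊕ (Fin q × Fin k) :=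
  match s with
  | Sum.inl i => Sum.inl (i, a)
  | Sum.inr j => Sum.inr (a, j)

lemma offIdx_inj {k : ℕ} {q : ℕ} (i : Fin k ⊕ Fin k) (a : Fin q) (j : Fin k ⊕ Fin k) (b : Fin q)
    (h : offIdx q i a = offIdx q j b) : i = j ∧ a = b := by
  rcases i with i | i <;> rcases j with j | j <;> simp_all [offIdx]

set_option maxHeartbeats 1000000 in
/-- Joint convergence of the secular matrix as `n → ∞` and `z → z₀`, off a single null set. -/
lemma BlockModel.ae_tendsto_T {k : ℕ} {γ : ℝ} (hγ : 1 ≤ γ) {p : ℕ → ℕ} {Ω : Type*}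
    [MeasurableSpace Ω] {P : Measure Ω} [IsProbabilityMeasure P] {μ : Fin k → ℝ}
    (M : BlockModel k γ p Ω P μ) (hμ : ∀ i, 0 < μ i) :
    ∀ᵐ ω ∂P, ∀ z₀, bGamma γ < z₀ →
      Tendsto (fun x : ℕ × ℝ => M.T x.1 ω x.2) (atTop ×ˢ 𝓝 z₀) (𝓝 (T0lim γ μ z₀)) := by
  obtain ⟨hN, hQ, h31⟩ := tendsto_dims hγ k M.aspect M.pTop
  have hc : 0 ≤ γ⁻¹ := inv_nonneg.2 (by linarith)
  have hb : 0 ≤ bGamma γ := sq_nonneg _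
  have hspec : ∀ n ω, IsGramSpec n (M.W n ω) (M.lam n ω) := M.lamEig
  have hgram : ∀ᵐ ω ∂P, ∀ ζ : ℚ, bGamma γ < ζ → ∀ᶠ n : ℕ in atTop,
      GramLE n ζ (M.W n ω) := by
    refine ae_all_iff.2 fun ζ => ?_
    by_cases hζ : bGamma γ < ζ
    · filter_upwards [ae_gram_le M.W M.Wgauss hc hN hQ (by rwa [← bGamma_eq])] with ω hω _
      exact hω
    · exact Eventually.of_forall fun ω h => absurd h hζ
  have hoff := ae_block_sums (fun n => M.offDiag n) M.offDiag_gauss (r := fun n => p n - k)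
    (K := 2 * k) (by positivity) (fun n => by
      simp only [Fintype.card_sum, Fintype.card_prod, Fintype.card_fin]
      push_cast
      linarith) hQ (J := Fin k ⊕ Fin k)
    (fun n => offIdx (p n - k)) (fun n => offIdx_inj)
  have hk0 : Tendsto (fun n : ℕ => (k : ℝ) / n) atTop (𝓝 0) :=
    tendsto_const_div_atTop_nhds_zero_nat _
  have h11 := ae_block_sums (fun n ω => matEntries (M.E11 n ω)) M.E11gauss (r := fun _ => k)
    (K := k) (by positivity) (fun n => by simp) hk0 (J := Fin k) (fun n i a => (a, i)) (fun n i a j b h => ⟨(Prod.mk.inj h).2, (Prod.mk.inj h).1⟩)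
  have h31' := ae_block_sums (fun n ω => matEntries (M.E31 n ω)) M.E31gauss
    (r := fun n => n - p n)
    (K := k) (by positivity) (fun n => by simp [mul_comm]) h31 (J := Fin k)
    (fun n i a => (a, i)) (fun n i a j b h => ⟨(Prod.mk.inj h).2, (Prod.mk.inj h).1⟩)
  filter_upwards [M.dconv, hgram, hoff, h11, h31',
    ae_tendsto_trace M.W M.Wgauss hγ hN hQ M.lam hspec] with ω hd hG ho h1 h3 htr z₀ hz₀
  have hle : ∀ ζ, bGamma γ < ζ → ∀ᶠ n in atTop, ∀ a, M.lam n ω a ≤ ζ := by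
    intro ζ hζ
    obtain ⟨r, hr1, hr2⟩ := exists_rat_btwn hζ
    filter_upwards [hG r hr1, eventually_gt_atTop 0] with n a1 a2 a
    exact ((hspec n ω).le a2 a1 a).trans hr2.le
  have ha : ∀ n, 0 < n → Antitone (M.lam n ω) := fun n hn => (hspec n ω).antitone hn
  have h0 : ∀ n, 0 < n → ∀ a, 0 ≤ M.lam n ω a := fun n hn => (hspec n ω).nonneg hn
  have hlt : ∀ᶠ x : ℕ × ℝ in atTop ×ˢ 𝓝 z₀, 0 < x.1 ∧ ∀ a, M.lam x.1 ω a < x.2 := by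
    obtain ⟨ζ, hζ1, hζ2⟩ := exists_between hz₀
    have e1 := (hle ζ hζ1).and (eventually_gt_atTop 0)
    filter_upwards [e1.prod_mk (lt_mem_nhds hζ2)] with x ⟨⟨a1, a2⟩, a3⟩
    exact ⟨a2, fun a => (a1 a).trans_lt a3⟩
  set φ := phiLim γ z₀ with hφ
  have htr0 := htr z₀ hz₀
  have htr1 : Tendsto (fun x : ℕ × ℝ =>
      (∑ a, M.lam x.1 ω a * (x.2 - M.lam x.1 ω a)⁻¹) / x.1) (atTop ×ˢ 𝓝 z₀)
      (𝓝 (z₀ * φ - γ⁻¹)) := by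
    refine ((tendsto_snd.mul htr0).sub (hQ.comp tendsto_fst)).congr' ?_
    filter_upwards [hlt] with x ⟨_, hx⟩
    simp only [Function.comp_apply]
    rw [← mul_div_assoc, ← sub_div, Finset.mul_sum]
    congr 1
    rw [show ((p x.1 - k : ℕ) : ℝ) = ∑ _a : Fin (p x.1 - k), (1 : ℝ) by simp,
      ← Finset.sum_sub_distrib]
    refine Finset.sum_congr rfl fun a _ => ?_
    have := (sub_pos.2 (hx a)).ne'
    field_simp
    ring
  have hQ1 := tendsto_sandwich hb hz₀ ha h0 hle (A := fun n => M.E12 n ω)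
    (B := fun n => (M.E12 n ω)ᵀ) (τ := 1) (Rm := φ • 1) (g := fun _ => 1)
    (fun i j ε hε => by
      filter_upwards [ho (Sum.inl i) (Sum.inl j) ε hε] with n hn m hm
      have := hn m hm
      simpa [BlockModel.offDiag, offIdx, matEntries, Matrix.one_apply] using this)
    monotone_const (fun _ _ => zero_le_one) (fun i j => by
      have := htr0.const_mul ((1 : Matrix (Fin k) (Fin k) ℝ) i j)
      simpa [mul_comm φ] using this)
  have hQ2 := tendsto_sandwich hb hz₀ ha h0 hle (A := fun n => (M.E21 n ω)ᵀ)
    (B := fun n => M.E21 n ω) (τ := 1) (Rm := (z₀ * φ - γ⁻¹) • 1) (g := fun x => x)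
    (fun i j ε hε => by
      filter_upwards [ho (Sum.inr i) (Sum.inr j) ε hε] with n hn m hm
      have := hn m hm
      simpa [BlockModel.offDiag, offIdx, matEntries, Matrix.one_apply] using this)
    monotone_id (fun _ h => h) (fun i j => by
      have := htr1.const_mul ((1 : Matrix (Fin k) (Fin k) ℝ) i j)
      simpa [mul_comm (z₀ * φ - γ⁻¹)] using this)
  have hQ3 := tendsto_sandwich hb hz₀ ha h0 hle (A := fun n => M.E12 n ω)
    (B := fun n => M.E21 n ω) (τ := 0) (Rm := 0) (g := Real.sqrt)
    (fun i j ε hε => by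
      filter_upwards [ho (Sum.inl i) (Sum.inr j) ε hε] with n hn m hm
      have := hn m hm
      simpa [BlockModel.offDiag, offIdx, matEntries] using this)
    (fun _ _ h => Real.sqrt_le_sqrt h) (fun _ _ => Real.sqrt_nonneg _) (fun i j => by simp)
  have hQ3' := tendsto_sandwich hb hz₀ ha h0 hle (A := fun n => (M.E21 n ω)ᵀ)
    (B := fun n => (M.E12 n ω)ᵀ) (τ := 0) (Rm := 0) (g := Real.sqrt)
    (fun i j ε hε => by
      filter_upwards [ho (Sum.inr i) (Sum.inl j) ε hε] with n hn m hm
      have := hn m hm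
      simpa [BlockModel.offDiag, offIdx, matEntries] using this)
    (fun _ _ h => Real.sqrt_le_sqrt h) (fun _ _ => Real.sqrt_nonneg _) (fun i j => by simp)
  rw [neg_zero] at hQ3 hQ3'
  have hG11 := tendsto_gram (E := fun n => M.E11 n ω) h1 hk0
  have hG21 := tendsto_gram (E := fun n => M.E21 n ω) (fun i j ε hε => by
      filter_upwards [ho (Sum.inr i) (Sum.inr j) ε hε] with n hn m hm
      have := hn m hm
      simpa [BlockModel.offDiag, offIdx, matEntries] using this) hQ
  have hG31 := tendsto_gram (E := fun n => M.E31 n ω) h3 h31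
  rw [zero_smul] at hG11
  have he := tendsto_zero_of_gram hG11
  have het : Tendsto (fun n : ℕ => ((1 / Real.sqrt n) • M.E11 n ω)ᵀ) atTop (𝓝 0) := by
    have := ((continuous_id.matrix_transpose).tendsto
      (0 : Matrix (Fin k) (Fin k) ℝ)).comp he
    rwa [id, Matrix.transpose_zero] at this
  have hD : Tendsto (fun n => Matrix.diagonal (M.d n ω)) atTop
      (𝓝 (Matrix.diagonal fun i => Real.sqrt (μ i))) :=
    ((continuous_id.matrix_diagonal).tendsto _).comp (tendsto_pi_nhds.2 hd)
  have hD2 : Tendsto (fun n => Matrix.diagonal (fun i => M.d n ω i ^ 2)) atTop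
      (𝓝 (Matrix.diagonal μ)) := by
    refine ((continuous_id.matrix_diagonal).tendsto _).comp (tendsto_pi_nhds.2 fun i => ?_)
    have := (hd i).pow 2
    rwa [Real.sq_sqrt (hμ i).le] at this
  have hS11 : Tendsto (fun n => M.S11 n ω) atTop (𝓝 (Matrix.diagonal μ + 1)) := by
    have := (hD2.add ((hD.mul he).add (het.mul hD))).add ((hG11.add hG21).add hG31)
    rw [Matrix.mul_zero, Matrix.zero_mul, add_zero, add_zero, zero_add, ← add_smul,
      add_sub_cancel, one_smul] at this
    refine this.congr fun n => ?_
    simp only [BlockModel.S11, Matrix.mul_smul, Matrix.smul_mul, smul_add, Matrix.transpose_smul]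
  have hdet : (1 + -(φ • (1 : Matrix (Fin k) (Fin k) ℝ))).det ≠ 0 := by
    obtain ⟨-, h2, -, -, h4⟩ := phiLim_spec hγ hz₀
    have e : 1 + -(φ • (1 : Matrix (Fin k) (Fin k) ℝ)) = (1 - φ) • 1 := by
      rw [sub_smul, one_smul, sub_eq_add_neg]
    rw [e, Matrix.det_smul, Matrix.det_one, mul_one]
    exact pow_ne_zero _ (by linarith)
  have h1Q := hQ1.const_add 1
  have hDe := (hD.add he).comp (tendsto_fst (f := atTop) (g := 𝓝 z₀))
  have hDet := (hD.add het).comp (tendsto_fst (f := atTop) (g := 𝓝 z₀))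
  rw [add_zero] at hDe hDet
  have hz1 : Tendsto (fun x : ℕ × ℝ => x.2 • (1 : Matrix (Fin k) (Fin k) ℝ)) (atTop ×ˢ 𝓝 z₀)
      (𝓝 (z₀ • 1)) := tendsto_snd.smul_const _
  have hlim := ((hS11.comp (tendsto_fst (f := atTop) (g := 𝓝 z₀))).sub hz1).sub
    (((((hDet.mul hQ1).mul hDe).add (hDet.mul hQ3)).add (hQ3'.mul hDe)).add hQ2 |>.sub
      ((((hDet.mul hQ1).add hQ3').mul (tendsto_matrix_inv h1Q hdet)).mul
        ((hQ1.mul hDe).add hQ3)))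
  rw [limit_identity hγ hz₀ hμ] at hlim
  refine hlim.congr' ?_
  have hdet' := (((continuous_id.matrix_det).tendsto _).comp h1Q).eventually_ne hdet
  filter_upwards [hlt, hdet'] with x ⟨hx0, hx⟩ hxd
  exact (M.T_eq x.1 ω x.2 hx (h0 _ hx0) hxd).symm

/-- If `[u, v] ⊂ (b_γ, ∞)` is a closed interval, then `T_n(z)` converges
almost surely to `T₀(z) = (1 + γ⁻¹ m(z))⁻¹ D² + m(z)⁻¹ I_k`, uniformly in `z ∈ [u, v]`
(entrywise). -/
theorem secular_matrix_uniform_as_limit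
    {k : ℕ} (hk : 1 ≤ k) {γ : ℝ} (hγ : 1 ≤ γ)
    {p : ℕ → ℕ} {Ω : Type*} [MeasurableSpace Ω] {P : Measure Ω} [IsProbabilityMeasure P]
    {μ : Fin k → ℝ} (M : BlockModel k γ p Ω P μ)
    (hd : ∀ n ω, StrictAnti (M.d n ω))
    (hμanti : StrictAnti μ) (hμpos : ∀ i, 0 < μ i)
    (u v : ℝ) (hu : bGamma γ < u) (huv : u ≤ v) :
    ∀ᵐ ω ∂P, ∀ i j : Fin k,
      TendstoUniformlyOn (fun n z => M.T n ω z i j) (fun z => T0lim γ μ z i j)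
        atTop (Set.Icc u v) := by
  filter_upwards [M.ae_tendsto_T hγ hμpos] with ω hω i j
  refine uniform_of_joint fun z hz => ?_
  exact (tendsto_pi_nhds.1 (tendsto_pi_nhds.1 (hω z (hu.trans_le hz.1)) i)) j
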